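/- arXiv:0802.3737 — 2 statements merged into one kernel-verified Lean document; each statement's English description precedes it below -/
import Mathlib

section
/- Let I be a matroidal ideal of degree 2 in R = K[x_1, ..., x_n] with supp(I) = {x_1, ..., x_n}. Then ara I = q(I) + 1 = n − 1. -/
/-!
The generating supports of a degree two matroidal ideal with full support are the edges of a
complete multipartite graph on the variables: by exchange, being equal or not joined by an edge is
an equivalence relation (`edge_or_edge`, `exists_coloring`). Three facts are combined.

*The index.* A variable `x_i` lies in the `j`-th colon ideal exactly if some earlier support is
contained in `u_j ∪ {i}`. Hence at most the `n - 2` variables outside `u_j` occur, and all of them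
do for the last generator (`lqIndex_eq`).

*The upper bound.* Order the vertices part by part and give the edge from `i` to `j` (with the part
of `i` before that of `j`) the level `pos j - after i - 1`, where `pos j` is the position of `j`
and `after i` counts the vertices following `i` in its part. There are `n - 1` possible levels, and
the product of two edges of equal level is divisible by an edge of lower level, so by the
Schmitt–Vogel lemma the sums over the levels generate the ideal up to radical
(`exists_generators`). The same applies to every set `W` of vertices, with `#W - 1` elements.

*The lower bound.* Let `U` be one part and `W` its complement. The zero set of `I` is the union of
`V(X)` and `V(G)`, where `X` consists of the variables in `W` and `G` of those in `U` together with
the `#W - 1` elements above for `W`; so `#X, #G ≤ n - 1`, while `V(X) ∩ V(G)` is the origin.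
If `I` were the radical of an ideal generated by at most `n - 2` elements, then
Mayer–Vietoris would place `H^n` at the origin between `H^{n-1}` with support `V(I)` and `H^n` with
supports `V(X)` and `V(G)`, all of which vanish (`Cech.mayer_vietoris`). But the top local
cohomology of a polynomial ring at the origin is nonzero: the class of `1 / (x_1 ⋯ x_n)` survives
(`Cech.prod_pow_mem`, `not_van_variables`).

Local cohomology is computed by iterated cones of localization maps `A → A_g`
(`Cech.T`, `Cech.TL`), and instead of cohomology modules only the vanishing statements `Cech.Van`
are used. The Mayer–Vietoris argument is phrased through the triangle `Ker X A → TL X A → A`, whose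
first term is the Čech complex of the complement of `V(X)`.
-/

open MvPolynomial

/-- The square-free monomial `∏ i in S, X i`. -/
noncomputable def sqMon {n : ℕ} (K : Type*) [Field K] (S : Finset (Fin n)) :
    MvPolynomial (Fin n) K := ∏ i ∈ S, X i

/-- The basis-exchange property for a family of supports. -/
def ExchangeProp {n : ℕ} (B : Finset (Finset (Fin n))) : Prop :=
  ∀ u ∈ B, ∀ v ∈ B, ∀ i ∈ u, i ∉ v → ∃ j ∈ v, j ∉ u ∧ insert j (u.erase i) ∈ B

/-- `I` is a matroidal ideal of degree `d`, whose minimal monomial generators are the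
square-free monomials with supports in `B`. -/
def IsMatroidal {n : ℕ} (K : Type*) [Field K] (I : Ideal (MvPolynomial (Fin n) K))
    (B : Finset (Finset (Fin n))) (d : ℕ) : Prop :=
  B.Nonempty ∧ (∀ S ∈ B, S.card = d) ∧ ExchangeProp B ∧
    I = Ideal.span (sqMon K '' (B : Set (Finset (Fin n))))

/-- `supp(I) = {x_1, …, x_n}` for a matroidal ideal with generating supports `B`. -/
def FullSupport {n : ℕ} (B : Finset (Finset (Fin n))) : Prop :=
  ∀ i : Fin n, ∃ S ∈ B, i ∈ S

/-- The height of an ideal: the infimum of the heights of the primes containing it. -/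
noncomputable def idealHeight {A : Type*} [CommRing A] (I : Ideal A) : ℕ∞ :=
  ⨅ (p : PrimeSpectrum A) (_ : I ≤ p.asIdeal), Order.height p

/-- The `J`-depth of the ring `A`: the supremum of the lengths of regular sequences
contained in `J`. -/
noncomputable def ringDepth (A : Type*) [CommRing A] (J : Ideal A) : ℕ∞ :=
  ⨆ (rs : {l : List A // (∀ r ∈ l, r ∈ J) ∧ RingTheory.Sequence.IsRegular A l}),
    (rs.1.length : ℕ∞)

/-- A commutative ring is Cohen–Macaulay if at every maximal ideal the depth of the
localization equals its Krull dimension. -/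
def IsCohenMacaulayRing (A : Type*) [CommRing A] : Prop :=
  ∀ (p : Ideal A) (hp : p.IsMaximal),
    letI : p.IsPrime := hp.isPrime
    (ringDepth (Localization.AtPrime p)
        (IsLocalRing.maximalIdeal (Localization.AtPrime p)) : WithBot ℕ∞)
      = ringKrullDim (Localization.AtPrime p)

/-- The arithmetical rank of an ideal. -/
noncomputable def araIdeal {A : Type*} [CommRing A] (I : Ideal A) : ℕ :=
  sInf {m : ℕ | ∃ f : Fin m → A, (Ideal.span (Set.range f)).radical = I.radical}

/-- An ideal is unmixed if all of its associated primes have the same height. -/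
def IsUnmixed {A : Type*} [CommRing A] (I : Ideal A) : Prop :=
  ∀ p ∈ associatedPrimes A (A ⧸ I), ∀ q ∈ associatedPrimes A (A ⧸ I),
    idealHeight p = idealHeight q

/-- The square-free Veronese ideal of degree `d` in all the variables. -/
noncomputable def sqVeronese {n : ℕ} (K : Type*) [Field K] (d : ℕ) :
    Ideal (MvPolynomial (Fin n) K) :=
  Ideal.span (sqMon K '' {S : Finset (Fin n) | S.card = d})

/-- The ordering `u` of the generating supports, together with the variable sets `V`,
witnesses that the square-free monomial ideal generated by `sqMon K ∘ u` has linear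
quotients: each colon ideal `⟨u_0, …, u_{j-1}⟩ : u_j` is generated by the variables in
`V j`. -/
def LinearQuotientWitness {n s : ℕ} (K : Type*) [Field K]
    (u : Fin s → Finset (Fin n)) (V : Fin s → Finset (Fin n)) : Prop :=
  ∀ j : Fin s,
    (Ideal.span (sqMon K '' (u '' {k | k < j}))).colon (Ideal.span {sqMon K (u j)})
      = Ideal.span ((fun i => (X i : MvPolynomial (Fin n) K)) '' (V j : Set (Fin n)))

/-- The linear quotient index `q(I)` attached to a linear quotient witness:
the maximum, over `j ≥ 1`, of the number of variables generating the `j`-th colon ideal. -/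
def lqIndex {n s : ℕ} (V : Fin s → Finset (Fin n)) : ℕ :=
  (Finset.univ.filter fun j : Fin s => (j : ℕ) ≠ 0).sup fun j => (V j).card

open CategoryTheory in
/-- The module `M` has projective dimension at most `k`. -/
def HasProjDimLE {A : Type*} [CommRing A] (M : ModuleCat A) (k : ℕ) : Prop :=
  ∃ P : ProjectiveResolution M, ∀ i : ℕ, k < i → Limits.IsZero (P.complex.X i)

/-- The ideal generated by the variables `X i`, `i ∈ A`. -/
noncomputable def varIdeal {n : ℕ} (K : Type*) [Field K] (A : Finset (Fin n)) :
    Ideal (MvPolynomial (Fin n) K) :=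
  Ideal.span ((fun i => (X i : MvPolynomial (Fin n) K)) '' (A : Set (Fin n)))

/-! ### Localization of modules -/

universe v

namespace Cech

section Loc

variable {R : Type v} [CommRing R]

/-- The localization `M_g` of a module at the powers of `g`. -/
abbrev Loc (g : R) (M : Type v) [AddCommGroup M] [Module R M] : Type v :=
  LocalizedModule (Submonoid.powers g) M

variable {M N : Type v} [AddCommGroup M] [Module R M] [AddCommGroup N] [Module R N]

/-- The localization map `M → M_g`. -/
noncomputable def toLoc (g : R) (M : Type v) [AddCommGroup M] [Module R M] : M →ₗ[R] Loc g M :=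
  LocalizedModule.mkLinearMap _ M

/-- The map `M_g → N_g` induced by a linear map `M → N`. -/
noncomputable def locMap (g : R) (f : M →ₗ[R] N) : Loc g M →ₗ[R] Loc g N :=
  IsLocalizedModule.map (Submonoid.powers g) (LocalizedModule.mkLinearMap _ M)
    (LocalizedModule.mkLinearMap _ N) f

@[simp] lemma locMap_toLoc (g : R) (f : M →ₗ[R] N) (m : M) :
    locMap g f (toLoc g M m) = toLoc g N (f m) :=
  IsLocalizedModule.map_apply ..

lemma toLoc_eq_zero {g : R} {m : M} (h : toLoc g M m = 0) : ∃ k : ℕ, g ^ k • m = 0 := by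
  obtain ⟨⟨_, k, rfl⟩, hs⟩ := (IsLocalizedModule.eq_zero_iff (Submonoid.powers g)
    (LocalizedModule.mkLinearMap (Submonoid.powers g) M)).1 h
  exact ⟨k, hs⟩

lemma loc_cancel {g : R} (k : ℕ) {y z : Loc g M} (h : g ^ k • y = g ^ k • z) : y = z :=
  IsLocalizedModule.smul_injective (LocalizedModule.mkLinearMap (Submonoid.powers g) M)
    (⟨g ^ k, k, rfl⟩ : Submonoid.powers g) h

lemma loc_zero {g : R} (k : ℕ) {y : Loc g M} (h : g ^ k • y = 0) : y = 0 :=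
  loc_cancel k (by simpa using h)

lemma loc_div (g : R) (k : ℕ) (m : M) : ∃ y : Loc g M, g ^ k • y = toLoc g M m :=
  ⟨_, IsLocalizedModule.mk'_cancel' (LocalizedModule.mkLinearMap (Submonoid.powers g) M) m
    (⟨g ^ k, k, rfl⟩ : Submonoid.powers g)⟩

/-- The localization of a submodule: the fractions with numerator in `P`. -/
noncomputable def locSub (g : R) (P : Submodule R M) : Submodule R (Loc g M) where
  carrier := {y | ∃ m ∈ P, ∃ k : ℕ, g ^ k • y = toLoc g M m}
  zero_mem' := ⟨0, P.zero_mem, 0, by simp⟩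
  add_mem' := by
    rintro y z ⟨m, hm, k, hk⟩ ⟨m', hm', l, hl⟩
    refine ⟨g ^ l • m + g ^ k • m', P.add_mem (P.smul_mem _ hm) (P.smul_mem _ hm'), k + l, ?_⟩
    rw [map_add, map_smul, map_smul, ← hk, ← hl]
    module
  smul_mem' := by
    rintro r y ⟨m, hm, k, hk⟩
    exact ⟨r • m, P.smul_mem _ hm, k, by rw [map_smul, ← hk, smul_comm]⟩

lemma toLoc_mem {g : R} {P : Submodule R M} {m : M} (h : m ∈ P) : toLoc g M m ∈ locSub g P :=
  ⟨m, h, 0, by simp⟩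

lemma locSub_bot (g : R) : locSub g (⊥ : Submodule R M) = ⊥ := by
  rw [eq_bot_iff]
  rintro y ⟨m, hm, k, hk⟩
  rw [Submodule.mem_bot] at hm ⊢
  exact loc_zero k (by rw [hk, hm, map_zero])

end Loc

/-! ### Complexes and the local cohomology cone -/

/-- A cochain complex of `R`-modules, encoded as one module `M` with a square-zero
endomorphism `d` and, for every degree `i`, the submodule `P i` of elements of degree `i`.
The `P i` are not required to span `M`: only elements of the `P i` matter, so that passing to
a subcomplex only means shrinking the `P i`. -/
structure Cx (R : Type v) [CommRing R] where
  M : Type v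
  [ag : AddCommGroup M]
  [md : Module R M]
  d : M →ₗ[R] M
  P : ℤ → Submodule R M
  dd : ∀ x, d (d x) = 0
  dP : ∀ i x, x ∈ P i → d x ∈ P (i + 1)

attribute [instance] Cx.ag Cx.md

variable {R : Type v} [CommRing R]

/-- `Van h i A` says that the localization `H^i(A)_h` vanishes: every cocycle of degree `i`
becomes a coboundary after multiplication by a power of `h`. For `h = 1` this is `H^i(A) = 0`. -/
def Van (h : R) (i : ℤ) (A : Cx R) : Prop :=
  ∀ c ∈ A.P i, A.d c = 0 → ∃ k : ℕ, ∃ b ∈ A.P (i - 1), A.d b = h ^ k • c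

lemma Cx.dP' (A : Cx R) {i : ℤ} {x : A.M} (h : x ∈ A.P (i - 1)) : A.d x ∈ A.P i := by
  simpa using A.dP (i - 1) x h

lemma locMap_dd (g : R) (A : Cx R) (y : Loc g A.M) : locMap g A.d (locMap g A.d y) = 0 := by
  obtain ⟨⟨m, ⟨_, k, rfl⟩⟩, rfl⟩ := IsLocalizedModule.mk'_surjective (Submonoid.powers g)
    (LocalizedModule.mkLinearMap (Submonoid.powers g) A.M) y
  simp [locMap, A.dd]

lemma locMap_mem {g : R} {A : Cx R} {i : ℤ} {y : Loc g A.M} (h : y ∈ locSub g (A.P i)) :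
    locMap g A.d y ∈ locSub g (A.P (i + 1)) := by
  obtain ⟨m, hm, k, hk⟩ := h
  exact ⟨A.d m, A.dP i m hm, k, by rw [← map_smul, hk, locMap_toLoc]⟩

/-- The shifted cone of `A → A_g`, which computes the derived sections of `A` supported on
`g = 0`. -/
noncomputable def T (g : R) (A : Cx R) : Cx R where
  M := A.M × Loc g A.M
  d := (A.d ∘ₗ LinearMap.fst R _ _).prod
    (toLoc g A.M ∘ₗ LinearMap.fst R _ _ - locMap g A.d ∘ₗ LinearMap.snd R _ _)
  P i := (A.P i).prod (locSub g (A.P (i - 1)))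
  dd x := by
    ext
    · simp [A.dd]
    · simp [locMap_dd]
  dP i x h := by
    refine ⟨A.dP i _ h.1, ?_⟩
    have h2 := locMap_mem h.2
    rw [show i - 1 + 1 = i by ring] at h2
    have h1 : toLoc g A.M x.1 ∈ locSub g (A.P i) := toLoc_mem h.1
    simpa using Submodule.sub_mem _ h1 h2

lemma T_d_eq_zero {g : R} {A : Cx R} {c : A.M} {y : Loc g A.M}
    (h : (T g A).d (c, y) = 0) : A.d c = 0 ∧ toLoc g A.M c = locMap g A.d y :=
  ⟨congrArg Prod.fst h, sub_eq_zero.1 (congrArg Prod.snd h)⟩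

lemma T_ext {g : R} {A : Cx R} {c c' : A.M} {y y' : Loc g A.M} (h1 : c = c') (h2 : y = y') :
    ((c, y) : (T g A).M) = (c', y') := by
  rw [h1, h2]

/-- The complex computing local cohomology of `A` supported on the common zeros of `L`. -/
noncomputable def TL : List R → Cx R → Cx R
  | [], A => A
  | g :: L, A => T g (TL L A)

lemma TL_append (L L' : List R) (A : Cx R) : TL (L ++ L') A = TL L (TL L' A) := by
  induction L with
  | nil => rfl
  | cons g L ih => simp [TL, ih]

lemma Van.mul {h : R} {i : ℤ} {A : Cx R} (H : Van h i A) (g : R) : Van (g * h) i A := by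
  intro c hc dc
  obtain ⟨k, b, hb, e⟩ := H c hc dc
  exact ⟨k, g ^ k • b, Submodule.smul_mem _ _ hb, by rw [map_smul, e, mul_pow, mul_smul]⟩

lemma Van.of_one {i : ℤ} {A : Cx R} (H : Van (1 : R) i A) (g : R) : Van g i A := by
  simpa using H.mul g

/-- The diagram chase behind the long exact sequence of the cone `T g A`, for cocycles whose
`A`-component lies in a given submodule `Q`. -/
lemma fib_step {g h : R} {A : Cx R} {i : ℤ} {Q Q' : Submodule R A.M}
    (hQ' : Q' ≤ A.P (i - 1))
    (hQ : ∀ c ∈ Q, A.d c = 0 → ∃ k : ℕ, ∃ b ∈ Q', A.d b = h ^ k • c)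
    (hA : Van (g * h) (i - 1) A) :
    ∀ c ∈ Q, ∀ y ∈ locSub g (A.P (i - 1)), (T g A).d (c, y) = 0 →
      ∃ k : ℕ, ∃ b ∈ Q', ∃ w ∈ locSub g (A.P (i - 1 - 1)),
        (T g A).d (b, w) = h ^ k • ((c, y) : A.M × Loc g A.M) := by
  intro c hc y hy h0
  obtain ⟨dc, dy⟩ := T_d_eq_zero h0
  obtain ⟨a, b, hb, eb⟩ := hQ c hc dc
  have hu : h ^ a • y - toLoc g A.M b ∈ locSub g (A.P (i - 1)) :=
    Submodule.sub_mem _ (Submodule.smul_mem _ _ hy) (toLoc_mem (hQ' hb))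
  obtain ⟨m, hm, k, hk⟩ := hu
  set u := h ^ a • y - toLoc g A.M b with hudef
  have du : locMap g A.d u = 0 := by
    rw [hudef, map_sub, map_smul, ← dy, locMap_toLoc, eb, map_smul, sub_self]
  obtain ⟨e, he⟩ := toLoc_eq_zero (g := g) (m := A.d m) (by
    rw [← locMap_toLoc, ← hk, map_smul, du, smul_zero])
  obtain ⟨f, b', hb', eb'⟩ := hA (g ^ e • m) (Submodule.smul_mem _ _ hm) (by rw [map_smul, he])
  obtain ⟨w, hw⟩ := loc_div g (k + e + f) b'
  have dw : locMap g A.d w = h ^ f • u := by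
    apply loc_cancel (k + e + f)
    rw [← map_smul, hw, locMap_toLoc, eb', map_smul, map_smul, ← hk]
    simp only [smul_smul]
    congr 1
    ring
  refine ⟨a + f, h ^ f • b, Submodule.smul_mem _ _ hb, -w,
    Submodule.neg_mem _ ⟨b', hb', _, hw⟩, ?_⟩
  refine T_ext ?_ ?_
  · change A.d (h ^ f • b) = h ^ (a + f) • c
    rw [map_smul, eb, smul_smul]
    congr 1
    ring
  · change toLoc g A.M (h ^ f • b) - locMap g A.d (-w) = h ^ (a + f) • y
    rw [map_smul, map_neg, dw, hudef]
    module

lemma Van_T {g h : R} {A : Cx R} {i : ℤ} (h1 : Van h i A) (h2 : Van (g * h) (i - 1) A) :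
    Van h i (T g A) := by
  rintro ⟨c, y⟩ ⟨hc, hy⟩ h0
  obtain ⟨k, b, hb, w, hw, e⟩ := fib_step le_rfl h1 h2 c hc y hy h0
  exact ⟨k, (b, w), ⟨hb, hw⟩, e⟩

/-- The cohomology of `T g A` is `g`-power torsion. -/
lemma Van_T_self (g : R) (A : Cx R) (i : ℤ) : Van g i (T g A) := by
  rintro ⟨c, y⟩ ⟨hc, m, hm, k, hk⟩ h0
  obtain ⟨dc, dy⟩ := T_d_eq_zero h0
  obtain ⟨e, he⟩ := toLoc_eq_zero (g := g) (m := A.d m - g ^ k • c) (by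
    rw [map_sub, map_smul, ← locMap_toLoc, dy, ← hk, map_smul, sub_self])
  rw [smul_sub, sub_eq_zero] at he
  refine ⟨e + k, (g ^ e • m, 0), ⟨Submodule.smul_mem _ _ hm, Submodule.zero_mem _⟩, ?_⟩
  refine T_ext ?_ ?_
  · change A.d (g ^ e • m) = g ^ (e + k) • c
    rw [map_smul, he, smul_smul, pow_add]
  · change toLoc g A.M (g ^ e • m) - locMap g A.d 0 = g ^ (e + k) • y
    rw [map_zero, sub_zero, map_smul, ← hk, smul_smul, pow_add]

lemma Van_TL {h : R} {A : Cx R} (H : ∀ i, Van h i A) (L : List R) : ∀ i, Van h i (TL L A) := by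
  induction L with
  | nil => exact H
  | cons g L ih => exact fun i => Van_T (ih i) ((ih (i - 1)).mul g)

lemma Van_TL_mem {L : List R} {g : R} (hg : g ∈ L) (A : Cx R) : ∀ i, Van g i (TL L A) := by
  induction L with
  | nil => simp at hg
  | cons g' L ih =>
    rcases List.mem_cons.1 hg with rfl | hg
    · exact fun i => Van_T_self _ _ i
    · exact fun i => Van_T (ih hg i) ((ih hg (i - 1)).mul g')

/-- The multipliers turning a fixed cocycle into a coboundary form an ideal, so the set of `h`
with `Van h i A` for a complex is stable under passing to the radical ideal. -/
lemma Van.radical {S : Set R} {A : Cx R} {i : ℤ} (H : ∀ g ∈ S, Van g i A) {h : R}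
    (hh : h ∈ (Ideal.span S).radical) : Van h i A := by
  intro c hc dc
  let J : Ideal R :=
    { carrier := {r | ∃ b ∈ A.P (i - 1), A.d b = r • c}
      zero_mem' := ⟨0, Submodule.zero_mem _, by simp⟩
      add_mem' := by
        rintro r s ⟨b, hb, e⟩ ⟨b', hb', e'⟩
        exact ⟨b + b', Submodule.add_mem _ hb hb', by rw [map_add, e, e', add_smul]⟩
      smul_mem' := by
        rintro r s ⟨b, hb, e⟩
        exact ⟨r • b, Submodule.smul_mem _ _ hb, by rw [map_smul, e, smul_smul, smul_eq_mul]⟩ }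
  have hJ : Ideal.span S ≤ J.radical := by
    rw [Ideal.span_le]
    intro g hg
    obtain ⟨k, b, hb, e⟩ := H g hg c hc dc
    exact ⟨k, b, hb, e⟩
  obtain ⟨k, b, hb, e⟩ := (Ideal.radical_le_radical_iff.2 hJ) hh
  exact ⟨k, b, hb, e⟩

lemma Van_TL_radical {L : List R} {h : R} (hh : h ∈ (Ideal.span {g | g ∈ L}).radical)
    (A : Cx R) (i : ℤ) : Van h i (TL L A) :=
  Van.radical (fun _ hg => Van_TL_mem hg A i) hh

/-- Taking sections with support in `L` does not change the cohomology of a complex whose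
cohomology is already supported there. -/
lemma Van_TL_of_torsion {L : List R} {A : Cx R} (H : ∀ g ∈ L, ∀ i, Van g i A) {i : ℤ}
    (h : Van (1 : R) i A) : Van (1 : R) i (TL L A) := by
  induction L with
  | nil => exact h
  | cons g L ih =>
    refine Van_T (ih fun g hg => H g (List.mem_cons_of_mem _ hg)) ?_
    rw [mul_one]
    exact Van_TL (H g List.mem_cons_self) L (i - 1)

/-! ### Short exact sequences -/

/-- A sequence `A → B → C` of complexes that is short exact in every degree. -/
structure SES (A B C : Cx R) (α : A.M →ₗ[R] B.M) (β : B.M →ₗ[R] C.M) : Prop where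
  αd : ∀ a, α (A.d a) = B.d (α a)
  βd : ∀ b, β (B.d b) = C.d (β b)
  αP : ∀ i, ∀ a ∈ A.P i, α a ∈ B.P i
  βP : ∀ i, ∀ b ∈ B.P i, β b ∈ C.P i
  inj : ∀ i, ∀ a ∈ A.P i, α a = 0 → a = 0
  zero : ∀ i, ∀ a ∈ A.P i, β (α a) = 0
  ex : ∀ i, ∀ b ∈ B.P i, β b = 0 → ∃ a ∈ A.P i, α a = b
  surj : ∀ i, ∀ c ∈ C.P i, ∃ b ∈ B.P i, β b = c

section SES

variable {A B C : Cx R} {α : A.M →ₗ[R] B.M} {β : B.M →ₗ[R] C.M}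

lemma SES.van_mid (s : SES A B C α β) {i : ℤ} (hA : Van (1 : R) i A) (hC : Van (1 : R) i C) :
    Van (1 : R) i B := by
  simp only [Van, one_pow, one_smul, exists_const] at *
  intro b hb db
  obtain ⟨c, hc, ec⟩ := hC (β b) (s.βP _ _ hb) (by rw [← s.βd, db, map_zero])
  obtain ⟨b', hb', rfl⟩ := s.surj _ c hc
  obtain ⟨a, ha, ea⟩ := s.ex i (b - B.d b') (Submodule.sub_mem _ hb (B.dP' hb'))
    (by rw [map_sub, s.βd, ec, sub_self])
  obtain ⟨a', ha', ea'⟩ := hA a ha (s.inj (i + 1) _ (A.dP _ _ ha)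
    (by rw [s.αd, ea, map_sub, db, B.dd, sub_self]))
  refine ⟨b' + α a', Submodule.add_mem _ hb' (s.αP _ _ ha'), ?_⟩
  rw [map_add, ← s.αd, ea', ea]
  abel

lemma SES.van_left (s : SES A B C α β) {i : ℤ} (hB : Van (1 : R) i B)
    (hC : Van (1 : R) (i - 1) C) : Van (1 : R) i A := by
  simp only [Van, one_pow, one_smul, exists_const] at *
  intro a ha da
  obtain ⟨b, hb, eb⟩ := hB (α a) (s.αP _ _ ha) (by rw [← s.αd, da, map_zero])
  obtain ⟨c, hc, ec⟩ := hC (β b) (s.βP _ _ hb) (by rw [← s.βd, eb, s.zero i a ha])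
  obtain ⟨b', hb', rfl⟩ := s.surj _ c hc
  obtain ⟨a', ha', ea'⟩ := s.ex (i - 1) (b - B.d b') (Submodule.sub_mem _ hb (B.dP' hb'))
    (by rw [map_sub, s.βd, ec, sub_self])
  refine ⟨a', ha', sub_eq_zero.1 (s.inj i _ (Submodule.sub_mem _ (A.dP' ha') ha) ?_)⟩
  rw [map_sub, s.αd, ea', map_sub, B.dd, eb, sub_zero, sub_self]

lemma SES.van_right (s : SES A B C α β) {i : ℤ} (hB : Van (1 : R) i B)
    (hA : Van (1 : R) (i + 1) A) : Van (1 : R) i C := by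
  simp only [Van, one_pow, one_smul, exists_const, add_sub_cancel_right] at *
  intro c hc dc
  obtain ⟨b, hb, rfl⟩ := s.surj _ c hc
  obtain ⟨a, ha, ea⟩ := s.ex (i + 1) (B.d b) (B.dP _ _ hb) (by rw [s.βd, dc])
  obtain ⟨a', ha', ea'⟩ := hA a ha (s.inj (i + 1 + 1) _ (A.dP _ _ ha)
    (by rw [s.αd, ea, B.dd]))
  obtain ⟨b', hb', e⟩ := hB (b - α a') (Submodule.sub_mem _ hb (s.αP _ _ ha'))
    (by rw [map_sub, ← s.αd, ea', ea, sub_self])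
  exact ⟨β b', s.βP _ _ hb', by rw [← s.βd, e, map_sub, s.zero i a' ha', sub_zero]⟩

lemma locMap_comm (g : R) {f : A.M →ₗ[R] B.M} (hf : ∀ a, f (A.d a) = B.d (f a))
    (y : Loc g A.M) : locMap g f (locMap g A.d y) = locMap g B.d (locMap g f y) := by
  obtain ⟨⟨m, ⟨_, k, rfl⟩⟩, rfl⟩ := IsLocalizedModule.mk'_surjective (Submonoid.powers g)
    (LocalizedModule.mkLinearMap (Submonoid.powers g) A.M) y
  simp [locMap, hf]

/-- The map of cones induced by a map of complexes. -/
noncomputable def Tmap (g : R) (α : A.M →ₗ[R] B.M) : (T g A).M →ₗ[R] (T g B).M :=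
  LinearMap.prodMap α (locMap g α)

lemma Tmap_d (g : R) (h : ∀ a, α (A.d a) = B.d (α a)) (x : (T g A).M) :
    Tmap g α ((T g A).d x) = (T g B).d (Tmap g α x) := by
  obtain ⟨a, y⟩ := x
  refine T_ext (h a) ?_
  change locMap g α (toLoc g _ a - locMap g A.d y) = toLoc g _ (α a) - locMap g B.d (locMap g α y)
  rw [map_sub, locMap_toLoc, locMap_comm g h]

lemma Tmap_mem {g : R} {i : ℤ} (h : ∀ i, ∀ a ∈ A.P i, α a ∈ B.P i) {x : (T g A).M}
    (hx : x ∈ (T g A).P i) : Tmap g α x ∈ (T g B).P i := by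
  obtain ⟨a, y⟩ := x
  obtain ⟨ha, m, hm, k, hk⟩ := hx
  refine ⟨h i a ha, α m, h _ m hm, k, ?_⟩
  change g ^ k • locMap g α y = _
  rw [← map_smul, hk, locMap_toLoc]

lemma SES.T (s : SES A B C α β) (g : R) :
    SES (T g A) (T g B) (T g C) (Tmap g α) (Tmap g β) where
  αd := Tmap_d g s.αd
  βd := Tmap_d g s.βd
  αP _ _ := Tmap_mem s.αP
  βP _ _ := Tmap_mem s.βP
  inj := by
    rintro i ⟨a, y⟩ ⟨ha, m, hm, k, hk⟩ h
    have h1 : α a = 0 := congrArg Prod.fst h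
    have h2 : locMap g α y = 0 := congrArg Prod.snd h
    obtain ⟨e, he⟩ := toLoc_eq_zero (g := g) (m := α m) (by
      rw [← locMap_toLoc, ← hk, map_smul, h2, smul_zero])
    have := s.inj _ (g ^ e • m) (Submodule.smul_mem _ _ hm) (by rw [map_smul, he])
    refine T_ext (s.inj i a ha h1) (loc_zero (e + k) ?_)
    rw [pow_add, mul_smul, hk, ← map_smul, this, map_zero]
  zero := by
    rintro i ⟨a, y⟩ ⟨ha, m, hm, k, hk⟩
    refine T_ext (s.zero i a ha) (loc_zero k ?_)
    change g ^ k • y = _ at hk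
    change g ^ k • locMap g β (locMap g α y) = 0
    rw [← map_smul, ← map_smul, hk, locMap_toLoc, locMap_toLoc, s.zero _ m hm, map_zero]
  ex := by
    rintro i ⟨b, y⟩ ⟨hb, m, hm, k, hk⟩ h
    have h1 : β b = 0 := congrArg Prod.fst h
    have h2 : locMap g β y = 0 := congrArg Prod.snd h
    simp only at hk
    obtain ⟨e, he⟩ := toLoc_eq_zero (g := g) (m := β m) (by
      rw [← locMap_toLoc, ← hk, map_smul, h2, smul_zero])
    obtain ⟨a, ha, rfl⟩ := s.ex i b hb h1
    obtain ⟨a', ha', ea'⟩ := s.ex _ (g ^ e • m) (Submodule.smul_mem _ _ hm) (by rw [map_smul, he])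
    obtain ⟨y', hy'⟩ := loc_div g (e + k) a'
    refine ⟨(a, y'), ⟨ha, a', ha', _, hy'⟩, T_ext rfl (loc_cancel (e + k) ?_)⟩
    change g ^ (e + k) • locMap g α y' = g ^ (e + k) • y
    rw [← map_smul, hy', locMap_toLoc, ea', map_smul, ← hk, smul_smul, pow_add]
  surj := by
    rintro i ⟨c, y⟩ ⟨hc, m, hm, k, hk⟩
    obtain ⟨b, hb, rfl⟩ := s.surj i c hc
    obtain ⟨b', hb', rfl⟩ := s.surj _ m hm
    obtain ⟨y', hy'⟩ := loc_div g k b'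
    refine ⟨(b, y'), ⟨hb, b', hb', _, hy'⟩, T_ext rfl (loc_cancel k ?_)⟩
    simp only at hk
    change g ^ k • locMap g β y' = g ^ k • y
    rw [← map_smul, hy', locMap_toLoc, hk]

lemma SES.TL (s : SES A B C α β) (L : List R) :
    ∃ α' β', SES (TL L A) (TL L B) (TL L C) α' β' := by
  induction L with
  | nil => exact ⟨_, _, s⟩
  | cons g L ih =>
    obtain ⟨α', β', s'⟩ := ih
    exact ⟨_, _, s'.T g⟩

end SES

/-- The projection `TL L A → A`. -/
noncomputable def proj : (L : List R) → (A : Cx R) → (TL L A).M →ₗ[R] A.M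
  | [], _ => LinearMap.id
  | g :: L, A => proj L A ∘ₗ LinearMap.fst R (TL L A).M (Loc g (TL L A).M)

lemma proj_d (L : List R) (A : Cx R) (t : (TL L A).M) :
    proj L A ((TL L A).d t) = A.d (proj L A t) := by
  induction L with
  | nil => rfl
  | cons g L ih => exact ih t.1

lemma proj_mem (L : List R) (A : Cx R) (i : ℤ) {t : (TL L A).M} (ht : t ∈ (TL L A).P i) :
    proj L A t ∈ A.P i := by
  induction L with
  | nil => exact ht
  | cons g L ih => exact ih ht.1

lemma proj_surj (L : List R) (A : Cx R) (i : ℤ) {c : A.M} (hc : c ∈ A.P i) :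
    ∃ t ∈ (TL L A).P i, proj L A t = c := by
  induction L with
  | nil => exact ⟨c, hc, rfl⟩
  | cons g L ih =>
    obtain ⟨t, ht, e⟩ := ih
    exact ⟨(t, 0), ⟨ht, Submodule.zero_mem _⟩, e⟩

/-- The kernel of `TL L A → A`: up to a shift, the Čech complex of `A` on the union of the open
sets `g ≠ 0` for `g ∈ L`. -/
noncomputable def Ker (L : List R) (A : Cx R) : Cx R where
  M := (TL L A).M
  d := (TL L A).d
  P i := (TL L A).P i ⊓ LinearMap.ker (proj L A)
  dd := (TL L A).dd
  dP i x h := ⟨(TL L A).dP i x h.1, by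
    change proj L A ((TL L A).d x) = 0
    rw [proj_d, show proj L A x = 0 from h.2, map_zero]⟩

lemma Ker_ses (L : List R) (A : Cx R) : SES (Ker L A) (TL L A) A LinearMap.id (proj L A) where
  αd _ := rfl
  βd := proj_d L A
  αP _ _ h := h.1
  βP i _ h := proj_mem L A i h
  inj _ _ _ h := h
  zero _ _ h := h.2
  ex _ b hb h := ⟨b, ⟨hb, h⟩, rfl⟩
  surj i _ h := proj_surj L A i h

/-- The Čech complex of `A` on the open sets `x ≠ 0`, `x ∈ L`, has `h`-torsion cohomology as
soon as every localization `A_x` has. -/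
lemma Van_Ker {L : List R} {A : Cx R} {h : R} (H : ∀ x ∈ L, ∀ i, Van (x * h) i A) :
    ∀ i, Van h i (Ker L A) := by
  induction L with
  | nil =>
    rintro i c ⟨-, hc⟩ -
    have : c = 0 := hc
    exact ⟨0, 0, Submodule.zero_mem _, by rw [this, map_zero, smul_zero]⟩
  | cons g L ih =>
    rintro i ⟨c, y⟩ ⟨⟨hc, hy⟩, hk⟩ h0
    obtain ⟨k, b, hb, w, hw, e⟩ := fib_step (g := g) (A := TL L A)
      (Q' := (TL L A).P (i - 1) ⊓ LinearMap.ker (proj L A)) inf_le_left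
      (ih (fun x hx => H x (List.mem_cons_of_mem _ hx)) i)
      (Van_TL (H g List.mem_cons_self) L (i - 1)) c ⟨hc, hk⟩ y hy h0
    exact ⟨k, (b, w), ⟨⟨hb.1, hw⟩, hb.2⟩, e⟩

/-! ### Independence of the generators -/

/-- `h` acts bijectively on the homogeneous elements of `A`. -/
def IsLoc (h : R) (A : Cx R) : Prop :=
  ∀ i, (∀ x ∈ A.P i, h • x = 0 → x = 0) ∧ ∀ x ∈ A.P i, ∃ y ∈ A.P i, h • y = x

lemma isLoc_locSub {g h : R} {M : Type v} [AddCommGroup M] [Module R M] {P : Submodule R M}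
    (h1 : ∀ x ∈ P, h • x = 0 → x = 0) (h2 : ∀ x ∈ P, ∃ y ∈ P, h • y = x) :
    (∀ x ∈ locSub g P, h • x = 0 → x = 0) ∧ ∀ x ∈ locSub g P, ∃ y ∈ locSub g P, h • y = x := by
  constructor
  · rintro y ⟨m, hm, k, hk⟩ h0
    obtain ⟨e, he⟩ := toLoc_eq_zero (g := g) (m := h • m) (by
      rw [map_smul, ← hk, smul_comm, h0, smul_zero])
    have := h1 (g ^ e • m) (P.smul_mem _ hm) (by rw [smul_comm, he])
    exact loc_zero (e + k) (by rw [pow_add, mul_smul, hk, ← map_smul, this, map_zero])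
  · rintro y ⟨m, hm, k, hk⟩
    obtain ⟨m', hm', rfl⟩ := h2 m hm
    obtain ⟨y', hy'⟩ := loc_div g k m'
    exact ⟨y', ⟨m', hm', k, hy'⟩, loc_cancel k (by rw [smul_comm, hy', hk, map_smul])⟩

lemma IsLoc.T {h : R} {A : Cx R} (H : IsLoc h A) (g : R) : IsLoc h (T g A) := by
  intro i
  obtain ⟨a1, a2⟩ := H i
  obtain ⟨b1, b2⟩ := isLoc_locSub (g := g) (H (i - 1)).1 (H (i - 1)).2
  constructor
  · rintro ⟨c, y⟩ ⟨hc, hy⟩ h0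
    obtain ⟨e1, e2⟩ := Prod.mk_eq_zero.1 h0
    exact Prod.mk_eq_zero.2 ⟨a1 c hc e1, b1 y hy e2⟩
  · rintro ⟨c, y⟩ ⟨hc, hy⟩
    obtain ⟨c', hc', rfl⟩ := a2 c hc
    obtain ⟨y', hy', e⟩ := b2 y hy
    exact ⟨(c', y'), ⟨hc', hy'⟩, Prod.ext rfl e⟩

lemma IsLoc.TL {h : R} {A : Cx R} (H : IsLoc h A) (L : List R) : IsLoc h (TL L A) := by
  induction L with
  | nil => exact H
  | cons g L ih => exact ih.T g

lemma IsLoc.eq_zero_of_pow {h : R} {A : Cx R} (H : IsLoc h A) {i : ℤ} (k : ℕ) :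
    ∀ x ∈ A.P i, h ^ k • x = 0 → x = 0 := by
  induction k with
  | zero => intro x _ h; simpa using h
  | succ k ih =>
    intro x hx e
    refine ih x hx ((H i).1 _ (Submodule.smul_mem _ _ hx) ?_)
    rw [smul_smul, ← pow_succ', e]

lemma IsLoc.pow_div {h : R} {A : Cx R} (H : IsLoc h A) {i : ℤ} (k : ℕ) :
    ∀ x ∈ A.P i, ∃ y ∈ A.P i, h ^ k • y = x := by
  induction k with
  | zero => intro x hx; exact ⟨x, hx, by simp⟩
  | succ k ih =>
    intro x hx
    obtain ⟨y, hy, rfl⟩ := ih x hx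
    obtain ⟨z, hz, rfl⟩ := (H i).2 y hy
    exact ⟨z, hz, by rw [pow_succ, mul_smul]⟩

/-- Torsion cohomology of a complex on which `h` is invertible vanishes. -/
lemma IsLoc.van {h : R} {A : Cx R} (H : IsLoc h A) {i : ℤ} (hV : Van h i A) :
    Van (1 : R) i A := by
  intro c hc dc
  obtain ⟨k, b, hb, e⟩ := hV c hc dc
  obtain ⟨b', hb', rfl⟩ := H.pow_div k b hb
  refine ⟨0, b', hb', ?_⟩
  rw [pow_zero, one_smul, ← sub_eq_zero]
  refine H.eq_zero_of_pow k _ (Submodule.sub_mem _ (A.dP' hb') hc) ?_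
  rw [smul_sub, ← e, map_smul, sub_self]

lemma isLoc_Ker (h : R) (A : Cx R) : IsLoc h (Ker [h] A) := by
  intro i
  constructor
  · rintro ⟨c, y⟩ ⟨-, hc⟩ h0
    obtain ⟨-, e2⟩ := Prod.mk_eq_zero.1 h0
    exact Prod.mk_eq_zero.2 ⟨hc, loc_zero 1 (by simpa using e2)⟩
  · rintro ⟨c, y⟩ ⟨⟨-, m, hm, k, hk⟩, hc⟩
    have hc : c = 0 := hc
    subst hc
    obtain ⟨y', hy'⟩ := loc_div h (k + 1) m
    refine ⟨(0, y'), ⟨⟨Submodule.zero_mem _, m, hm, _, hy'⟩, rfl⟩, Prod.ext (smul_zero _) ?_⟩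
    apply loc_cancel k
    simp only at hk ⊢
    rw [hk, ← hy', pow_succ, mul_smul]
    rfl

/-- Restricting the inner support to `h = 0` is harmless when `h` vanishes on the support of
`L`. -/
lemma Van_inner {L : List R} {h : R} (hh : h ∈ (Ideal.span {g | g ∈ L}).radical) (A : Cx R)
    (i : ℤ) : Van (1 : R) i (TL L (T h A)) ↔ Van (1 : R) i (TL L A) := by
  obtain ⟨α, β, s⟩ := (Ker_ses [h] A).TL L
  have hK : ∀ j, Van (1 : R) j (TL L (Ker [h] A)) := fun j =>
    ((isLoc_Ker h A).TL L).van (Van_TL_radical hh _ j)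
  exact ⟨fun H => s.van_right H (hK _), fun H => s.van_mid (hK i) H⟩

lemma Van_inner_list {L F : List R} (hF : ∀ h ∈ F, h ∈ (Ideal.span {g | g ∈ L}).radical)
    (A : Cx R) (i : ℤ) : Van (1 : R) i (TL L (TL F A)) ↔ Van (1 : R) i (TL L A) := by
  induction F with
  | nil => rfl
  | cons h F ih =>
    exact (Van_inner (hF h List.mem_cons_self) _ i).trans
      (ih fun h hh => hF h (List.mem_cons_of_mem _ hh))

/-! ### Local cohomology of the ring -/

/-- The ring `R`, as a complex concentrated in degree `0`. -/
noncomputable def unit (R : Type v) [CommRing R] : Cx R where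
  M := R
  d := 0
  P i := if i = 0 then ⊤ else ⊥
  dd _ := rfl
  dP _ _ _ := Submodule.zero_mem _

lemma TL_P_bot (L : List R) {i : ℤ} (hi : (L.length : ℤ) < i) : (TL L (unit R)).P i = ⊥ := by
  induction L generalizing i with
  | nil =>
    have : i ≠ 0 := by simp at hi; omega
    exact if_neg this
  | cons g L ih =>
    push_cast [List.length_cons] at hi
    change Submodule.prod ((TL L (unit R)).P i) (locSub g ((TL L (unit R)).P (i - 1))) = ⊥
    rw [ih (by omega), ih (by omega), locSub_bot, Submodule.prod_bot]

lemma Van_len (L : List R) {i : ℤ} (hi : (L.length : ℤ) < i) (h : R) :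
    Van h i (TL L (unit R)) := by
  intro c hc _
  rw [TL_P_bot L hi, Submodule.mem_bot] at hc
  exact ⟨0, 0, Submodule.zero_mem _, by simp [hc]⟩

/-- If `V(F)` is the union of `V(X)` and `V(G)`, and `F` has at most `n - 2` elements while `X`
and `G` have at most `n - 1` each, then the local cohomology of `R` with support in
`V(X) ∩ V(G) = V(Z)` vanishes in degree `n`. -/
theorem mayer_vietoris {n : ℕ} (X G F Z : List R) (hX : X.length < n) (hG : G.length < n)
    (hF : F.length + 1 < n)
    (hXG : ∀ x ∈ X, ∀ g ∈ G, x * g ∈ (Ideal.span {f | f ∈ F}).radical)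
    (hFX : ∀ f ∈ F, f ∈ (Ideal.span {x | x ∈ X}).radical)
    (hFG : ∀ f ∈ F, f ∈ (Ideal.span {g | g ∈ G}).radical)
    (hZ : ∀ z ∈ Z, z ∈ (Ideal.span {g | g ∈ G ++ (X ++ F)}).radical)
    (hZ' : ∀ g ∈ G ++ (X ++ F), g ∈ (Ideal.span {z | z ∈ Z}).radical) :
    Van (1 : R) n (TL Z (unit R)) := by
  rw [← Van_inner_list hZ']
  refine Van_TL_of_torsion (fun z hz i => Van_TL_radical (hZ z hz) _ i) ?_
  rw [TL_append, TL_append]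
  obtain ⟨α, β, s⟩ := (Ker_ses X (TL F (unit R))).TL G
  refine s.van_mid (Van_TL_of_torsion ?_ ?_) ?_
  · exact fun g hg => Van_Ker fun x hx i => Van_TL_radical (hXG x hx g hg) _ i
  · refine (Ker_ses X (TL F (unit R))).van_left ?_ (Van_len F (by omega) 1)
    exact (Van_inner_list hFX _ _).2 (Van_len X (by omega) 1)
  · exact (Van_inner_list hFG _ _).2 (Van_len G (by omega) 1)

/-- Top local cohomology along `L` is a quotient of `R[1/∏ L]`, and in it the class of
`1 / ∏ L` is only killed if `(∏ L) ^ (j - 1)` lies in the ideal of `j`-th powers. The map `τ`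
realises top-degree cochains as fractions. -/
lemma exists_top [IsDomain R] (L : List R) (hL : ∀ g ∈ L, g ≠ 0) :
    ∃ τ : (TL L (unit R)).M →ₗ[R] FractionRing R,
      (∃ c ∈ (TL L (unit R)).P L.length, L.prod • τ c = 1) ∧
      (∀ c ∈ (TL L (unit R)).P L.length, ∃ k : ℕ, ∃ r : R,
        L.prod ^ k • τ c = algebraMap R _ r) ∧
      ∀ b ∈ (TL L (unit R)).P (L.length - 1), ∃ k : ℕ, ∀ j ≥ k,
        ∃ r ∈ Ideal.span {x | ∃ g ∈ L, x = g ^ j},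
          L.prod ^ j • τ ((TL L (unit R)).d b) = algebraMap R _ r := by
  induction L with
  | nil =>
    refine ⟨Algebra.linearMap R (FractionRing R), ⟨(1 : R), ?_, ?_⟩, ?_, ?_⟩
    · change (1 : R) ∈ (if ((0 : ℕ) : ℤ) = 0 then (⊤ : Submodule R R) else ⊥)
      simp
    · simp only [List.prod_nil, one_smul]
      exact map_one (algebraMap R (FractionRing R))
    · exact fun c _ => ⟨0, c, by rw [pow_zero, one_smul]; rfl⟩
    · intro b _
      refine ⟨0, fun j _ => ⟨0, Ideal.zero_mem _, ?_⟩⟩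
      change _ • (Algebra.linearMap R (FractionRing R)) (0 : R) = _
      simp
  | cons g L ih =>
    obtain ⟨τ, ⟨c₀, hc₀, e₀⟩, h1, h2⟩ := ih fun x hx => hL x (List.mem_cons_of_mem _ hx)
    have hg : g ≠ 0 := hL g List.mem_cons_self
    have hg' : algebraMap R (FractionRing R) g ≠ 0 := by
      simpa using hg
    have hu : ∀ x : Submonoid.powers g,
        IsUnit (algebraMap R (Module.End R (FractionRing R)) x) := by
      rintro ⟨_, k, rfl⟩
      rw [Module.End.isUnit_iff]
      constructor
      · intro a b hab
        have hab : g ^ k • a = g ^ k • b := hab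
        simpa [Algebra.smul_def, hg'] using hab
      · intro a
        refine ⟨a / algebraMap R (FractionRing R) g ^ k, ?_⟩
        change g ^ k • (a / algebraMap R (FractionRing R) g ^ k) = a
        rw [Algebra.smul_def, map_pow, mul_div_cancel₀ _ (pow_ne_zero k hg')]
    let σ : Loc g (TL L (unit R)).M →ₗ[R] FractionRing R :=
      LocalizedModule.lift (Submonoid.powers g) τ hu
    have hσ : ∀ m, σ (toLoc g _ m) = τ m := fun m => LocalizedModule.lift_mk_one _ _ hu m
    have hcancel : ∀ (k : ℕ) (a b : FractionRing R), g ^ k • a = g ^ k • b → a = b := by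
      intro k a b hab
      simpa [Algebra.smul_def, hg'] using hab
    have hlen : (((g :: L).length : ℕ) : ℤ) - 1 = L.length := by simp
    refine ⟨σ ∘ₗ LinearMap.snd R _ _, ?_, ?_, ?_⟩
    · obtain ⟨y, hy⟩ := loc_div g 1 c₀
      refine ⟨(0, y), ⟨Submodule.zero_mem _, ?_⟩, ?_⟩
      · rw [hlen]
        exact ⟨c₀, hc₀, 1, hy⟩
      · rw [pow_one] at hy
        change (g :: L).prod • σ y = 1
        rw [List.prod_cons, mul_comm, mul_smul, ← map_smul, hy, hσ, e₀]
    · rintro ⟨c, y⟩ ⟨-, hy⟩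
      rw [hlen] at hy
      obtain ⟨m, hm, k, hk⟩ := hy
      obtain ⟨l, r, hr⟩ := h1 m hm
      refine ⟨k + l, g ^ l * L.prod ^ k * r, ?_⟩
      change (g :: L).prod ^ (k + l) • σ y = _
      simp only at hk
      rw [show (g :: L).prod ^ (k + l) = (g ^ l * L.prod ^ k) * L.prod ^ l * g ^ k by
        rw [List.prod_cons]; ring, mul_smul, ← map_smul, hk, hσ, mul_smul, hr, Algebra.smul_def,
        ← map_mul]
    · rintro ⟨c, y⟩ ⟨hc, hy⟩
      simp only at hc hy
      rw [hlen] at hc hy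
      obtain ⟨m, hm, k, hk⟩ := hy
      obtain ⟨k1, r1, hr1⟩ := h1 c hc
      obtain ⟨k2, hk2⟩ := h2 m hm
      refine ⟨max k (max k1 k2), fun j hj => ?_⟩
      have hj0 : k ≤ j := (le_max_left _ _).trans hj
      have hj1 : k1 ≤ j := ((le_max_left _ _).trans (le_max_right _ _)).trans hj
      have hj2 : k2 ≤ j := ((le_max_right _ _).trans (le_max_right _ _)).trans hj
      obtain ⟨r2, hr2, e2⟩ := hk2 j hj2
      obtain ⟨a, rfl⟩ := Nat.exists_eq_add_of_le hj1
      obtain ⟨b, hb⟩ := Nat.exists_eq_add_of_le hj0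
      refine ⟨g ^ (k1 + a) * (L.prod ^ a * r1) - g ^ b * r2, Ideal.sub_mem _ ?_ ?_, ?_⟩
      · exact Ideal.mul_mem_right _ _ (Ideal.subset_span ⟨g, List.mem_cons_self, rfl⟩)
      · refine Ideal.mul_mem_left _ _ (Ideal.span_mono ?_ hr2)
        rintro x ⟨g', hg', rfl⟩
        exact ⟨g', List.mem_cons_of_mem _ hg', rfl⟩
      · change (g :: L).prod ^ (k1 + a) • σ (toLoc g _ c - locMap g (TL L (unit R)).d y) = _
        have e3 : g ^ k • σ (locMap g (TL L (unit R)).d y) = τ ((TL L (unit R)).d m) := by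
          rw [← map_smul, ← map_smul, hk, locMap_toLoc, hσ]
        rw [map_sub, hσ, smul_sub, map_sub, List.prod_cons, mul_pow]
        congr 1
        · rw [mul_smul, pow_add L.prod, mul_comm (L.prod ^ k1), mul_smul, hr1]
          simp [Algebra.smul_def]
        · rw [mul_smul, smul_comm, hb, pow_add g, mul_comm (g ^ k), mul_smul, e3, smul_comm,
            ← hb, e2]
          simp [Algebra.smul_def]

/-- Vanishing of the top local cohomology along `L` forces a power of `∏ L` into the ideal
generated by the next higher powers of the members of `L`. -/
theorem prod_pow_mem [IsDomain R] (L : List R) (hL : ∀ g ∈ L, g ≠ 0)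
    (H : Van (1 : R) L.length (TL L (unit R))) :
    ∃ j : ℕ, L.prod ^ j ∈ Ideal.span {x | ∃ g ∈ L, x = g ^ (j + 1)} := by
  obtain ⟨τ, ⟨c, hc, e⟩, -, h2⟩ := exists_top L hL
  have hd : (TL L (unit R)).d c = 0 := by
    have := (TL L (unit R)).dP _ _ hc
    rwa [TL_P_bot L (by omega), Submodule.mem_bot] at this
  obtain ⟨k, b, hb, eb⟩ := H c hc hd
  obtain ⟨k', hk'⟩ := h2 b hb
  obtain ⟨r, hr, er⟩ := hk' (k' + 1) (by omega)
  rw [eb, one_pow, one_smul, pow_succ, mul_smul, e, Algebra.smul_def, mul_one] at er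
  refine ⟨k', ?_⟩
  rwa [IsFractionRing.injective R (FractionRing R) er]

end Cech

/-! ### Few generators up to radical -/

section SchmittVogel

/-- The Schmitt–Vogel lemma: if `m` lists elements with levels such that the product of two
members of the same level is divisible by a member of smaller level, then the sums over the
levels generate an ideal whose radical contains every `m a`. -/
lemma schmittVogel {R ι : Type*} [CommRing R] [DecidableEq ι] (A : Finset ι) (m : ι → R)
    (lev : ι → ℕ) (J : Ideal R)
    (hJ : ∀ a ∈ A, ∑ b ∈ A with lev b = lev a, m b ∈ J.radical)
    (hd : ∀ a ∈ A, ∀ b ∈ A, a ≠ b → lev a = lev b → ∃ c ∈ A, lev c < lev a ∧ m c ∣ m a * m b) :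
    ∀ a ∈ A, m a ∈ J.radical := by
  suffices H : ∀ l, ∀ a ∈ A, lev a = l → m a ∈ J.radical from fun a ha => H _ a ha rfl
  intro l
  induction l using Nat.strong_induction_on with
  | _ l ih =>
    rintro a ha rfl
    have h1 := Ideal.mul_mem_left _ (m a) (hJ a ha)
    have ha' : a ∈ A.filter fun b => lev b = lev a := by simp [ha]
    rw [← Finset.add_sum_erase _ _ ha', mul_add, Finset.mul_sum] at h1
    have h2 : ∑ b ∈ (A.filter fun b => lev b = lev a).erase a, m a * m b ∈ J.radical := by
      refine Ideal.sum_mem _ fun b hb => ?_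
      simp only [Finset.mem_erase, Finset.mem_filter] at hb
      obtain ⟨c, hc, hlt, hdvd⟩ := hd a ha b hb.2.1 hb.1.symm hb.2.2.symm
      exact Ideal.mem_of_dvd _ hdvd (ih _ hlt c hc rfl)
    have h3 := (Ideal.add_mem_iff_left _ h2).1 h1
    have h4 : m a ∈ J.radical.radical := ⟨2, by rwa [pow_two]⟩
    rwa [Ideal.radical_idem] at h4

variable {n : ℕ} (p : Fin n → Fin n) (W : Finset (Fin n))

/-- The position of `v` in `W`, ordered by parts first. -/
def pos (v : Fin n) : ℕ := (W.filter fun w => p w < p v ∨ (p w = p v ∧ w < v)).card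

/-- The number of members of `W` following `v` in its part. -/
def after (v : Fin n) : ℕ := (W.filter fun w => p w = p v ∧ v < w).card

variable {p W}

lemma after_lt {i i' : Fin n} (hi' : i' ∈ W) (h : p i = p i') (hlt : i < i') :
    after p W i' < after p W i := by
  refine Finset.card_lt_card (Finset.ssubset_iff.2 ⟨i', by simp, ?_⟩)
  intro w hw
  simp only [Finset.mem_insert, Finset.mem_filter] at hw ⊢
  rcases hw with rfl | ⟨h1, h2, h3⟩
  · exact ⟨hi', h.symm, hlt⟩
  · exact ⟨h1, h2.trans h.symm, hlt.trans h3⟩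

lemma pos_add_after {i j : Fin n} (hi : i ∈ W) (h : p i < p j) :
    pos p W i + after p W i + 1 ≤ pos p W j := by
  unfold pos after
  rw [← Finset.card_union_of_disjoint, ← Finset.card_insert_of_notMem]
  · refine Finset.card_le_card fun w hw => ?_
    simp only [Finset.mem_insert, Finset.mem_union, Finset.mem_filter] at hw ⊢
    rcases hw with rfl | ⟨h1, h2 | h2⟩ | ⟨h1, h2⟩
    · exact ⟨hi, .inl h⟩
    · exact ⟨h1, .inl (h2.trans h)⟩
    · exact ⟨h1, .inl (h2.1 ▸ h)⟩
    · exact ⟨h1, .inl (h2.1 ▸ h)⟩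
  · simp
  · rw [Finset.disjoint_filter]
    rintro w - (h1 | h1) h2
    · exact h1.ne h2.1
    · exact lt_asymm h1.2 h2.2

lemma pos_lt_pos {i j : Fin n} (hi : i ∈ W) (h : p i < p j ∨ (p i = p j ∧ i < j)) :
    pos p W i < pos p W j := by
  refine Finset.card_lt_card (Finset.ssubset_iff.2 ⟨i, by simp, ?_⟩)
  intro w hw
  simp only [Finset.mem_insert, Finset.mem_filter] at hw ⊢
  rcases hw with rfl | ⟨h1, h2⟩
  · exact ⟨hi, h⟩
  · refine ⟨h1, ?_⟩
    rcases h2 with h2 | h2 <;> rcases h with h | h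
    · exact .inl (h2.trans h)
    · exact .inl (h.1 ▸ h2)
    · exact .inl (h2.1 ▸ h)
    · exact .inr ⟨h2.1.trans h.1, h2.2.trans h.2⟩

lemma pos_inj {i j : Fin n} (hi : i ∈ W) (hj : j ∈ W) (h : pos p W i = pos p W j) : i = j := by
  by_contra hne
  rcases lt_trichotomy (p i) (p j) with h1 | h1 | h1
  · exact (pos_lt_pos hi (.inl h1)).ne h
  · rcases lt_or_gt_of_ne hne with h2 | h2
    · exact (pos_lt_pos hi (.inr ⟨h1, h2⟩)).ne h
    · exact (pos_lt_pos hj (.inr ⟨h1.symm, h2⟩)).ne' h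
  · exact (pos_lt_pos hj (.inl h1)).ne' h

lemma pos_lt_card {i : Fin n} (hi : i ∈ W) : pos p W i < W.card :=
  Finset.card_lt_card (Finset.filter_ssubset.2 ⟨i, hi, by simp⟩)

end SchmittVogel

/-- The edge ideal of the complete multipartite graph on `W` whose parts are the fibres
of `p`. -/
noncomputable def multiEdgeIdeal {n : ℕ} (K : Type*) [Field K] (p : Fin n → Fin n) (W : Finset (Fin n)) :
    Ideal (MvPolynomial (Fin n) K) :=
  Ideal.span {f | ∃ i ∈ W, ∃ j ∈ W, p i ≠ p j ∧ f = X i * X j}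

/-- A complete multipartite edge ideal on `W` is, up to radical, generated by `#W - 1` elements.
The edge from `i` to `j`, with the part of `i` smaller, gets the level `pos j - after i - 1`. -/
lemma exists_generators {n : ℕ} (K : Type*) [Field K] (p : Fin n → Fin n)
    (W : Finset (Fin n)) :
    ∃ h : ℕ → MvPolynomial (Fin n) K, (∀ l, h l ∈ multiEdgeIdeal K p W) ∧
      ∀ J : Ideal (MvPolynomial (Fin n) K), (∀ l < W.card - 1, h l ∈ J.radical) →
        multiEdgeIdeal K p W ≤ J.radical := by
  classical
  let A : Finset (Fin n × Fin n) := (W ×ˢ W).filter fun a => p a.1 < p a.2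
  let m : Fin n × Fin n → MvPolynomial (Fin n) K := fun a => X a.1 * X a.2
  let lev : Fin n × Fin n → ℕ := fun a => pos p W a.2 - after p W a.1 - 1
  have hA : ∀ i j, (i, j) ∈ A ↔ (i ∈ W ∧ j ∈ W) ∧ p i < p j := fun i j => by simp [A]
  refine ⟨fun l => ∑ b ∈ A with lev b = l, m b, fun l => Ideal.sum_mem _ ?_, fun J hJ => ?_⟩
  · rintro ⟨i, j⟩ hb
    obtain ⟨⟨hi, hj⟩, hlt⟩ := (hA i j).1 (Finset.mem_filter.1 hb).1
    exact Ideal.subset_span ⟨i, hi, j, hj, hlt.ne, rfl⟩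
  · have key : ∀ a ∈ A, m a ∈ J.radical := by
      refine schmittVogel A m lev J ?_ ?_
      · rintro ⟨i, j⟩ ha
        obtain ⟨⟨hi, hj⟩, hlt⟩ := (hA i j).1 ha
        refine hJ _ ?_
        have h1 := pos_add_after (W := W) hi hlt
        have h2 := pos_lt_card (p := p) hj
        simp only [lev]
        omega
      · rintro ⟨i, j⟩ ha ⟨i', j'⟩ hb hne hlev
        obtain ⟨⟨hi, hj⟩, hlt⟩ := (hA i j).1 ha
        obtain ⟨⟨hi', hj'⟩, hlt'⟩ := (hA i' j').1 hb
        have h1 := pos_add_after (W := W) hi hlt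
        have h1' := pos_add_after (W := W) hi' hlt'
        simp only [lev] at hlev ⊢
        rcases lt_trichotomy (p i) (p i') with hp | hp | hp
        · have h2 := pos_add_after (W := W) hi hp
          refine ⟨(i, i'), (hA _ _).2 ⟨⟨hi, hi'⟩, hp⟩, ?_, X j * X j', by simp only [m]; ring⟩
          simp only
          omega
        · rcases lt_trichotomy i i' with h | h | h
          · have h2 := after_lt hi' hp h
            have h3 := pos_add_after (W := W) hi (hp ▸ hlt')
            refine ⟨(i, j'), (hA _ _).2 ⟨⟨hi, hj'⟩, hp ▸ hlt'⟩, ?_, X j * X i', by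
              simp only [m]; ring⟩
            simp only
            omega
          · subst h
            exact absurd (pos_inj (p := p) hj hj' (by omega)) fun h => hne (by rw [h])
          · have h2 := after_lt hi hp.symm h
            have h3 := pos_add_after (W := W) hi' (hp ▸ hlt)
            refine ⟨(i', j), (hA _ _).2 ⟨⟨hi', hj⟩, hp ▸ hlt⟩, ?_, X i * X j', by
              simp only [m]; ring⟩
            simp only
            omega
        · have h2 := pos_add_after (W := W) hi' hp
          refine ⟨(i', i), (hA _ _).2 ⟨⟨hi', hi⟩, hp⟩, ?_, X j * X j', by simp only [m]; ring⟩
          simp only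
          omega
    refine Ideal.span_le.2 ?_
    rintro _ ⟨i, hi, j, hj, hne, rfl⟩
    rcases lt_or_gt_of_ne hne with h | h
    · exact key (i, j) ((hA _ _).2 ⟨⟨hi, hj⟩, h⟩)
    · rw [mul_comm]
      exact key (j, i) ((hA _ _).2 ⟨⟨hj, hi⟩, h⟩)

/-! ### Matroidal ideals of degree two -/

section Matroidal

variable {n : ℕ} {B : Finset (Finset (Fin n))}

/-- In a rank two matroid without loops, every `i` forms a basis with one of the two elements of
a given basis. -/
lemma edge_or_edge (hcard : ∀ S ∈ B, S.card = 2) (hex : ExchangeProp B) (hsupp : FullSupport B)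
    {a b : Fin n} (hab : {a, b} ∈ B) (i : Fin n) : {a, i} ∈ B ∨ {b, i} ∈ B := by
  by_cases hia : i = a
  · subst hia
    exact .inr (by rwa [Finset.pair_comm])
  by_cases hib : i = b
  · subst hib
    exact .inl hab
  obtain ⟨S, hS, hiS⟩ := hsupp i
  obtain ⟨c, hc⟩ := Finset.card_eq_one.1 (show (S.erase i).card = 1 by
    rw [Finset.card_erase_of_mem hiS, hcard S hS])
  have hSe : S = {i, c} := by rw [← Finset.insert_erase hiS, hc]
  have hic : i ≠ c := fun h => Finset.notMem_erase i S (by rw [hc, h]; simp)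
  subst hSe
  by_cases hca : c = a
  · subst hca
    exact .inl (by rwa [Finset.pair_comm])
  by_cases hcb : c = b
  · subst hcb
    exact .inr (by rwa [Finset.pair_comm])
  obtain ⟨j, hj, -, hB⟩ := hex _ hS _ hab c (by simp) (by simp [hca, hcb])
  have he : ({i, c} : Finset (Fin n)).erase c = {i} := by
    rw [Finset.pair_comm, Finset.erase_insert (by simpa using hic.symm)]
  rw [he] at hB
  rcases Finset.mem_insert.1 hj with rfl | hj
  · exact .inl hB
  · rw [Finset.mem_singleton] at hj
    subst hj
    exact .inr hB

/-- The bases of a rank two matroid without loops are the edges of a complete multipartite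
graph. -/
lemma exists_coloring (hcard : ∀ S ∈ B, S.card = 2) (hex : ExchangeProp B)
    (hsupp : FullSupport B) : ∃ p : Fin n → Fin n, ∀ i j, {i, j} ∈ B ↔ p i ≠ p j := by
  let r : Setoid (Fin n) :=
    { r := fun i j => {i, j} ∉ B
      iseqv :=
        { refl := fun i h => by simpa using hcard _ h
          symm := fun {i j} h => by rwa [Finset.pair_comm]
          trans := fun {i j k} h1 h2 h => by
            rcases edge_or_edge hcard hex hsupp h j with h | h
            · exact h1 h
            · exact h2 (by rwa [Finset.pair_comm]) } }
  refine ⟨fun i => (Quotient.mk r i).out, fun i j => ?_⟩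
  rw [Ne, Quotient.out_inj, Quotient.eq]
  exact not_not.symm

/-- The exponent vector of `sqMon K S`. -/
noncomputable def expVec (S : Finset (Fin n)) : Fin n →₀ ℕ := ∑ i ∈ S, Finsupp.single i 1

lemma expVec_apply (S : Finset (Fin n)) (a : Fin n) : expVec S a = if a ∈ S then 1 else 0 := by
  simp [expVec, Finsupp.finsetSum_apply, Finsupp.single_apply]

lemma sqMon_eq (K : Type*) [Field K] (S : Finset (Fin n)) :
    sqMon K S = monomial (expVec S) 1 := by
  rw [sqMon, expVec, monomial_sum_one]
  rfl

lemma support_monomial_one {K : Type*} [Field K] (e : Fin n →₀ ℕ) :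
    (monomial e (1 : K)).support = {e} := by
  classical
  rw [support_monomial, if_neg one_ne_zero]

variable {K : Type*} [Field K] {s : ℕ} {u V : Fin s → Finset (Fin n)}

/-- A variable lies in the colon ideal of `u j` exactly if adding it to `u j` produces a
multiple of an earlier generator. -/
lemma mem_V_iff (hV : LinearQuotientWitness K u V) (j : Fin s) (i : Fin n) :
    i ∈ V j ↔ ∃ k < j, u k ⊆ insert i (u j) := by
  have h1 : i ∈ V j ↔ (X i : MvPolynomial (Fin n) K) ∈
      Ideal.span ((fun i => (X i : MvPolynomial (Fin n) K)) '' (V j : Set (Fin n))) := by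
    refine (Iff.trans mem_ideal_span_X_image ?_).symm
    simp [support_X, Finsupp.single_apply]
  have h2 : sqMon K '' (u '' {k | k < j}) =
      (fun e => monomial e (1 : K)) '' ((fun k => expVec (u k)) '' {k | k < j}) := by
    simp only [Set.image_image, sqMon_eq]
  rw [h1, ← hV j, Ideal.mem_colon_span_singleton, h2, mem_ideal_span_monomial_image, sqMon_eq,
    X, monomial_mul, one_mul, support_monomial_one]
  simp only [Finset.mem_singleton, forall_eq, Set.mem_image, Set.mem_ofPred_eq,
    exists_exists_and_eq_and]
  refine exists_congr fun k => and_congr_right fun _ => ?_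
  rw [Finsupp.le_def]
  refine forall_congr' fun a => ?_
  simp only [Finsupp.add_apply, expVec_apply, Finsupp.single_apply, Finset.mem_insert]
  by_cases ha : i = a
  · subst ha
    by_cases hu : i ∈ u k <;> by_cases hj : i ∈ u j <;> simp [hu, hj]
  · have ha' : a ≠ i := fun h => ha h.symm
    split_ifs <;> simp_all

lemma lqIndex_eq (hne : B.Nonempty) (hcard : ∀ S ∈ B, S.card = 2) (hex : ExchangeProp B)
    (hsupp : FullSupport B) (hu : Function.Injective u)
    (huB : Set.range u = (B : Set (Finset (Fin n)))) (hV : LinearQuotientWitness K u V) :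
    lqIndex V = n - 2 := by
  have hmem : ∀ k, u k ∈ B := fun k => by
    rw [← Finset.mem_coe, ← huB]
    exact ⟨k, rfl⟩
  have hc : ∀ j, ((u j)ᶜ).card = n - 2 := fun j => by
    rw [Finset.card_compl, hcard _ (hmem j), Fintype.card_fin]
  have hle : ∀ j, V j ⊆ (u j)ᶜ := by
    intro j i hi
    rw [Finset.mem_compl]
    intro hij
    obtain ⟨k, hk, hsub⟩ := (mem_V_iff hV j i).1 hi
    rw [Finset.insert_eq_of_mem hij] at hsub
    exact hk.ne (hu (Finset.eq_of_subset_of_card_le hsub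
      (by rw [hcard _ (hmem j), hcard _ (hmem k)])))
  have hs : 0 < s := by
    obtain ⟨S, hS⟩ := hne
    rw [← Finset.mem_coe, ← huB] at hS
    obtain ⟨k, -⟩ := hS
    exact k.pos
  -- In the last step all variables outside the generator occur.
  let j : Fin s := ⟨s - 1, by omega⟩
  have hlast : V j = (u j)ᶜ := by
    refine (hle j).antisymm fun i hi => (mem_V_iff hV j i).2 ?_
    rw [Finset.mem_compl] at hi
    obtain ⟨a, b, -, hab⟩ := Finset.card_eq_two.1 (hcard _ (hmem j))
    have hB : ∃ S ∈ B, i ∈ S ∧ S ⊆ insert i (u j) := by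
      rcases edge_or_edge hcard hex hsupp (hab ▸ hmem j) i with h | h
      · exact ⟨_, h, by simp, by rw [hab]; intro x; simp; tauto⟩
      · exact ⟨_, h, by simp, by rw [hab]; intro x; simp; tauto⟩
    obtain ⟨S, hS, hiS, hsub⟩ := hB
    rw [← Finset.mem_coe, ← huB] at hS
    obtain ⟨k, rfl⟩ := hS
    have hkj : k ≠ j := fun h => hi (h ▸ hiS)
    refine ⟨k, lt_of_le_of_ne ?_ hkj, hsub⟩
    rw [Fin.le_def]
    have := k.2
    simp only [j]
    omega
  refine le_antisymm (Finset.sup_le fun k _ => ?_) ?_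
  · exact (Finset.card_le_card (hle k)).trans (hc k).le
  · rw [← hc j, ← hlast]
    by_cases h0 : (j : ℕ) = 0
    · have : V j = ∅ := by
        rw [Finset.eq_empty_iff_forall_notMem]
        intro i hi
        obtain ⟨k, hk, -⟩ := (mem_V_iff hV j i).1 hi
        rw [Fin.lt_def, h0] at hk
        omega
      simp [this]
    · exact Finset.le_sup (f := fun j => (V j).card) (by simp [h0])

lemma matroidal_eq {p : Fin n → Fin n} (hcard : ∀ S ∈ B, S.card = 2)
    (hp : ∀ i j, {i, j} ∈ B ↔ p i ≠ p j) :
    Ideal.span (sqMon K '' (B : Set (Finset (Fin n)))) = multiEdgeIdeal K p Finset.univ := by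
  have hpair : ∀ i j : Fin n, i ≠ j → sqMon K {i, j} = X i * X j := fun i j h => by
    rw [sqMon, Finset.prod_pair h]
  apply le_antisymm
  · rw [Ideal.span_le]
    rintro _ ⟨S, hS, rfl⟩
    obtain ⟨i, j, hij, rfl⟩ := Finset.card_eq_two.1 (hcard S hS)
    rw [hpair i j hij]
    exact Ideal.subset_span ⟨i, Finset.mem_univ _, j, Finset.mem_univ _, (hp i j).1 hS, rfl⟩
  · refine Ideal.span_le.2 ?_
    rintro _ ⟨i, -, j, -, hij, rfl⟩
    rw [← hpair i j fun h => hij (by rw [h])]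
    exact Ideal.subset_span ⟨_, (hp i j).2 hij, rfl⟩

end Matroidal

/-! ### The arithmetical rank -/

section Ara

variable {K : Type*} [Field K] {n : ℕ}

/-- The local cohomology of the polynomial ring at the origin does not vanish in degree `n`. -/
lemma not_van_variables :
    ¬ Cech.Van (1 : MvPolynomial (Fin n) K) n
      (Cech.TL (Finset.univ.toList.map X) (Cech.unit (MvPolynomial (Fin n) K))) := by
  intro H
  set L : List (MvPolynomial (Fin n) K) := Finset.univ.toList.map X with hL
  have hlen : L.length = n := by simp [hL]
  have hmem : ∀ g ∈ L, ∃ i, g = X i := fun g hg => by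
    obtain ⟨i, -, rfl⟩ := List.mem_map.1 hg
    exact ⟨i, rfl⟩
  obtain ⟨j, hj⟩ := Cech.prod_pow_mem L
    (fun g hg => by obtain ⟨i, rfl⟩ := hmem g hg; exact X_ne_zero i) (by rwa [hlen])
  have hprod : L.prod = monomial (expVec Finset.univ) 1 := by
    rw [hL, Finset.prod_map_toList, ← sqMon_eq, sqMon]
  rw [hprod, monomial_pow, one_pow] at hj
  have hle : Ideal.span {x | ∃ g ∈ L, x = g ^ (j + 1)} ≤
      Ideal.span ((fun e => monomial e (1 : K)) '' Set.range fun i : Fin n =>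
        Finsupp.single i (j + 1)) := by
    refine Ideal.span_mono ?_
    rintro _ ⟨g, hg, rfl⟩
    obtain ⟨i, rfl⟩ := hmem g hg
    exact ⟨_, ⟨i, rfl⟩, by rw [X_pow_eq_monomial]⟩
  obtain ⟨_, ⟨i, rfl⟩, hi⟩ := mem_ideal_span_monomial_image.1 (hle hj) (j • expVec Finset.univ)
    (by rw [support_monomial_one]; simp)
  have := hi i
  simp [expVec_apply] at this

lemma multiEdgeIdeal_mono (p : Fin n → Fin n) {W W' : Finset (Fin n)} (h : W ⊆ W') :
    multiEdgeIdeal K p W ≤ multiEdgeIdeal K p W' :=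
  Ideal.span_mono fun _ ⟨i, hi, j, hj, hij, e⟩ => ⟨i, h hi, j, h hj, hij, e⟩

/-- The zero set of the edge ideal of a complete multipartite graph is the union of the linear
space on which all variables outside one part vanish and of the zero set of the ideal generated
by that part and by the edges avoiding it, so that Mayer–Vietoris applies. -/
lemma le_of_radical_eq {p : Fin n → Fin n} {a b : Fin n} (hab : p a ≠ p b) {m : ℕ}
    (f : Fin m → MvPolynomial (Fin n) K)
    (hf : (Ideal.span (Set.range f)).radical = (multiEdgeIdeal K p Finset.univ).radical) :
    n - 1 ≤ m := by
  by_contra hm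
  let I := multiEdgeIdeal K p Finset.univ
  let W : Finset (Fin n) := Finset.univ.filter fun v => p v ≠ p a
  let U : Finset (Fin n) := Finset.univ.filter fun v => p v = p a
  have hb : b ∈ W := by simpa [W] using hab.symm
  have ha : a ∈ U := by simp [U]
  have hUW : U.card + W.card = n := by
    simpa using Finset.card_filter_add_card_filter_not (s := (Finset.univ : Finset (Fin n)))
      (fun v => p v = p a)
  have hW0 : 0 < W.card := Finset.card_pos.2 ⟨b, hb⟩
  have hU0 : 0 < U.card := Finset.card_pos.2 ⟨a, ha⟩
  obtain ⟨h, hhI, hh⟩ := exists_generators K p W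
  let LX : List (MvPolynomial (Fin n) K) := W.toList.map X
  let LG : List (MvPolynomial (Fin n) K) :=
    U.toList.map X ++ (List.range (W.card - 1)).map h
  let F : List (MvPolynomial (Fin n) K) := List.ofFn f
  let Z : List (MvPolynomial (Fin n) K) := Finset.univ.toList.map X
  have hXm : ∀ w ∈ W, X w ∈ LX := fun w hw => List.mem_map.2 ⟨w, by simpa using hw, rfl⟩
  have hUm : ∀ w ∈ U, X w ∈ LG := fun w hw =>
    List.mem_append_left _ (List.mem_map.2 ⟨w, by simpa using hw, rfl⟩)
  have hZm : ∀ w, X w ∈ Ideal.span {z | z ∈ Z} := fun w =>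
    Ideal.subset_span (List.mem_map.2 ⟨w, by simp, rfl⟩)
  have hspan : Ideal.span {g | g ∈ F} = Ideal.span (Set.range f) := by
    congr 1
    ext g
    simp [F, List.mem_ofFn]
  have hrad : I ≤ (Ideal.span {g | g ∈ F}).radical := by
    rw [hspan, hf]
    exact Ideal.le_radical
  have hFI : ∀ g ∈ F, g ∈ I.radical := fun g hg => by
    rw [← hf, ← hspan]
    exact Ideal.le_radical (Ideal.subset_span hg)
  have hFJ : ∀ J : Ideal (MvPolynomial (Fin n) K), I ≤ J.radical → ∀ g ∈ F, g ∈ J.radical :=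
    fun J hJ g hg => Ideal.radical_le_radical_iff.2 hJ (hFI g hg)
  have hIX : I ≤ (Ideal.span {x | x ∈ LX}).radical := by
    refine (Ideal.span_le.2 ?_).trans Ideal.le_radical
    rintro _ ⟨i, -, j, -, hij, rfl⟩
    by_cases hi : p i = p a
    · exact Ideal.mul_mem_left _ _ (Ideal.subset_span (hXm j (by
        simp only [W, Finset.mem_filter_univ]
        exact fun hj => hij (hi.trans hj.symm))))
    · exact Ideal.mul_mem_right _ _ (Ideal.subset_span (hXm i (by simpa [W] using hi)))
  have hIG : I ≤ (Ideal.span {x | x ∈ LG}).radical := by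
    refine Ideal.span_le.2 ?_
    rintro _ ⟨i, -, j, -, hij, rfl⟩
    by_cases hi : p i = p a
    · exact Ideal.le_radical (Ideal.mul_mem_right _ _ (Ideal.subset_span
        (hUm i (by simpa [U] using hi))))
    by_cases hj : p j = p a
    · exact Ideal.le_radical (Ideal.mul_mem_left _ _ (Ideal.subset_span
        (hUm j (by simpa [U] using hj))))
    refine hh _ (fun l hl => Ideal.le_radical (Ideal.subset_span ?_))
      (Ideal.subset_span ⟨i, by simpa [W] using hi, j, by simpa [W] using hj, hij, rfl⟩)
    exact List.mem_append_right _ (List.mem_map.2 ⟨l, by simpa using hl, rfl⟩)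
  have hIZ : I ≤ Ideal.span {z | z ∈ Z} := by
    refine Ideal.span_le.2 ?_
    rintro _ ⟨i, -, j, -, -, rfl⟩
    exact Ideal.mul_mem_right _ _ (hZm i)
  refine not_van_variables (Cech.mayer_vietoris LX LG F Z ?_ ?_ ?_ ?_ (hFJ _ hIX) (hFJ _ hIG)
    ?_ ?_)
  · simp only [LX, List.length_map, Finset.length_toList]
    omega
  · simp only [LG, List.length_append, List.length_map, Finset.length_toList, List.length_range]
    omega
  · simp only [F, List.length_ofFn]
    omega
  · intro x hx g hg
    refine hrad ?_
    obtain ⟨w, hw, rfl⟩ := List.mem_map.1 hx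
    rcases List.mem_append.1 hg with hg | hg
    · obtain ⟨v, hv, rfl⟩ := List.mem_map.1 hg
      refine Ideal.subset_span ⟨w, Finset.mem_univ _, v, Finset.mem_univ _, ?_, rfl⟩
      have hw : p w ≠ p a := by simpa [W] using hw
      have hv : p v = p a := by simpa [U] using hv
      rwa [hv]
    · obtain ⟨l, -, rfl⟩ := List.mem_map.1 hg
      exact Ideal.mul_mem_left _ _ (multiEdgeIdeal_mono p (Finset.subset_univ _) (hhI l))
  · intro z hz
    obtain ⟨w, -, rfl⟩ := List.mem_map.1 hz
    refine Ideal.le_radical (Ideal.subset_span ?_)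
    by_cases hw : p w = p a
    · exact List.mem_append_left _ (hUm w (by simpa [U] using hw))
    · exact List.mem_append_right _ (List.mem_append_left _ (hXm w (by simpa [W] using hw)))
  · intro g hg
    rcases List.mem_append.1 hg with hg | hg
    · refine Ideal.le_radical ?_
      rcases List.mem_append.1 hg with hg | hg
      · obtain ⟨v, -, rfl⟩ := List.mem_map.1 hg
        exact hZm v
      · obtain ⟨l, -, rfl⟩ := List.mem_map.1 hg
        exact hIZ (multiEdgeIdeal_mono p (Finset.subset_univ _) (hhI l))
    · rcases List.mem_append.1 hg with hg | hg
      · obtain ⟨v, -, rfl⟩ := List.mem_map.1 hg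
        exact Ideal.le_radical (hZm v)
      · exact hFJ _ (hIZ.trans Ideal.le_radical) g hg

lemma araIdeal_multiEdgeIdeal {p : Fin n → Fin n} {a b : Fin n} (hab : p a ≠ p b) :
    araIdeal (multiEdgeIdeal K p Finset.univ) = n - 1 := by
  have hmem : n - 1 ∈ {m : ℕ | ∃ f : Fin m → MvPolynomial (Fin n) K,
      (Ideal.span (Set.range f)).radical = (multiEdgeIdeal K p Finset.univ).radical} := by
    obtain ⟨h, hhI, hh⟩ := exists_generators K p (Finset.univ : Finset (Fin n))
    refine ⟨fun l => h l, le_antisymm (Ideal.radical_mono (Ideal.span_le.2 ?_))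
      (Ideal.radical_le_radical_iff.2 (hh _ fun l hl => Ideal.le_radical (Ideal.subset_span ?_)))⟩
    · rintro _ ⟨l, rfl⟩
      exact hhI l
    · exact ⟨⟨l, by simpa using hl⟩, rfl⟩
  refine le_antisymm (Nat.sInf_le hmem) (le_csInf ⟨_, hmem⟩ ?_)
  rintro m ⟨f, hf⟩
  exact le_of_radical_eq hab f hf

end Ara

/-- Let `I` be a matroidal ideal of degree `2` in `K[x_1, …, x_n]` with
`supp(I) = {x_1, …, x_n}` (with a linear quotient ordering `u` of `G(I)` of index
`q(I)`).  Then `ara I = q(I) + 1 = n − 1`. -/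
theorem statement17 {K : Type*} [Field K] {n s : ℕ}
    {I : Ideal (MvPolynomial (Fin n) K)} {B : Finset (Finset (Fin n))}
    (hI : IsMatroidal K I B 2) (hsupp : FullSupport B)
    (u : Fin s → Finset (Fin n)) (hu : Function.Injective u)
    (huB : Set.range u = (B : Set (Finset (Fin n))))
    (V : Fin s → Finset (Fin n)) (hV : LinearQuotientWitness K u V) :
    araIdeal I = lqIndex V + 1 ∧ lqIndex V + 1 = n - 1 := by
  obtain ⟨hne, hcard, hex, rfl⟩ := hI
  obtain ⟨p, hp⟩ := exists_coloring hcard hex hsupp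
  obtain ⟨S, hS⟩ := id hne
  obtain ⟨a, b, -, rfl⟩ := Finset.card_eq_two.1 (hcard S hS)
  have hn : 2 ≤ n := by
    have := Finset.card_le_univ ({a, b} : Finset (Fin n))
    rwa [hcard _ hS, Fintype.card_fin] at this
  rw [matroidal_eq hcard hp, araIdeal_multiEdgeIdeal ((hp a b).1 hS),
    lqIndex_eq hne hcard hex hsupp hu huB hV]
  omega
end

section
/- Let I ⊆ K[x_1, ..., x_n] be a matroidal ideal with supp(I) = {x_1, ..., x_n}. Then R/I is Cohen-Macaulay if and only if I is a set-theoretic complete intersection, i.e. ara I = ht(I). -/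
/-!
Call a set of variables *free* if it contains no basis, i.e. no support of a generator of `I`;
the free sets are the faces of the Stanley–Reisner complex, and the primes over `I` are those
containing some `(x_i : i ∉ F)` with `F` free. The height of `I` is therefore `n - h`, where `h` is
the largest size of a free set. Both sides of the equivalence turn out to be equivalent to
`h = d - 1`, that is to `I` being the square-free Veronese ideal generated by all square-free
monomials of degree `d`.

*If all free sets have fewer than `d` elements.* Every `d`-set is a basis, so `I` is the
square-free Veronese ideal. Up to radical it is generated by the `n + 1 - d = ht I` elementary
symmetric polynomials of degrees `d, …, n` (`araIdeal_le`). To see that `R/I` is Cohen–Macaulay,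
add the square-free monomials of degree at least `d` one at a time by decreasing degree. Each step
gives an exact sequence `0 → R/(x_i : i ∉ S) → R/J → R/(J + x_S) → 0` whose left term is a
polynomial ring in at least `d` variables, so the vanishing of `Ext^i(R/p, -)` for `i < d - 1`
is preserved (`extDepthGE_upClosed`), and the theorem of Rees converts it into a regular sequence.

*If some free set has at least `d` elements.* Let `H` be a largest free set. It is a hyperplane
of the matroid, it is dependent, and the matroid has no loops, so `H` contains a circuit with at
least two elements. Deleting an element `c` of that circuit from a basis of `H` and taking the
closure gives a flat `G ⊆ H` of corank two with `|H \ G| ≥ 2`. Since `G` has corank two, the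
hyperplanes above `G` partition the complement of `G`, so near the point `pt K G` with coordinates
`1` on `G` and `0` elsewhere the zero locus of `I` is the product of an affine space with a union
of coordinate subspaces that pairwise meet only at the origin; there are at least two of them, and
`H` gives one of dimension `|H \ G| ≥ 2` (`exists_not_connected`). This union is disconnected when
its origin is removed.
Such a locus cannot be cut out by `n - h` equations, nor can its coordinate ring be
Cohen–Macaulay: in either case, dividing the local ring at `pt K G` by these equations and by
`x_i - 1` for `i ∈ G` would leave depth at least `|H \ G| ≥ 2`
(`exists_regular_quot_ofList`), contradicting Hartshorne's theorem that the punctured spectrum of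
a local ring of depth at least two is connected (`connected_of_regular`). Both cases are instances
of `no_regular_sequence_at_point`.
-/

open MvPolynomial

/-! ### Depth, dimension and connectedness -/

section Depth
open IsLocalRing RingTheory.Sequence CategoryTheory Abelian ModuleCat
open scoped Pointwise
universe u

/-- Dividing by a regular element lowers the depth by at most one. As the given regular sequence
need not start with `x`, the depth is read off from the vanishing of `Ext`. -/
lemma exists_regular_quotSMulTop {A M : Type u} [CommRing A] [IsNoetherianRing A] [IsLocalRing A]
    [AddCommGroup M] [Module A M] [Module.Finite A M] [Nontrivial M] {x : A} {k : ℕ}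
    (hx : x ∈ maximalIdeal A) (hreg : IsSMulRegular M x)
    (h : ∃ rs : List A, rs.length = k + 1 ∧ (∀ r ∈ rs, r ∈ maximalIdeal A) ∧ IsRegular M rs) :
    ∃ rs : List A, rs.length = k ∧ (∀ r ∈ rs, r ∈ maximalIdeal A) ∧
      IsRegular (QuotSMulTop x M) rs := by
  have lt : ∀ (N : Type u) [AddCommGroup N] [Module A N] [Module.Finite A N] [Nontrivial N],
      maximalIdeal A • (⊤ : Submodule A N) < ⊤ := fun N _ _ _ _ =>
    (Submodule.top_ne_ideal_smul_of_le_jacobson_annihilator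
      (maximalIdeal_le_jacobson _)).symm.lt_top
  have e1 := ((exists_isRegular_tfae (maximalIdeal A) (k + 1) (ModuleCat.of A M) (lt M)).out 3 1).1 h
  have : Nontrivial (QuotSMulTop x M) := nontrivial_quotSMulTop_of_mem_maximalIdeal M hx
  refine ((exists_isRegular_tfae (maximalIdeal A) k (ModuleCat.of A (QuotSMulTop x M))
    (lt _)).out 1 3).1 fun i hi => ?_
  have zero1 := AddCommGrpCat.isZero_of_iff_subsingleton.mpr (e1 i (by omega))
  have zero2 := AddCommGrpCat.isZero_of_iff_subsingleton.mpr (e1 (i + 1) (by omega))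
  exact AddCommGrpCat.subsingleton_of_isZero <| ShortComplex.Exact.isZero_of_both_zeros
    ((Ext.covariant_sequence_exact₃' _ (IsSMulRegular.smulShortComplex_shortExact (M := ModuleCat.of A M) hreg)) i (i + 1) rfl)
    (zero1.eq_zero_of_src _) (zero2.eq_zero_of_tgt _)

lemma ringKrullDim_quotient_add_one_le {A : Type u} [CommRing A] {Q Q' : Ideal A} [Q.IsPrime]
    [Q'.IsPrime] (h : Q ≤ Q') {x : A} (hx : x ∈ Q') (hxQ : x ∉ Q) :
    ringKrullDim (A ⧸ Q') + 1 ≤ ringKrullDim (A ⧸ Q) := by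
  refine ringKrullDim_succ_le_of_surjective (Ideal.Quotient.factor h)
    (Ideal.Quotient.factor_surjective h) (r := Ideal.Quotient.mk Q x) ?_ ?_
  · rw [mem_nonZeroDivisors_iff_ne_zero]
    rwa [Ne, Ideal.Quotient.eq_zero_iff_mem]
  · simpa [Ideal.Quotient.eq_zero_iff_mem] using hx

/-- The depth of `M` is at most the dimension of `A/Q` for each associated prime `Q` of `M`. -/
lemma length_le_ringKrullDim_quotient {A : Type u} [CommRing A] [IsNoetherianRing A]
    [IsLocalRing A] (rs : List A) (hrs : ∀ r ∈ rs, r ∈ maximalIdeal A) :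
    ∀ (M : Type u) [AddCommGroup M] [Module A M] [Module.Finite A M], IsRegular M rs →
      ∀ Q ∈ associatedPrimes A M, (rs.length : WithBot ℕ∞) ≤ ringKrullDim (A ⧸ Q) := by
  induction rs with
  | nil =>
    intro M _ _ _ _ Q hQ
    have := hQ.isPrime
    simpa using ringKrullDim_nonneg_of_nontrivial
  | cons x xs ih =>
    intro M _ _ _ hreg Q hQ
    have hQp := hQ.isPrime
    rw [isRegular_cons_iff] at hreg
    simp only [List.mem_cons, forall_eq_or_imp] at hrs
    -- `x` is regular so lies outside of `Q`
    have hxQ : x ∉ Q := fun hx => by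
      have : x ∈ ⋃ p ∈ associatedPrimes A M, (p : Set A) := Set.mem_biUnion hQ hx
      rw [biUnion_associatedPrimes_eq_compl_regular] at this
      exact this hreg.1
    -- If all elements `z` killed by `Q` were in `x M`, then, `x` being regular, the submodule `N` of
    -- these elements would satisfy `N = x N`, and hence vanish by Nakayama.
    obtain ⟨z, hzx, hz⟩ : ∃ z : M, z ∉ x • (⊤ : Submodule A M) ∧ ∀ q ∈ Q, q • z = 0 := by
      by_contra! hcon
      let N : Submodule A M :=
        { carrier := {z | ∀ q ∈ Q, q • z = 0}
          add_mem' := fun {a b} ha hb q hq => by rw [smul_add, ha q hq, hb q hq, add_zero]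
          zero_mem' := fun q _ => smul_zero q
          smul_mem' := fun c z hz q hq => by rw [smul_comm, hz q hq, smul_zero] }
      have hNN : N ≤ maximalIdeal A • N := by
        intro z hz
        by_cases hzx : z ∈ x • (⊤ : Submodule A M)
        · obtain ⟨w, -, rfl⟩ := (Submodule.mem_smul_pointwise_iff_exists _ _ _).1 hzx
          refine Submodule.smul_mem_smul hrs.1 (fun q hq => ?_)
          have := hz q hq
          rw [smul_comm] at this
          exact hreg.1 (by simpa using this)
        · obtain ⟨q, hq, hne⟩ := hcon z hzx
          exact absurd (hz q hq) hne
      have hN0 : N = ⊥ := Submodule.eq_bot_of_le_smul_of_le_jacobson_bot _ _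
        (IsNoetherian.noetherian N) hNN (maximalIdeal_le_jacobson _)
      obtain ⟨_, w, hw⟩ := isAssociatedPrime_iff.1 (AssociatedPrimes.mem_iff.1 hQ)
      have hwN : w ∈ N := fun q hq => by
        rw [hw] at hq; simpa using hq
      rw [hN0, Submodule.mem_bot] at hwN
      apply hQp.ne_top
      rw [hw, hwN]; ext; simp
    let zb : QuotSMulTop x M := Submodule.Quotient.mk z
    have hzb : zb ≠ 0 := by
      rwa [Ne, Submodule.Quotient.mk_eq_zero]
    obtain ⟨Q', hQ', hle⟩ := exists_le_isAssociatedPrime_of_isNoetherianRing A zb hzb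
    have hQ'p := hQ'.isPrime
    have hQQ' : Q ≤ Q' := fun q hq => hle (by
      rw [Submodule.mem_colon_singleton, Submodule.mem_bot, ← Submodule.Quotient.mk_smul, hz q hq]; rfl)
    have hxQ' : x ∈ Q' := hle (by
      rw [Submodule.mem_colon_singleton, Submodule.mem_bot, ← Submodule.Quotient.mk_smul, Submodule.Quotient.mk_eq_zero]
      exact Submodule.smul_mem_pointwise_smul _ _ _ trivial)
    have := ih hrs.2 _ hreg.2 Q' hQ'
    refine le_trans ?_ (ringKrullDim_quotient_add_one_le hQQ' hxQ' hxQ)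
    rw [List.length_cons, Nat.cast_add, Nat.cast_one]
    gcongr

/-- Dividing by `k` elements of the maximal ideal lowers the dimension by at most `k`. -/
lemma ringKrullDim_quotient_le_add_length {A : Type u} [CommRing A] [IsNoetherianRing A]
    [IsLocalRing A] (Q : Ideal A) [Q.IsPrime] (fs : List A) (hfs : ∀ f ∈ fs, f ∈ maximalIdeal A) :
    ringKrullDim (A ⧸ Q) ≤ ringKrullDim (A ⧸ (Q ⊔ Ideal.ofList fs)) + fs.length := by
  classical
  have hloc : IsLocalRing (A ⧸ Q) :=
    IsLocalRing.of_surjective' (Ideal.Quotient.mk Q) Ideal.Quotient.mk_surjective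
  let S : Finset (A ⧸ Q) := (fs.map (Ideal.Quotient.mk Q)).toFinset
  have hS : (S : Set (A ⧸ Q)) ⊆ Ring.jacobson (A ⧸ Q) := by
    rw [IsLocalRing.ringJacobson_eq_maximalIdeal]
    intro s hs
    simp only [S, List.coe_toFinset, List.mem_map, Set.mem_ofPred_eq] at hs
    obtain ⟨f, hf, rfl⟩ := hs
    have hlh : IsLocalHom (Ideal.Quotient.mk Q) :=
      IsLocalHom.of_surjective _ Ideal.Quotient.mk_surjective
    exact (map_nonunit (Ideal.Quotient.mk Q) f (hfs f hf))
  have h1 := ringKrullDim_le_ringKrullDim_quotient_add_card S hS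
  have hmap : Ideal.span (S : Set (A ⧸ Q)) = (Ideal.ofList fs).map (Ideal.Quotient.mk Q) := by
    rw [Ideal.map_ofList, Ideal.ofList]; congr 1; ext; simp [S]
  have e := ringKrullDim_eq_of_ringEquiv (DoubleQuot.quotQuotEquivQuotSup Q (Ideal.ofList fs))
  rw [hmap, e] at h1
  refine h1.trans ?_
  gcongr
  exact (List.toFinset_card_le _).trans (by simp)

/-- If `depth M ≥ a + |fs|` and dividing by `fs` brings the dimension of the support of `M` down
to at most `a`, then `M/(fs)M` has depth at least `a`: an element of `fs` in an associated prime
`Q` would not lower `dim A/Q`, leaving too few elements to reduce a dimension which is at least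
the depth. -/
lemma exists_regular_quot_ofList {A : Type u} [CommRing A] [IsNoetherianRing A]
    [IsLocalRing A] (a : ℕ) (fs : List A) (hfs : ∀ f ∈ fs, f ∈ maximalIdeal A) :
    ∀ (M : Type u) [AddCommGroup M] [Module A M] [Module.Finite A M] [Nontrivial M],
      (∃ rs : List A, rs.length = a + fs.length ∧ (∀ r ∈ rs, r ∈ maximalIdeal A) ∧
        IsRegular M rs) →
      (∀ Q : Ideal A, Q.IsPrime → Module.annihilator A M ≤ Q →
        ringKrullDim (A ⧸ (Q ⊔ Ideal.ofList fs)) ≤ a) →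
      ∃ rs : List A, rs.length = a ∧ (∀ r ∈ rs, r ∈ maximalIdeal A) ∧
        IsRegular (M ⧸ (Ideal.ofList fs • ⊤ : Submodule A M)) rs := by
  induction fs with
  | nil =>
    rintro M _ _ _ _ ⟨rs, h1, h2, h3⟩ -
    refine ⟨rs, by simpa using h1, h2, ?_⟩
    rwa [← (Submodule.quotEquivOfEqBot (Ideal.ofList ([] : List A) • ⊤ : Submodule A M)
      (by simp)).isRegular_congr rs] at h3
  | cons f fs ih =>
    intro M _ _ _ _ hrs hdim
    simp only [List.mem_cons, forall_eq_or_imp] at hfs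
    have hreg : IsSMulRegular M f := by
      by_contra hf
      have : f ∈ ⋃ p ∈ associatedPrimes A M, (p : Set A) := by
        rw [biUnion_associatedPrimes_eq_compl_regular]; exact hf
      obtain ⟨Q, hQ, hfQ⟩ := Set.mem_iUnion₂.1 this
      have hQp := hQ.isPrime
      obtain ⟨rs, h1, h2, h3⟩ := hrs
      have k1 := length_le_ringKrullDim_quotient rs h2 M h3 Q hQ
      have k2 := ringKrullDim_quotient_le_add_length Q fs hfs.2
      have hann : Module.annihilator A M ≤ Q := by
        rw [← Submodule.annihilator_top]; exact hQ.annihilator_le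
      have k3 := hdim Q hQp hann
      have : Q ⊔ Ideal.ofList (f :: fs) = Q ⊔ Ideal.ofList fs := by
        rw [Ideal.ofList_cons, ← sup_assoc, sup_eq_left.2 ((Ideal.span_singleton_le_iff_mem _).2 hfQ)]
      rw [this] at k3
      have k4 : ((a + (fs.length + 1) : ℕ) : WithBot ℕ∞) ≤ ((a + fs.length : ℕ) : WithBot ℕ∞) := by
        rw [h1, List.length_cons] at k1
        refine (k1.trans k2).trans ?_
        push_cast
        gcongr
      have : a + (fs.length + 1) ≤ a + fs.length := by exact_mod_cast k4
      omega
    have : Nontrivial (QuotSMulTop f M) := nontrivial_quotSMulTop_of_mem_maximalIdeal M hfs.1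
    obtain ⟨rs, h1, h2, h3⟩ := ih hfs.2 (QuotSMulTop f M)
      (exists_regular_quotSMulTop hfs.1 hreg (by simpa [add_assoc] using hrs)) (by
        intro Q hQ hann
        have hfQ : f ∈ Q := hann (by
          rw [Module.mem_annihilator]
          intro m
          induction m using Submodule.Quotient.induction_on with | _ m =>
          rw [← Submodule.Quotient.mk_smul, Submodule.Quotient.mk_eq_zero]
          exact Submodule.smul_mem_pointwise_smul _ _ _ trivial)
        have h := hdim Q hQ (le_trans (LinearMap.annihilator_le_of_surjective
          (Submodule.mkQ _) (Submodule.mkQ_surjective _)) hann)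
        rwa [Ideal.ofList_cons, ← sup_assoc,
          sup_eq_left.2 ((Ideal.span_singleton_le_iff_mem _).2 hfQ)] at h)
    exact ⟨rs, h1, h2, ((Submodule.quotOfListConsSMulTopEquivQuotSMulTopInner
      M f fs).isRegular_congr rs).2 h3⟩

lemma ringKrullDim_quotient_le_of_primes {A : Type u} [CommRing A] [Nontrivial A] (J : Ideal A) (a : ℕ)
    (h : ∀ Q : Ideal A, Q.IsPrime → J ≤ Q → ringKrullDim (A ⧸ Q) ≤ a) :
    ringKrullDim (A ⧸ J) ≤ a := by
  rw [ringKrullDim_quotient, Order.krullDim]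
  refine iSup_le fun l => ?_
  have hl : J ≤ l.head.1.asIdeal := l.head.2
  have := h _ l.head.1.2 hl
  refine le_trans ?_ this
  rw [ringKrullDim_quotient]
  let chain : LTSeries (PrimeSpectrum.zeroLocus (l.head.1.asIdeal : Set A)) :=
    { length := l.length
      toFun := fun i => ⟨(l i).1, l.head_le i⟩
      step := fun i => l.step i }
  exact Order.LTSeries.length_le_krullDim chain

/-- Hartshorne's connectedness argument: if `x, y` is a regular sequence modulo `J` in `U + V`, where
`U V ⊆ J`, then one of `U`, `V` is contained in `J`. -/
lemma hartshorne {A : Type u} [CommRing A] [IsLocalRing A] (J U V : Ideal A) (hUV : U * V ≤ J)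
    {x y : A} (hx : x ∈ maximalIdeal A)
    (hxr : ∀ z, x * z ∈ J → z ∈ J)
    (hyr : ∀ z, y * z ∈ J ⊔ Ideal.span {x} → z ∈ J ⊔ Ideal.span {x})
    (hxUV : x ∈ U ⊔ V) (hyUV : y ∈ U ⊔ V) : U ≤ J ∨ V ≤ J := by
  obtain ⟨u, hu, v, hv, rfl⟩ := Submodule.mem_sup.1 hxUV
  obtain ⟨u', hu', v', hv', rfl⟩ := Submodule.mem_sup.1 hyUV
  have m : ∀ {p q}, p ∈ U → q ∈ V → p * q ∈ J := fun hp hq => hUV (Ideal.mul_mem_mul hp hq)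
  have h1 : u ∈ J ⊔ Ideal.span {u + v} := by
    apply hyr
    have : (u' + v') * u = (u * v' - u' * v) + u' * (u + v) := by ring
    rw [this]
    exact Submodule.add_mem_sup (J.sub_mem (m hu hv') (m hu' hv))
      (Ideal.mul_mem_left _ _ (Ideal.mem_span_singleton_self _))
  obtain ⟨j, hj, w, hw, hjw⟩ := Submodule.mem_sup.1 h1
  obtain ⟨s, rfl⟩ := Ideal.mem_span_singleton'.1 hw
  -- `u ≡ s x`, hence `x² s² ≡ u² ≡ u x ≡ x² s` and `s (1 - s) ≡ 0` modulo `J`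
  have h2 : s * (1 - s) ∈ J := by
    apply hxr; apply hxr
    have h3 : u * v ∈ J := m hu hv
    have : (u + v) * ((u + v) * (s * (1 - s))) =
        u * v - j * (u + v) + j * u + j * (s * (u + v)) := by
      have hu' : s * (u + v) = u - j := by linear_combination hjw
      calc (u + v) * ((u + v) * (s * (1 - s))) = (s * (u + v)) * ((u + v) - s * (u + v)) := by ring
        _ = _ := by rw [hu']; ring
    rw [this]
    exact J.add_mem (J.add_mem (J.sub_mem h3 (J.mul_mem_right _ hj)) (J.mul_mem_right _ hj))
      (J.mul_mem_right _ hj)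
  rcases IsLocalRing.isUnit_or_isUnit_one_sub_self s with hs | hs
  · -- then `v ∈ J`, so `x ≡ u` kills `V`
    right
    have hs1 : 1 - s ∈ J := (Ideal.unit_mul_mem_iff_mem J hs).1 h2
    have hvJ : v ∈ J := by
      have : v = (1 - s) * (u + v) - j := by
        linear_combination hjw
      rw [this]
      exact J.sub_mem (J.mul_mem_right _ hs1) hj
    intro w hw
    apply hxr
    rw [add_mul]
    exact J.add_mem (m hu hw) (J.mul_mem_right _ hvJ)
  · left
    have hs1 : s ∈ J := by
      rw [mul_comm] at h2; exact (Ideal.unit_mul_mem_iff_mem J hs).1 h2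
    have huJ : u ∈ J := by
      rw [← hjw]; exact J.add_mem hj (J.mul_mem_right _ hs1)
    intro w hw
    apply hxr
    rw [add_mul]
    exact J.add_mem (J.mul_mem_right _ huJ) (by rw [mul_comm]; exact m hw hv)

lemma mul_pow_mem_cancel {A : Type u} [CommRing A] {J : Ideal A} {x : A}
    (hxr : ∀ z, x * z ∈ J → z ∈ J) (k : ℕ) : ∀ z, x ^ k * z ∈ J → z ∈ J := by
  induction k with
  | zero => simp
  | succ k ih =>
    intro z hz
    exact hxr _ (ih _ (by rwa [← mul_assoc, ← pow_succ]))

/-- If `x, y` is a regular sequence modulo `J`, then `y` is regular modulo `J + (x ^ k)`. -/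
lemma mul_mem_sup_pow_cancel {A : Type u} [CommRing A] {J : Ideal A} {x y : A}
    (hxr : ∀ z, x * z ∈ J → z ∈ J)
    (hyr : ∀ z, y * z ∈ J ⊔ Ideal.span {x} → z ∈ J ⊔ Ideal.span {x}) (k : ℕ) :
    ∀ z, y * z ∈ J ⊔ Ideal.span {x ^ k} → z ∈ J ⊔ Ideal.span {x ^ k} := by
  induction k with
  | zero => intro z _; simp
  | succ k ih =>
    intro z hz
    have hle : J ⊔ Ideal.span {x ^ (k + 1)} ≤ J ⊔ Ideal.span {x} := by
      refine sup_le_sup_left ?_ _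
      rw [Ideal.span_singleton_le_span_singleton]
      exact dvd_pow_self x (Nat.succ_ne_zero k)
    obtain ⟨j', hj', _, hw', rfl⟩ := Submodule.mem_sup.1 (hyr z (hle hz))
    obtain ⟨z', rfl⟩ := Ideal.mem_span_singleton'.1 hw'
    obtain ⟨j, hj, _, hw, h⟩ := Submodule.mem_sup.1 hz
    obtain ⟨w, rfl⟩ := Ideal.mem_span_singleton'.1 hw
    have h1 : y * z' - w * x ^ k ∈ J := by
      apply hxr
      have : x * (y * z' - w * x ^ k) = j - y * j' := by linear_combination -h
      rw [this]
      exact J.sub_mem hj (J.mul_mem_left _ hj')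
    have h2 : z' ∈ J ⊔ Ideal.span {x ^ k} := by
      apply ih
      have : y * z' = (y * z' - w * x ^ k) + w * x ^ k := by ring
      rw [this]
      exact Submodule.add_mem_sup h1 (Ideal.mul_mem_left _ _ (Ideal.mem_span_singleton_self _))
    obtain ⟨j₂, hj₂, _, hw₂, rfl⟩ := Submodule.mem_sup.1 h2
    obtain ⟨w₂, rfl⟩ := Ideal.mem_span_singleton'.1 hw₂
    have : j' + (j₂ + w₂ * x ^ k) * x = (j' + j₂ * x) + w₂ * x ^ (k + 1) := by ring
    rw [this]
    exact Submodule.add_mem_sup (J.add_mem hj' (J.mul_mem_right _ hj₂))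
      (Ideal.mul_mem_left _ _ (Ideal.mem_span_singleton_self _))

/-- The version of `hartshorne` in which all conditions on `U` and `V` hold up to radical: replace
`U`, `V` and the two elements by powers. -/
lemma hartshorne_radical {A : Type u} [CommRing A] [IsNoetherianRing A] [IsLocalRing A]
    (J U V : Ideal A) (hUV : U * V ≤ J.radical)
    {x y : A} (hx : x ∈ maximalIdeal A) (hy : y ∈ maximalIdeal A)
    (hxr : ∀ z, x * z ∈ J → z ∈ J)
    (hyr : ∀ z, y * z ∈ J ⊔ Ideal.span {x} → z ∈ J ⊔ Ideal.span {x})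
    (hm : maximalIdeal A ≤ (J ⊔ (U ⊔ V)).radical) : U ≤ J.radical ∨ V ≤ J.radical := by
  obtain ⟨l, hl⟩ := Ideal.exists_pow_le_of_le_radical_of_fg hUV
    (IsNoetherian.noetherian _)
  have hrad : (J ⊔ (U ⊔ V)).radical ≤ ((U ^ l ⊔ J) ⊔ (V ^ l ⊔ J)).radical := by
    rw [Ideal.radical_le_radical_iff]
    refine sup_le (le_trans (le_trans le_sup_right le_sup_left) Ideal.le_radical)
      (sup_le (fun u hu => ⟨l, ?_⟩) (fun u hu => ⟨l, ?_⟩))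
    · exact Ideal.mem_sup_left (Ideal.mem_sup_left (Ideal.pow_mem_pow hu l))
    · exact Ideal.mem_sup_right (Ideal.mem_sup_left (Ideal.pow_mem_pow hu l))
  obtain ⟨k, hk⟩ := hrad (hm hx)
  obtain ⟨k', hk'⟩ := hrad (hm hy)
  have hk1 : x ^ (k + 1) ∈ (U ^ l ⊔ J) ⊔ (V ^ l ⊔ J) := by
    rw [pow_succ]; exact Ideal.mul_mem_right _ _ hk
  have hpr : (U ^ l ⊔ J) * (V ^ l ⊔ J) ≤ J := by
    rw [Ideal.sup_mul, Ideal.mul_sup, ← mul_pow]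
    exact sup_le (sup_le hl Ideal.mul_le_right) Ideal.mul_le_left
  have key := hartshorne J _ _ hpr (Ideal.pow_mem_of_mem _ hx (k + 1) k.succ_pos)
    (mul_pow_mem_cancel hxr (k + 1))
    (mul_pow_mem_cancel (mul_mem_sup_pow_cancel hxr hyr (k + 1)) k') hk1 hk'
  refine key.imp (fun h u hu => ⟨l, ?_⟩) (fun h u hu => ⟨l, ?_⟩)
  · exact h (Ideal.mem_sup_left (Ideal.pow_mem_pow hu l))
  · exact h (Ideal.mem_sup_left (Ideal.pow_mem_pow hu l))

/-- Hartshorne's theorem: the punctured spectrum of a local ring of depth at least two is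
connected. If two closed subsets cover the spectrum of `A/J` and meet only in the closed point, then
one of them is everything. -/
lemma connected_of_regular {A : Type u} [CommRing A] [IsNoetherianRing A] [IsLocalRing A]
    (J U V : Ideal A) (hUV : U * V ≤ J.radical) (rs : List A)
    (hrs : 2 ≤ rs.length) (hmem : ∀ r ∈ rs, r ∈ maximalIdeal A)
    (hreg : IsRegular (A ⧸ (J • ⊤ : Submodule A A)) rs)
    (hm : maximalIdeal A ≤ (J ⊔ (U ⊔ V)).radical) : U ≤ J.radical ∨ V ≤ J.radical := by
  obtain ⟨x, y, rs, rfl⟩ : ∃ x y rs', rs = x :: y :: rs' := by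
    match rs, hrs with
    | x :: y :: rs', _ => exact ⟨_, _, _, rfl⟩
  simp only [List.mem_cons, forall_eq_or_imp] at hmem
  rw [isRegular_cons_iff] at hreg
  obtain ⟨hx, hreg⟩ := hreg
  rw [isRegular_cons_iff] at hreg
  obtain ⟨hy, -⟩ := hreg
  have e : (J • ⊤ : Submodule A A) = J := by simp
  rw [e] at hx hy
  have hx' : ∀ z, x * z ∈ J → z ∈ J := fun z hz => by
    have := @hx (Submodule.Quotient.mk z) 0 (by
      simp only [smul_zero, ← Submodule.Quotient.mk_smul]
      exact (Submodule.Quotient.mk_eq_zero _).2 hz)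
    exact (Submodule.Quotient.mk_eq_zero _).1 this
  have hq : ∀ z : A, (Submodule.Quotient.mk (Submodule.Quotient.mk z : A ⧸ (J : Submodule A A)) :
      QuotSMulTop x (A ⧸ (J : Submodule A A))) = 0 ↔ z ∈ J ⊔ Ideal.span {x} := fun z => by
    rw [Submodule.Quotient.mk_eq_zero, Submodule.mem_smul_pointwise_iff_exists]
    constructor
    · rintro ⟨w, -, hw⟩
      obtain ⟨w, rfl⟩ := Submodule.Quotient.mk_surjective _ w
      rw [← Submodule.Quotient.mk_smul, eq_comm, Submodule.Quotient.eq] at hw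
      rw [← sub_add_cancel z (x • w)]
      exact Submodule.add_mem_sup hw (Ideal.mul_mem_right _ _ (Ideal.mem_span_singleton_self _))
    · intro h
      obtain ⟨j, hj, _, hw, rfl⟩ := Submodule.mem_sup.1 h
      obtain ⟨w, rfl⟩ := Ideal.mem_span_singleton'.1 hw
      refine ⟨Submodule.Quotient.mk w, trivial, ?_⟩
      rw [← Submodule.Quotient.mk_smul, eq_comm, Submodule.Quotient.eq]
      rw [smul_eq_mul, mul_comm w x, add_sub_cancel_right]
      exact hj
  have hy' : ∀ z, y * z ∈ J ⊔ Ideal.span {x} → z ∈ J ⊔ Ideal.span {x} := fun z hz => by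
    have := @hy (Submodule.Quotient.mk (Submodule.Quotient.mk z)) 0 (by
      simp only [smul_zero, ← Submodule.Quotient.mk_smul]
      exact (hq _).2 hz)
    exact (hq z).1 this
  exact hartshorne_radical J U V hUV hmem.1 hmem.2.1 hx' hy' hm

end Depth

/-! ### Hyperplanes that meet only in a flat of corank two -/

section Core
open IsLocalRing RingTheory.Sequence
universe u v

/-- A set of variables is free when it contains no basis, i.e. when it is a face of the
Stanley–Reisner complex of the ideal generated by the monomials with supports in `B`. -/
def FreeOf {n : ℕ} (B : Finset (Finset (Fin n))) (F : Finset (Fin n)) : Prop :=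
  ∀ T ∈ B, ¬ T ⊆ F

/-- A prime `Q` over the ideal, at which the variables of `G` are `1`, contains all variables outside
a free set `F ⊇ G`, so `dim A/Q ≤ |F \ G| ≤ |H \ G|`. -/
lemma ringKrullDim_quotient_prime_le {n : ℕ} {K : Type v} [Field K] {B : Finset (Finset (Fin n))}
    {A : Type u} [CommRing A] [IsNoetherianRing A] [IsLocalRing A]
    (φ : MvPolynomial (Fin n) K →+* A) {G H : Finset (Fin n)} (hGH : G ⊆ H)
    (hmax : ∀ F, FreeOf B F → F.card ≤ H.card) (Q : Ideal A) [Q.IsPrime]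
    (hG : ∀ i ∈ G, φ (X i) - 1 ∈ Q) (hX : ∀ j ∉ G, φ (X j) ∈ maximalIdeal A)
    (hm : maximalIdeal A ≤ Q ⊔ Ideal.span ((fun j => φ (X j)) '' {j | j ∉ G}))
    (hI : ∀ T ∈ B, φ (sqMon K T) ∈ Q) :
    ringKrullDim (A ⧸ Q) ≤ ((H \ G).card : ℕ) := by
  classical
  let F : Finset (Fin n) := Finset.univ.filter fun j => φ (X j) ∉ Q
  have hGF : G ⊆ F := fun i hi => by
    simp only [F, Finset.mem_filter, Finset.mem_univ, true_and]
    intro h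
    apply Ideal.IsPrime.ne_top' (I := Q)
    rw [Ideal.eq_top_iff_one]
    simpa using Q.sub_mem h (hG i hi)
  have hF : FreeOf B F := fun T hT hTF => by
    have := hI T hT
    rw [sqMon, map_prod] at this
    obtain ⟨i, hi, hiQ⟩ := (Ideal.IsPrime.prod_mem_iff (p := Q)).1 this
    have := hTF hi
    simp only [F, Finset.mem_filter] at this
    exact this.2 hiQ
  let xs : List A := (F \ G).toList.map fun j => φ (X j)
  have hxs : ∀ f ∈ xs, f ∈ maximalIdeal A := by
    simp only [xs, List.mem_map, Finset.mem_toList, Finset.mem_sdiff]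
    rintro _ ⟨j, hj, rfl⟩
    exact hX j hj.2
  have h1 := ringKrullDim_quotient_le_add_length Q xs hxs
  have h2 : Q ⊔ Ideal.ofList xs = maximalIdeal A := by
    apply le_antisymm
    · refine sup_le (le_maximalIdeal (Ideal.IsPrime.ne_top')) ?_
      rw [Ideal.ofList, Ideal.span_le]
      exact fun f hf => hxs f hf
    · refine hm.trans (sup_le le_sup_left ?_)
      rw [Ideal.span_le]
      rintro _ ⟨j, hj, rfl⟩
      by_cases hjQ : φ (X j) ∈ Q
      · exact Ideal.mem_sup_left hjQ
      · refine Ideal.mem_sup_right (Ideal.subset_span ?_)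
        simp only [xs, Set.mem_ofPred_eq, List.mem_map, Finset.mem_toList, Finset.mem_sdiff]
        exact ⟨j, ⟨by simpa [F] using hjQ, hj⟩, rfl⟩
  have h3 : ringKrullDim (A ⧸ (Q ⊔ Ideal.ofList xs)) = 0 := by
    rw [h2]
    exact ringKrullDim_eq_zero_of_isField
      ((Ideal.Quotient.maximal_ideal_iff_isField_quotient _).1 (maximalIdeal.isMaximal A))
  rw [h3, zero_add] at h1
  refine h1.trans ?_
  have : xs.length ≤ (H \ G).card := by
    simp only [xs, List.length_map, Finset.length_toList]
    rw [Finset.card_sdiff_of_subset hGF, Finset.card_sdiff_of_subset hGH]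
    have := hmax F hF
    omega
  exact_mod_cast this

/-- Let `H` have at least the size of every free set, and let `G ⊆ H` be such that `G ∪ {a, b}` is
never free for `a ∈ H \ G`, `b ∉ H`. If `fs` cuts out the zero locus of the ideal and `X i - 1`,
`i ∈ G`, then the depth of `A` is less than `|H \ G| + |fs|`: otherwise `A/(fs)` would have depth at
least two, while `H \ G` and the complement of `H` disconnect its punctured spectrum. -/
lemma no_regular_sequence {n : ℕ} {K : Type v} [Field K] {B : Finset (Finset (Fin n))}
    {A : Type u} [CommRing A] [IsNoetherianRing A] [IsLocalRing A]
    (φ : MvPolynomial (Fin n) K →+* A) {G H : Finset (Fin n)} (hGH : G ⊆ H)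
    (hmax : ∀ F, FreeOf B F → F.card ≤ H.card)
    (hex : ∀ a ∈ H, a ∉ G → ∀ b ∉ H, ¬ FreeOf B (insert a (insert b G)))
    (h2 : 2 ≤ (H \ G).card) (fs : List A) (hfs : ∀ f ∈ fs, f ∈ maximalIdeal A)
    (hG : ∀ i ∈ G, φ (X i) - 1 ∈ Ideal.ofList fs) (hX : ∀ j ∉ G, φ (X j) ∈ maximalIdeal A)
    (hm : maximalIdeal A ≤ Ideal.ofList fs ⊔ Ideal.span ((fun j => φ (X j)) '' {j | j ∉ G}))
    (hI : ∀ T ∈ B, φ (sqMon K T) ∈ (Ideal.ofList fs).radical)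
    (hdepth : ∃ rs : List A, rs.length = (H \ G).card + fs.length ∧
      (∀ r ∈ rs, r ∈ maximalIdeal A) ∧ IsRegular A rs)
    {a b : Fin n} (ha : a ∈ H) (haG : a ∉ G) (hb : b ∉ H)
    (hna : φ (X a) ∉ (Ideal.ofList fs).radical) (hnb : φ (X b) ∉ (Ideal.ofList fs).radical) :
    False := by
  classical
  have hJm : Ideal.ofList fs ≤ maximalIdeal A := by
    rw [Ideal.ofList, Ideal.span_le]; exact fun f hf => hfs f hf
  obtain ⟨rs, h1, hrm, hreg⟩ := exists_regular_quot_ofList (H \ G).card fs hfs A hdepth (by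
    intro Q hQ _
    have hne : Q ⊔ Ideal.ofList fs ≤ maximalIdeal A :=
      sup_le (le_maximalIdeal hQ.ne_top) hJm
    refine ringKrullDim_quotient_le_of_primes _ _ fun Q' hQ' hle => ?_
    have hle' : Ideal.ofList fs ≤ Q' := le_sup_right.trans hle
    exact ringKrullDim_quotient_prime_le φ hGH hmax Q' (fun i hi => hle' (hG i hi)) hX
      (hm.trans (sup_le_sup_right hle' _))
      (fun T hT => (hQ'.radical_le_iff.2 hle') (hI T hT)))
  let U : Ideal A := Ideal.span ((fun j => φ (X j)) '' {j | j ∉ H})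
  let V : Ideal A := Ideal.span ((fun j => φ (X j)) '' {j | j ∈ H ∧ j ∉ G})
  have hU : ∀ i ∈ G, IsUnit (φ (X i)) := fun i hi => by
    by_contra hcon
    have : φ (X i) - (φ (X i) - 1) ∈ maximalIdeal A :=
      Ideal.sub_mem _ ((mem_maximalIdeal _).2 hcon) (hJm (hG i hi))
    rw [sub_sub_cancel] at this
    exact (Ideal.ne_top_iff_one _).1 (Ideal.IsPrime.ne_top (maximalIdeal.isMaximal A).isPrime) this
  have hUV : U * V ≤ (Ideal.ofList fs).radical := by
    rw [Ideal.span_mul_span', Ideal.span_le]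
    rintro _ ⟨_, ⟨b, hb, rfl⟩, _, ⟨a, ⟨ha, haG⟩, rfl⟩, rfl⟩
    have := hex a ha haG b hb
    simp only [FreeOf] at this
    push Not at this
    obtain ⟨T, hT, hTs⟩ := this
    have h4 := hI T hT
    have hab : b ≠ a := fun h => hb (h ▸ ha)
    have hbG : b ∉ G := fun h => hb (hGH h)
    have h5 : φ (sqMon K (insert a (insert b G))) ∈ (Ideal.ofList fs).radical := by
      rw [sqMon, ← Finset.prod_sdiff hTs, map_mul]
      exact Ideal.mul_mem_left _ _ h4
    rw [sqMon, Finset.prod_insert (by simp [hab.symm, haG]), Finset.prod_insert hbG,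
      ← mul_assoc, map_mul, mul_comm, Ideal.unit_mul_mem_iff_mem] at h5
    · rw [map_mul, mul_comm] at h5; exact h5
    · rw [map_prod]
      exact Finset.prod_induction _ IsUnit (fun _ _ => IsUnit.mul) isUnit_one hU
  have key := connected_of_regular (Ideal.ofList fs) U V hUV rs (h1 ▸ h2) hrm hreg (by
    refine le_trans (hm.trans ?_) Ideal.le_radical
    refine sup_le_sup_left ?_ _
    rw [← Ideal.span_union]
    refine Ideal.span_mono ?_
    rintro _ ⟨j, hj, rfl⟩
    by_cases hjH : j ∈ H
    · exact Or.inr ⟨j, ⟨hjH, hj⟩, rfl⟩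
    · exact Or.inl ⟨j, hjH, rfl⟩)
  rcases key with h | h
  · exact hnb (h (Ideal.subset_span ⟨b, hb, rfl⟩))
  · exact hna (h (Ideal.subset_span ⟨a, ⟨ha, haG⟩, rfl⟩))

end Core

/-! ### Localization at a zero-one point -/

section Point
open IsLocalRing RingTheory.Sequence
universe u v

/-- The point whose coordinates are `1` on `G` and `0` elsewhere. -/
def pt {n : ℕ} (K : Type v) [Field K] (G : Finset (Fin n)) : Fin n → K :=
  fun i => if i ∈ G then 1 else 0

/-- The restriction of polynomials to the line through `pt K G` in the direction of the variable
`e` (for `e ∉ G`). -/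
noncomputable def lineHom {n : ℕ} (K : Type v) [Field K] (G : Finset (Fin n)) (e : Fin n) :
    MvPolynomial (Fin n) K →+* Polynomial K :=
  eval₂Hom Polynomial.C fun i => if i ∈ G then 1 else if i = e then Polynomial.X else 0

lemma eval_zero_lineHom {n : ℕ} {K : Type v} [Field K] (G : Finset (Fin n)) (e : Fin n)
    (f : MvPolynomial (Fin n) K) : (lineHom K G e f).eval 0 = eval (pt K G) f := by
  have : (Polynomial.evalRingHom (0 : K)).comp (lineHom K G e) = eval (pt K G) := by
    apply MvPolynomial.ringHom_ext
    · intro r; simp [lineHom]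
    · intro i
      simp only [lineHom, RingHom.comp_apply, coe_eval₂Hom, eval₂_X, pt, eval_X]
      split_ifs <;> simp
  exact congrArg (fun g => g f) this

lemma lineHom_sqMon {n : ℕ} {K : Type v} [Field K] {G : Finset (Fin n)} {e : Fin n}
    {T : Finset (Fin n)} (h : ¬ T ⊆ insert e G) : lineHom K G e (sqMon K T) = 0 := by
  obtain ⟨i, hi, hie⟩ := Finset.not_subset.1 h
  rw [sqMon, map_prod]
  refine Finset.prod_eq_zero hi ?_
  rw [Finset.mem_insert, not_or] at hie
  simp [lineHom, hie.1, hie.2]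

lemma mem_span_of_eval_eq_zero {n : ℕ} {K : Type v} [Field K] (c : Fin n → K)
    (f : MvPolynomial (Fin n) K) (hf : eval c f = 0) :
    f ∈ Ideal.span (Set.range fun i => (X i - C (c i) : MvPolynomial (Fin n) K)) := by
  have key : ∀ f : MvPolynomial (Fin n) K, f - C (eval c f) ∈
      Ideal.span (Set.range fun i => (X i - C (c i) : MvPolynomial (Fin n) K)) := by
    intro f
    induction f using MvPolynomial.induction_on with
    | C a => simp
    | add p q hp hq =>
      have : p + q - C (eval c (p + q)) = (p - C (eval c p)) + (q - C (eval c q)) := by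
        simp only [map_add]; ring
      rw [this]; exact Ideal.add_mem _ hp hq
    | mul_X p i hp =>
      have : p * X i - C (eval c (p * X i)) = (p - C (eval c p)) * X i +
          C (eval c p) * (X i - C (c i)) := by
        simp only [map_mul, eval_X]; ring
      rw [this]
      exact Ideal.add_mem _ (Ideal.mul_mem_right _ _ hp)
        (Ideal.mul_mem_left _ _ (Ideal.subset_span ⟨i, rfl⟩))
  simpa [hf] using key f

/-- The form of `no_regular_sequence` at the point `pt K G`, for a quotient `S` of the polynomial
ring and elements `gs` whose radical contains the ideal; the equations `X i - 1`, `i ∈ G`, are added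
to `gs`. The variables `X e` for which `G ∪ {e}` is free are not nilpotent modulo these equations, as
one sees by restricting to the line through the point in direction `e`. -/
lemma no_regular_sequence_at_point {n : ℕ} {K : Type v} [Field K] {B : Finset (Finset (Fin n))}
    {S : Type u} [CommRing S] [IsNoetherianRing S]
    (π : MvPolynomial (Fin n) K →+* S) (hπ : Function.Surjective π) {G H : Finset (Fin n)}
    (hGH : G ⊆ H) (hH : FreeOf B H)
    (hmax : ∀ F, FreeOf B F → F.card ≤ H.card)
    (hex : ∀ a ∈ H, a ∉ G → ∀ b ∉ H, ¬ FreeOf B (insert a (insert b G)))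
    (h2 : 2 ≤ (H \ G).card) {b : Fin n} (hb : b ∉ H) (hbG : FreeOf B (insert b G))
    (P : Ideal S) [P.IsPrime] (hP : ∀ f, π f ∈ P ↔ eval (pt K G) f = 0)
    (hker : ∀ e, FreeOf B (insert e G) → ∀ f, π f = 0 → lineHom K G e f = 0)
    (gs : List (MvPolynomial (Fin n) K))
    (hgs : ∀ e, FreeOf B (insert e G) → ∀ g ∈ gs, lineHom K G e g = 0)
    (hI : ∀ T ∈ B, π (sqMon K T) ∈ (Ideal.ofList (gs.map π)).radical)
    (hdepth : ∃ rs : List (Localization.AtPrime P), rs.length = H.card + gs.length ∧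
      (∀ r ∈ rs, r ∈ maximalIdeal (Localization.AtPrime P)) ∧
        IsRegular (Localization.AtPrime P) rs) :
    False := by
  classical
  let A := Localization.AtPrime P
  have : IsNoetherianRing A := IsLocalization.isNoetherianRing P.primeCompl A inferInstance
  let φ : MvPolynomial (Fin n) K →+* A := (algebraMap S A).comp π
  have hφm : ∀ f, φ f ∈ maximalIdeal A ↔ eval (pt K G) f = 0 := fun f => by
    rw [← hP]
    exact IsLocalization.AtPrime.to_map_mem_maximal_iff A P (π f)
  let fs : List A := (G.toList.map fun i => φ (X i) - 1) ++ gs.map φ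
  have hfs1 : ∀ i ∈ G, φ (X i) - 1 ∈ fs := fun i hi =>
    List.mem_append_left _ (List.mem_map.2 ⟨i, by simpa using hi, rfl⟩)
  -- `X e` is the coordinate, hence nonzero, on a line where all the equations vanish
  have hline : ∀ e ∉ G, FreeOf B (insert e G) → φ (X e) ∉ (Ideal.ofList fs).radical := by
    intro e heG he hcon
    let θ₀ : S →+* Polynomial K := RingHom.liftOfSurjective π hπ ⟨lineHom K G e, fun f hf =>
      (RingHom.mem_ker).2 (hker e he f ((RingHom.mem_ker).1 hf))⟩
    have hθ₀ : ∀ f, θ₀ (π f) = lineHom K G e f := fun f =>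
      RingHom.liftOfRightInverse_comp_apply _ _ _ _ _
    let θ : S →+* FractionRing (Polynomial K) := (algebraMap (Polynomial K) _).comp θ₀
    have hunit : ∀ y : P.primeCompl, IsUnit (θ y) := by
      rintro ⟨y, hy⟩
      obtain ⟨f, rfl⟩ := hπ y
      refine IsUnit.mk0 _ fun h0 => hy ((hP f).2 ?_)
      have h1 : θ₀ (π f) = 0 := (FaithfulSMul.algebraMap_injective (Polynomial K)
        (FractionRing (Polynomial K))) (by simpa [θ] using h0)
      rw [← eval_zero_lineHom G e, ← hθ₀, h1, Polynomial.eval_zero]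
    let ψ : A →+* FractionRing (Polynomial K) := IsLocalization.lift hunit
    have hψ : ∀ f, ψ (φ f) = algebraMap (Polynomial K) _ (lineHom K G e f) := fun f => by
      change ψ (algebraMap S A (π f)) = _
      rw [IsLocalization.lift_eq, ← hθ₀]; rfl
    have hker : Ideal.ofList fs ≤ RingHom.ker ψ := by
      rw [Ideal.ofList, Ideal.span_le]
      intro x hx
      simp only [fs, Set.mem_ofPred_eq, List.mem_append, List.mem_map, Finset.mem_toList] at hx
      rw [SetLike.mem_coe, RingHom.mem_ker]
      rcases hx with ⟨i, hi, rfl⟩ | ⟨g, hg, rfl⟩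
      · rw [map_sub, hψ]; simp [lineHom, hi]
      · rw [hψ, hgs e he g hg, map_zero]
    have h1 := (RingHom.ker_isPrime ψ).radical_le_iff.2 hker hcon
    rw [RingHom.mem_ker, hψ] at h1
    simp [lineHom, heG] at h1
  obtain ⟨a, ha⟩ : (H \ G).Nonempty := Finset.card_pos.1 (by omega)
  rw [Finset.mem_sdiff] at ha
  have haG : FreeOf B (insert a G) := fun T hT hTs =>
    hH T hT (hTs.trans (Finset.insert_subset ha.1 hGH))
  have hbG' : b ∉ G := fun h => hb (hGH h)
  refine no_regular_sequence φ hGH hmax hex h2 fs ?_ (fun i hi => Ideal.subset_span (hfs1 i hi))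
    (fun j hj => (hφm _).2 (by simp [pt, hj])) ?_ ?_ ?_ ha.1 ha.2 hb (hline a ha.2 haG)
    (hline b hbG' hbG)
  · simp only [fs, List.mem_append, List.mem_map, Finset.mem_toList]
    rintro _ (⟨i, hi, rfl⟩ | ⟨g, hg, rfl⟩)
    · have : φ (X i) - 1 = φ (X i - 1) := by simp
      rw [this, hφm]
      simp [pt, hi]
    · rw [hφm, ← eval_zero_lineHom G a, hgs a haG g hg, Polynomial.eval_zero]
  · have h1 : maximalIdeal A = P.map (algebraMap S A) :=
      (Localization.AtPrime.map_eq_maximalIdeal (I := P)).symm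
    rw [h1, Ideal.map_le_iff_le_comap]
    intro s hs
    obtain ⟨f, rfl⟩ := hπ s
    have h2 := mem_span_of_eval_eq_zero _ f ((hP f).1 hs)
    rw [Ideal.mem_comap]
    change φ f ∈ _
    rw [← Ideal.mem_comap]
    refine (Ideal.span_le.2 ?_) h2
    rintro _ ⟨i, rfl⟩
    rw [SetLike.mem_coe, Ideal.mem_comap]
    by_cases hi : i ∈ G
    · refine Ideal.mem_sup_left (Ideal.subset_span ?_)
      simpa [pt, hi] using hfs1 i hi
    · refine Ideal.mem_sup_right (Ideal.subset_span ⟨i, hi, ?_⟩)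
      simp [pt, hi]
  · intro T hT
    obtain ⟨k, hk⟩ := hI T hT
    refine ⟨k, ?_⟩
    have := Ideal.mem_map_of_mem (algebraMap S A) hk
    rw [Ideal.map_ofList, List.map_map] at this
    rw [← map_pow]
    rw [← map_pow] at this
    refine Ideal.span_mono ?_ this
    intro x hx
    exact List.mem_append_right _ hx
  · obtain ⟨rs, h, h'⟩ := hdepth
    refine ⟨rs, ?_, h'⟩
    rw [h]
    simp only [fs, List.length_append, List.length_map, Finset.length_toList,
      Finset.card_sdiff_of_subset hGH]
    have := Finset.card_le_card hGH
    omega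

end Point

/-! ### Combinatorics of the matroid -/

section Comb

/-- The matroid on `Fin n` whose bases are the members of `B`. -/
noncomputable def basisMatroid {n : ℕ} (B : Finset (Finset (Fin n))) (hne : B.Nonempty)
    (hex : ExchangeProp B) : Matroid (Fin n) :=
  Matroid.ofIsBaseOfFinite (E := Set.univ) Set.finite_univ
    (fun s => ∃ T ∈ B, (T : Set (Fin n)) = s)
    (by obtain ⟨T, hT⟩ := hne; exact ⟨_, T, hT, rfl⟩)
    (by
      classical
      rintro _ _ ⟨S, hS, rfl⟩ ⟨T, hT, rfl⟩ a ⟨ha, haT⟩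
      obtain ⟨j, hj, hjS, hB⟩ := hex S hS T hT a ha haT
      exact ⟨j, ⟨hj, hjS⟩, _, hB, by simp⟩)
    (fun _ _ => Set.subset_univ _)

set_option maxHeartbeats 1000000 in
/-- If some free set has at least `d` elements, there are a largest free set `H` and a flat `G ⊆ H`
of corank two such that `H \ G` has at least two elements; `G ∪ {b}` with `b ∉ H` is free because
it spans another hyperplane above `G`. -/
lemma exists_not_connected {n d : ℕ} {B : Finset (Finset (Fin n))} (hne : B.Nonempty)
    (hcard : ∀ S ∈ B, S.card = d) (hexch : ExchangeProp B) (hfull : FullSupport B)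
    {F : Finset (Fin n)} (hF : FreeOf B F) (hdF : d ≤ F.card) :
    ∃ G H : Finset (Fin n), G ⊆ H ∧ FreeOf B H ∧ (∀ F, FreeOf B F → F.card ≤ H.card) ∧
      (∀ a ∈ H, a ∉ G → ∀ b ∉ H, ¬ FreeOf B (insert a (insert b G))) ∧ 2 ≤ (H \ G).card ∧
      ∃ b ∉ H, FreeOf B (insert b G) := by
  classical
  let M := basisMatroid B hne hexch
  have hbase : ∀ T : Finset (Fin n), M.IsBase (T : Set (Fin n)) ↔ T ∈ B := fun T => by
    change (∃ S ∈ B, (S : Set (Fin n)) = T) ↔ _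
    constructor
    · rintro ⟨S, hS, h⟩; rwa [← Finset.coe_injective h]
    · exact fun h => ⟨T, h, rfl⟩
  have hE : M.E = Set.univ := rfl
  have hspan : ∀ T : Finset (Fin n), M.Spanning (T : Set (Fin n)) ↔ ¬ FreeOf B T := fun T => by
    rw [Matroid.spanning_iff_exists_isBase_subset (by simp [hE])]
    simp only [FreeOf, not_forall, not_not]
    constructor
    · rintro ⟨S, ⟨S', hS', rfl⟩, h⟩; exact ⟨S', hS', by exact_mod_cast h⟩
    · rintro ⟨S, hS, h⟩; exact ⟨S, (hbase S).2 hS, by exact_mod_cast h⟩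
  obtain ⟨H, hH, hmax⟩ := Finset.exists_max_image
    (Finset.univ.filter fun F : Finset (Fin n) => FreeOf B F) Finset.card ⟨F, by simp [hF]⟩
  simp only [Finset.mem_filter, Finset.mem_univ, true_and] at hH hmax
  have hdH : d ≤ H.card := hdF.trans (hmax F hF)
  -- a largest free set `H` becomes spanning on adding any element: it is a hyperplane
  have hHspan : ∀ x ∉ H, M.Spanning (insert x (H : Set (Fin n))) := fun x hx => by
    have h := mt (hmax (insert x H)) (by rw [Finset.card_insert_of_notMem hx]; omega)
    rw [← hspan] at h
    simpa using h
  have hHns : ¬ M.Spanning (H : Set (Fin n)) := by rw [hspan, not_not]; exact hH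
  have hHcl : M.closure (H : Set (Fin n)) = H := by
    refine subset_antisymm (fun x hx => ?_) (M.subset_closure _ (by simp [hE]))
    by_contra hxH
    have h := hHspan x hxH
    rw [Matroid.spanning_iff_closure_eq (by simp [hE]),
      Matroid.closure_insert_eq_of_mem_closure hx,
      ← Matroid.spanning_iff_closure_eq (by simp [hE])] at h
    exact hHns h
  have hHdep : ¬ M.Indep (H : Set (Fin n)) := fun h => by
    obtain ⟨_, ⟨T, hT, rfl⟩, hHT⟩ := h.exists_isBase_superset
    have hHT' : H ⊆ T := by exact_mod_cast hHT
    have : H = T := Finset.eq_of_subset_of_card_le hHT' (by rw [hcard T hT]; exact hdH)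
    exact hH T hT this.ge
  obtain ⟨I, hI⟩ := M.exists_isBasis (H : Set (Fin n)) (by simp [hE])
  obtain ⟨e, heH, heI⟩ : ∃ e ∈ (H : Set (Fin n)), e ∉ I := by
    by_contra! hcon
    exact hHdep (by rw [← subset_antisymm hI.subset hcon]; exact hI.indep)
  have hecl : e ∈ M.closure I := hI.subset_closure heH
  have heloop : ¬ M.IsLoop e := by
    rw [Matroid.isLoop_iff_forall_notMem_isBase (by simp [hE])]
    push Not
    obtain ⟨S, hS, heS⟩ := hfull e
    exact ⟨S, (hbase S).2 hS, heS⟩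
  -- `c` is an element of the fundamental circuit of `e` other than `e`; it exists as `e` is no loop
  obtain ⟨c, hcI, hc⟩ : ∃ c ∈ I, e ∉ M.closure (I \ {c}) := by
    have hcirc := hI.indep.fundCircuit_isCircuit hecl heI
    by_contra! hcon
    apply heloop
    rw [← Matroid.singleton_isCircuit]
    convert hcirc
    refine subset_antisymm (by simpa using M.mem_fundCircuit e I) fun x hx => ?_
    by_contra hxe
    have hxI : x ∈ I := (M.fundCircuit_subset_insert e I hx).resolve_left hxe
    have hind := (hI.indep.mem_fundCircuit_iff hecl heI).1 hx
    refine ((hI.indep.subset Set.sdiff_subset).notMem_closure_iff_of_notMem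
      (fun h => heI h.1)).2 ?_ (hcon x hxI)
    rwa [Set.insert_sdiff_of_notMem _ (fun h => hxe h.symm)] at hind
  let G : Finset (Fin n) := Finset.univ.filter fun x => x ∈ M.closure (I \ {c})
  have hGcl : (G : Set (Fin n)) = M.closure (I \ {c}) := by ext; simp [G]
  have hGH : G ⊆ H := fun x hx => by
    have : x ∈ M.closure (H : Set (Fin n)) :=
      M.closure_subset_closure (Set.sdiff_subset.trans hI.subset) (by rw [← hGcl]; exact hx)
    rw [hHcl] at this; exact this
  have hcG : c ∉ M.closure (I \ {c}) := hI.indep.notMem_closure_sdiff_of_mem hcI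
  have hins : insert c (I \ {c}) = I := by simp [Set.insert_eq_of_mem hcI]
  have hGG : ∀ s, M.closure (insert s (G : Set (Fin n))) = M.closure (insert s (I \ {c})) :=
    fun s => by rw [hGcl, Matroid.closure_insert_closure_eq_closure_insert]
  refine ⟨G, H, hGH, hH, hmax, fun a ha haG b hb => ?_, ?_, ?_⟩
  · rw [← hspan]
    have haG' : a ∉ M.closure (I \ {c}) := by rw [← hGcl]; exact haG
    have hac : a ∈ M.closure (insert c (I \ {c})) := by
      rw [hins]; exact hI.subset_closure ha
    have hca := M.mem_closure_insert haG' hac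
    have hcl : (H : Set (Fin n)) ⊆ M.closure (insert a (G : Set (Fin n))) := by
      rw [hGG]
      refine hI.subset_closure.trans ?_
      refine M.closure_subset_closure_of_subset_closure ?_
      intro x hx
      by_cases hxc : x = c
      · rw [hxc]; exact hca
      · exact M.subset_closure _ (by simp [hE]) (Set.mem_insert_of_mem _ ⟨hx, hxc⟩)
    have h3 := hHspan b hb
    rw [Matroid.spanning_iff_ground_subset_closure (by simp [hE])] at h3 ⊢
    refine h3.trans (M.closure_subset_closure_of_subset_closure ?_)
    simp only [Finset.coe_insert]
    refine Set.insert_subset (M.subset_closure _ (by simp [hE]) (by simp)) (hcl.trans ?_)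
    exact M.closure_subset_closure (Set.insert_subset_insert (Set.subset_insert _ _))
  · have hce : c ≠ e := fun h => heI (h ▸ hcI)
    rw [← Finset.card_pair hce]
    refine Finset.card_le_card ?_
    intro x hx
    rw [Finset.mem_insert, Finset.mem_singleton] at hx
    rw [Finset.mem_sdiff]
    rcases hx with rfl | rfl
    · exact ⟨hI.subset hcI, by simpa [G] using hcG⟩
    · exact ⟨heH, by simpa [G] using hc⟩
  · obtain ⟨T, hT⟩ := hne
    obtain ⟨b, -, hb⟩ := Finset.not_subset.1 (hH T hT)
    refine ⟨b, hb, ?_⟩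
    by_contra hcon
    rw [← hspan, Matroid.spanning_iff_ground_subset_closure (by simp [hE])] at hcon
    have h1 : c ∈ M.closure (insert b (I \ {c})) := by
      rw [← hGG, ← Finset.coe_insert]; exact hcon (by simp [hE])
    have h2 := M.mem_closure_insert hcG h1
    rw [hins] at h2
    have h3 : b ∈ M.closure (H : Set (Fin n)) := M.closure_subset_closure hI.subset h2
    rw [hHcl] at h3
    exact hb h3

end Comb

/-! ### Heights and arithmetical rank of square-free monomial ideals -/

section Height
universe u v

/-- Setting the variables in `S` to zero. -/
noncomputable def killVars {n : ℕ} (K : Type v) [Field K] (S : Finset (Fin n)) :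
    MvPolynomial (Fin n) K →ₐ[K] MvPolynomial {i // i ∉ S} K :=
  aeval fun i => if h : i ∈ S then 0 else X ⟨i, h⟩

lemma killVars_surjective {n : ℕ} (K : Type v) [Field K] (S : Finset (Fin n)) :
    Function.Surjective (killVars K S) := by
  intro f
  refine ⟨rename Subtype.val f, ?_⟩
  have : (killVars K S).comp (rename Subtype.val) = AlgHom.id K _ := by
    ext i
    simp [killVars, i.2]
  exact congrArg (fun g => g f) this

lemma killVars_eq_zero_iff {n : ℕ} {K : Type v} [Field K] (S : Finset (Fin n))
    (f : MvPolynomial (Fin n) K) : killVars K S f = 0 ↔ f ∈ varIdeal K S := by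
  have hX : ∀ i ∈ S, (X i : MvPolynomial (Fin n) K) ∈ varIdeal K S := fun i hi =>
    Ideal.subset_span ⟨i, hi, rfl⟩
  constructor
  · intro h
    have key : ∀ f : MvPolynomial (Fin n) K,
        f - rename Subtype.val (killVars K S f) ∈ varIdeal K S := by
      intro f
      induction f using MvPolynomial.induction_on with
      | C a => simp [killVars]
      | add p q hp hq =>
        have := Ideal.add_mem _ hp hq
        simp only [map_add]
        convert this using 1; ring
      | mul_X p i hp =>
        by_cases hi : i ∈ S
        · have : killVars K S (p * X i) = 0 := by simp [killVars, hi]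
          rw [this, map_zero, sub_zero]
          exact Ideal.mul_mem_left _ _ (hX i hi)
        · have : rename Subtype.val (killVars K S (p * X i)) =
              rename Subtype.val (killVars K S p) * X i := by simp [killVars, hi]
          rw [this, ← sub_mul]
          exact Ideal.mul_mem_right _ _ hp
    simpa [h] using key f
  · intro h
    have : varIdeal K S ≤ RingHom.ker (killVars K S) := by
      rw [varIdeal, Ideal.span_le]
      rintro _ ⟨i, hi, rfl⟩
      rw [SetLike.mem_coe, RingHom.mem_ker]
      have : i ∈ S := hi
      simp [killVars, this]
    exact this h

lemma X_mem_varIdeal_iff {n : ℕ} {K : Type v} [Field K] {S : Finset (Fin n)} {i : Fin n} :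
    (X i : MvPolynomial (Fin n) K) ∈ varIdeal K S ↔ i ∈ S := by
  rw [← killVars_eq_zero_iff]
  by_cases h : i ∈ S <;> simp [killVars, h]

instance varIdeal_isPrime {n : ℕ} (K : Type v) [Field K] (S : Finset (Fin n)) :
    (varIdeal K S).IsPrime := by
  have : varIdeal K S = RingHom.ker (killVars K S) := by
    ext f; rw [RingHom.mem_ker, killVars_eq_zero_iff]
  rw [this]
  exact RingHom.ker_isPrime _

lemma card_le_height_varIdeal {n : ℕ} {K : Type v} [Field K] (S : Finset (Fin n)) :
    (S.card : ℕ∞) ≤ (varIdeal K S).height := by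
  classical
  induction S using Finset.induction_on with
  | empty => simp
  | insert i S hi ih =>
    rw [Finset.card_insert_of_notMem hi, Nat.cast_add, Nat.cast_one]
    refine le_trans (add_le_add_left ih 1) (Ideal.height_add_one_le_of_lt_of_isPrime ?_)
    refine lt_of_le_of_ne (Ideal.span_mono (Set.image_mono (by simp))) fun h => hi ?_
    rw [← X_mem_varIdeal_iff (K := K), h, X_mem_varIdeal_iff]
    exact Finset.mem_insert_self _ _

lemma height_varIdeal_le {n : ℕ} {K : Type v} [Field K] (S : Finset (Fin n)) :
    (varIdeal K S).height ≤ S.card := by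
  have h2 : varIdeal K S ∈ (varIdeal K S).minimalPrimes := by
    rw [Ideal.minimalPrimes_eq_subsingleton_self]; rfl
  refine (Ideal.height_le_card_of_mem_minimalPrimes_span (S.finite_toSet.image _) h2).trans ?_
  have h3 := Set.ncard_image_le (f := fun i => (X i : MvPolynomial (Fin n) K)) S.finite_toSet
  rw [Set.ncard_coe_finset] at h3
  exact_mod_cast h3

lemma sqMon_mem_varIdeal {n : ℕ} {K : Type v} [Field K] {B : Finset (Finset (Fin n))}
    {F T : Finset (Fin n)} (hF : FreeOf B F) (hT : T ∈ B) : sqMon K T ∈ varIdeal K Fᶜ := by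
  obtain ⟨i, hi, hiF⟩ := Finset.not_subset.1 (hF T hT)
  rw [sqMon]
  exact Ideal.mem_of_dvd _ (Finset.dvd_prod_of_mem _ hi) (Ideal.subset_span ⟨i, by simpa using hiF, rfl⟩)

/-- The variables outside a prime `Q` over the ideal form a free set. -/
lemma exists_varIdeal_le {n : ℕ} {K : Type v} [Field K] {B : Finset (Finset (Fin n))}
    (Q : Ideal (MvPolynomial (Fin n) K)) [Q.IsPrime]
    (hQ : Ideal.span (sqMon K '' (B : Set (Finset (Fin n)))) ≤ Q) :
    ∃ F, FreeOf B F ∧ varIdeal K Fᶜ ≤ Q := by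
  classical
  refine ⟨Finset.univ.filter fun j => (X j : MvPolynomial (Fin n) K) ∉ Q, fun T hT hTF => ?_, ?_⟩
  · have h1 : sqMon K T ∈ Q := hQ (Ideal.subset_span ⟨T, hT, rfl⟩)
    rw [sqMon] at h1
    obtain ⟨i, hi, hiQ⟩ := (Ideal.IsPrime.prod_mem_iff (p := Q)).1 h1
    have := hTF hi
    simp only [Finset.mem_filter] at this
    exact this.2 hiQ
  · rw [varIdeal, Ideal.span_le]
    rintro _ ⟨i, hi, rfl⟩
    simpa using hi

lemma idealHeight_eq {n : ℕ} {K : Type v} [Field K] {B : Finset (Finset (Fin n))}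
    {H : Finset (Fin n)} (hH : FreeOf B H) (hmax : ∀ F, FreeOf B F → F.card ≤ H.card) :
    idealHeight (Ideal.span (sqMon K '' (B : Set (Finset (Fin n))))) = (Hᶜ.card : ℕ∞) := by
  apply le_antisymm
  · refine (iInf₂_le (⟨varIdeal K Hᶜ, inferInstance⟩ : PrimeSpectrum (MvPolynomial (Fin n) K))
      ?_).trans ?_
    · rw [Ideal.span_le]
      rintro _ ⟨T, hT, rfl⟩
      exact sqMon_mem_varIdeal hH hT
    · rw [← PrimeSpectrum.height_eq_orderHeight]
      exact height_varIdeal_le _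
  · refine le_iInf₂ fun p hp => ?_
    rw [← PrimeSpectrum.height_eq_orderHeight]
    obtain ⟨F, hF, hle⟩ := exists_varIdeal_le p.asIdeal hp
    refine le_trans ?_ ((card_le_height_varIdeal Fᶜ).trans (Ideal.height_mono hle))
    have := hmax F hF
    rw [Finset.card_compl, Finset.card_compl]
    exact_mod_cast Nat.sub_le_sub_left this _

/-- Krull's height theorem. -/
lemma idealHeight_le_araIdeal {A : Type u} [CommRing A] [IsNoetherianRing A] {I : Ideal A}
    (hI : I ≠ ⊤) {m : ℕ} (f : Fin m → A)
    (hf : (Ideal.span (Set.range f)).radical = I.radical) : idealHeight I ≤ m := by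
  have hne : Ideal.span (Set.range f) ≠ ⊤ := fun h => hI (by
    rw [← Ideal.radical_eq_top, ← hf, Ideal.radical_eq_top, h])
  obtain ⟨p, hp⟩ := Ideal.nonempty_minimalPrimes hne
  have hpp := hp.1.1
  have hle : I ≤ p := by
    refine Ideal.le_radical.trans ?_
    rw [← hf]
    exact hpp.radical_le_iff.2 hp.1.2
  refine (iInf₂_le (⟨p, hpp⟩ : PrimeSpectrum A) hle).trans ?_
  rw [← PrimeSpectrum.height_eq_orderHeight]
  refine (Ideal.height_le_card_of_mem_minimalPrimes_span (Set.finite_range f) hp).trans ?_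
  have : (Set.range f).ncard ≤ m := by
    rw [← Set.image_univ]
    exact (Set.ncard_image_le Set.finite_univ).trans (by simp [Set.ncard_univ])
  exact_mod_cast this

lemma exists_araIdeal {A : Type u} [CommRing A] [IsNoetherianRing A] (I : Ideal A) :
    ∃ f : Fin (araIdeal I) → A, (Ideal.span (Set.range f)).radical = I.radical := by
  obtain ⟨S, hS⟩ := IsNoetherian.noetherian I
  refine Nat.sInf_mem (s := {m : ℕ | ∃ f : Fin m → A, (Ideal.span (Set.range f)).radical = I.radical})
    ⟨S.card, fun i => (S.equivFin.symm i : A), ?_⟩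
  have : Set.range (fun i => (S.equivFin.symm i : A)) = S := by
    rw [← Function.comp_def, EquivLike.range_comp]; simp
  rw [this]
  exact congrArg Ideal.radical hS

end Height

/-! ### Maximal ideals generated by regular sequences -/

section MaxReg
open RingTheory.Sequence
universe u

/-- Every maximal ideal of `A` is generated by a weakly regular sequence of length `k`. -/
def MaxRegular (A : Type u) [CommRing A] (k : ℕ) : Prop :=
  ∀ P : Ideal A, P.IsMaximal →
    ∃ rs : List A, rs.length = k ∧ IsWeaklyRegular A rs ∧ P = Ideal.ofList rs

lemma MaxRegular.of_equiv {A A' : Type*} [CommRing A] [CommRing A'] {k : ℕ} (e : A ≃+* A')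
    (h : MaxRegular A k) : MaxRegular A' k := by
  intro P hP
  have : (P.comap (e : A →+* A')).IsMaximal :=
    Ideal.comap_isMaximal_of_surjective _ e.surjective
  obtain ⟨rs, hl, hr, hPe⟩ := h _ this
  refine ⟨rs.map (e : A →+* A'), by simpa using hl, ?_, ?_⟩
  · refine (AddEquiv.isWeaklyRegular_congr (e := e.toAddEquiv) ?_).1 hr
    refine List.forall₂_map_right_iff.mpr (List.forall₂_same.mpr fun r _ x => ?_)
    simp
  · rw [← Ideal.map_ofList, ← hPe]
    exact (Ideal.map_comap_of_surjective _ e.surjective P).symm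

lemma maxRegular_field (K : Type u) [Field K] : MaxRegular K 0 := by
  intro P hP
  refine ⟨[], rfl, .nil K K, ?_⟩
  rw [Ideal.ofList_nil]
  exact (Ideal.eq_bot_or_top P).resolve_right hP.ne_top

/-- A maximal ideal of `A[X]` contracts to a maximal ideal `q` of the Jacobson ring `A`, and is
generated by `q` and one monic polynomial. -/
lemma MaxRegular.polynomial {A : Type u} [CommRing A] [IsJacobsonRing A] {k : ℕ}
    (h : MaxRegular A k) : MaxRegular (Polynomial A) (k + 1) := by
  intro P hP
  have hq : (P.comap (Polynomial.C : A →+* Polynomial A)).IsMaximal :=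
    Polynomial.isMaximal_comap_C_of_isJacobsonRing P
  obtain ⟨rs, hl, hr, hPe⟩ := h _ hq
  have hqP : (P.comap (Polynomial.C : A →+* Polynomial A)).map Polynomial.C ≤ P :=
    Ideal.map_comap_le
  have hne : P ≠ (P.comap (Polynomial.C : A →+* Polynomial A)).map Polynomial.C := by
    intro he
    have hX : (Polynomial.X : Polynomial A) ∉ P := by
      intro hX
      rw [he, Ideal.mem_map_C_iff] at hX
      exact hq.ne_top ((Ideal.eq_top_iff_one _).2 (by simpa using hX 1))
    obtain ⟨g, p, hp, hg⟩ := hP.exists_inv hX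
    rw [he, Ideal.mem_map_C_iff] at hp
    have := congrArg (fun f => Polynomial.coeff f 0) hg
    simp only [Polynomial.coeff_add, Polynomial.mul_coeff_zero, Polynomial.coeff_X_zero,
      mul_zero, zero_add, Polynomial.coeff_one_zero] at this
    exact hq.ne_top ((Ideal.eq_top_iff_one _).2 (this ▸ hp 0))
  obtain ⟨f, hf, hPf⟩ := Polynomial.exists_monic_span_sup_map_eq A P hq hne
  have hmap : Ideal.ofList (rs.map (algebraMap A (Polynomial A))) =
      (P.comap (Polynomial.C : A →+* Polynomial A)).map Polynomial.C := by
    rw [← Ideal.map_ofList, ← hPe]; rfl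
  refine ⟨rs.map (algebraMap A (Polynomial A)) ++ [f], by simp [hl], ?_, ?_⟩
  · rw [isWeaklyRegular_append_iff, isWeaklyRegular_singleton_iff, hmap, smul_eq_mul,
      Ideal.mul_top]
    refine ⟨hr.of_flat, ?_⟩
    have hpr : ((P.comap (Polynomial.C : A →+* Polynomial A)).map
      (Polynomial.C : A →+* Polynomial A)).IsPrime := by
        have := hq.isPrime
        exact Ideal.isPrime_map_C_of_isPrime
    have hfn : f ∉ (P.comap (Polynomial.C : A →+* Polynomial A)).map
        (Polynomial.C : A →+* Polynomial A) := by
      intro hm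
      rw [Ideal.mem_map_C_iff] at hm
      have := hm f.natDegree
      rw [hf.coeff_natDegree] at this
      exact hq.ne_top ((Ideal.eq_top_iff_one _).2 this)
    rw [isSMulRegular_iff_right_eq_zero_of_smul]
    intro x hx
    induction x using Submodule.Quotient.induction_on with
    | _ g =>
      rw [← Submodule.Quotient.mk_smul, Submodule.Quotient.mk_eq_zero, smul_eq_mul] at hx
      rw [Submodule.Quotient.mk_eq_zero]
      exact (hpr.mem_or_mem hx).resolve_left hfn
  · rw [Ideal.ofList_append, hmap, Ideal.ofList_singleton]
    exact hPf

lemma maxRegular_fin (K : Type u) [Field K] (n : ℕ) :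
    MaxRegular (MvPolynomial (Fin n) K) n := by
  induction n with
  | zero => exact (maxRegular_field K).of_equiv (isEmptyAlgEquiv K (Fin 0)).symm.toRingEquiv
  | succ n ih => exact ih.polynomial.of_equiv (finSuccEquiv K n).symm.toRingEquiv

lemma maxRegular_mvPolynomial (K : Type u) [Field K] (σ : Type*) [Fintype σ] :
    MaxRegular (MvPolynomial σ K) (Fintype.card σ) :=
  (maxRegular_fin K _).of_equiv (renameEquiv K (Fintype.equivFin σ).symm).toRingEquiv

/-- At a maximal ideal `P` the localisation of a ring with `MaxRegular A k` has depth at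
least `k`. -/
lemma MaxRegular.localization {A : Type u} [CommRing A] [IsNoetherianRing A] {k : ℕ}
    (h : MaxRegular A k) (P : Ideal A) [hP : P.IsMaximal] :
    ∃ rs : List (Localization.AtPrime P), rs.length = k ∧
      (∀ r ∈ rs, r ∈ IsLocalRing.maximalIdeal (Localization.AtPrime P)) ∧
      IsRegular (Localization.AtPrime P) rs ∧
      Ideal.ofList rs = IsLocalRing.maximalIdeal (Localization.AtPrime P) := by
  obtain ⟨rs, hl, hr, hPe⟩ := h P hP
  have hof : Ideal.ofList (rs.map (algebraMap A (Localization.AtPrime P))) =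
      IsLocalRing.maximalIdeal (Localization.AtPrime P) := by
    rw [← Ideal.map_ofList, ← hPe, Localization.AtPrime.map_eq_maximalIdeal]
  refine ⟨rs.map (algebraMap A (Localization.AtPrime P)), by simpa using hl, ?_, ?_, hof⟩
  · intro r hr
    rw [← hof]
    exact Ideal.subset_span hr
  · refine hr.isRegular_of_isLocalization_of_mem (Localization.AtPrime P) P fun r hr => ?_
    rw [hPe]
    exact Ideal.subset_span hr

end MaxReg

/-! ### Arithmetical rank of square-free Veronese ideals -/

section Uniform
universe v

lemma mem_of_card_eq {n d : ℕ} {B : Finset (Finset (Fin n))} (hcard : ∀ S ∈ B, S.card = d)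
    (hfree : ∀ F, FreeOf B F → F.card < d) {T : Finset (Fin n)} (hT : T.card = d) : T ∈ B := by
  by_contra h
  refine absurd (hfree T fun S hS hST => h ?_) (by omega)
  have := Finset.eq_of_subset_of_card_le hST (by rw [hcard S hS, hT])
  exact this ▸ hS

lemma exists_free_card {n d : ℕ} (hd : 1 ≤ d) {B : Finset (Finset (Fin n))} (hne : B.Nonempty)
    (hcard : ∀ S ∈ B, S.card = d) : ∃ H, FreeOf B H ∧ H.card + 1 = d := by
  obtain ⟨S, hS⟩ := hne
  obtain ⟨H, -, hH⟩ := Finset.exists_subset_card_eq (s := S) (n := d - 1) (by rw [hcard S hS]; omega)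
  refine ⟨H, fun T hT hTH => ?_, by omega⟩
  have := Finset.card_le_card hTH
  rw [hcard T hT] at this
  omega

lemma sqMon_mem_of_subset {n : ℕ} {K : Type v} [Field K] {J : Ideal (MvPolynomial (Fin n) K)}
    {S T : Finset (Fin n)} (h : S ⊆ T) (hS : sqMon K S ∈ J) : sqMon K T ∈ J :=
  Ideal.mem_of_dvd _ (Finset.prod_dvd_prod_of_subset _ _ _ h) hS

/-- A square-free Veronese ideal is, up to radical, generated by the elementary symmetric
polynomials of degree at least `d`: modulo a prime containing these, the elementary symmetric
polynomial whose degree is the number of surviving variables is the product of those variables. -/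
lemma araIdeal_le {n d : ℕ} (K : Type v) [Field K] {B : Finset (Finset (Fin n))}
    (hcard : ∀ S ∈ B, S.card = d) (hfree : ∀ F, FreeOf B F → F.card < d) :
    araIdeal (Ideal.span (sqMon K '' (B : Set (Finset (Fin n))))) ≤ n + 1 - d := by
  classical
  refine Nat.sInf_le ⟨fun j => ∑ t ∈ Finset.powersetCard (d + j) Finset.univ, sqMon K t, ?_⟩
  apply le_antisymm
  · refine Ideal.radical_mono (Ideal.span_le.2 ?_)
    rintro _ ⟨j, rfl⟩
    refine Ideal.sum_mem _ fun t ht => ?_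
    rw [Finset.mem_powersetCard_univ] at ht
    obtain ⟨S, hSt, hS⟩ := Finset.exists_subset_card_eq (s := t) (n := d) (by omega)
    exact sqMon_mem_of_subset hSt (Ideal.subset_span ⟨S, mem_of_card_eq hcard hfree hS, rfl⟩)
  · rw [Ideal.radical_le_radical_iff, Ideal.span_le]
    rintro _ ⟨T, hT, rfl⟩
    rw [SetLike.mem_coe, Ideal.radical_eq_sInf, Ideal.mem_sInf]
    rintro Q ⟨hle, hQ⟩
    have hprod : ∀ t : Finset (Fin n), sqMon K t ∈ Q ↔
        ∃ i ∈ t, (X i : MvPolynomial (Fin n) K) ∈ Q := fun t => by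
      rw [sqMon, hQ.prod_mem_iff]
    let W : Finset (Fin n) := Finset.univ.filter fun i => (X i : MvPolynomial (Fin n) K) ∉ Q
    have hW : W.card < d := by
      by_contra hcon
      have hWn : W.card ≤ n := by simpa using Finset.card_le_univ W
      have h1 : ∑ t ∈ Finset.powersetCard W.card Finset.univ, sqMon K t ∈ Q := by
        refine hle (Ideal.subset_span ⟨⟨W.card - d, by omega⟩, ?_⟩)
        simp only
        congr 2
        omega
      rw [← Finset.add_sum_erase _ _ (a := W) (by simp)] at h1
      have h2 : sqMon K W ∈ Q := by
        refine (Ideal.add_mem_iff_left _ (Ideal.sum_mem _ fun t ht => ?_)).1 h1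
        rw [Finset.mem_erase, Finset.mem_powersetCard_univ] at ht
        by_contra h3
        rw [hprod] at h3
        push Not at h3
        refine ht.1 (Finset.eq_of_subset_of_card_le (fun i hi => ?_) ht.2.ge)
        simpa [W] using h3 i hi
      obtain ⟨i, hi, hiQ⟩ := (hprod W).1 h2
      exact (Finset.mem_filter.1 hi).2 hiQ
    rw [hprod]
    by_contra h3
    push Not at h3
    have : T ⊆ W := fun i hi => by simpa [W] using h3 i hi
    have := Finset.card_le_card this
    rw [hcard T hT] at this
    omega

lemma span_sqMon_le_varIdeal {n : ℕ} {K : Type v} [Field K] {B : Finset (Finset (Fin n))}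
    {F : Finset (Fin n)} (hF : FreeOf B F) :
    Ideal.span (sqMon K '' (B : Set (Finset (Fin n)))) ≤ varIdeal K Fᶜ := by
  rw [Ideal.span_le]
  rintro _ ⟨T, hT, rfl⟩
  exact sqMon_mem_varIdeal hF hT

lemma span_sqMon_ne_top {n : ℕ} {K : Type v} [Field K] {B : Finset (Finset (Fin n))}
    {F : Finset (Fin n)} (hF : FreeOf B F) :
    Ideal.span (sqMon K '' (B : Set (Finset (Fin n)))) ≠ ⊤ := fun h =>
  (varIdeal_isPrime K Fᶜ).ne_top (top_le_iff.1 (h ▸ span_sqMon_le_varIdeal hF))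

lemma araIdeal_eq_idealHeight {n d : ℕ} (hd : 1 ≤ d) (K : Type v) [Field K]
    {B : Finset (Finset (Fin n))} (hne : B.Nonempty)
    (hcard : ∀ S ∈ B, S.card = d) (hfree : ∀ F, FreeOf B F → F.card < d) :
    (araIdeal (Ideal.span (sqMon K '' (B : Set (Finset (Fin n))))) : ℕ∞) =
      idealHeight (Ideal.span (sqMon K '' (B : Set (Finset (Fin n))))) := by
  obtain ⟨H, hH, hHd⟩ := exists_free_card hd hne hcard
  apply le_antisymm
  · rw [idealHeight_eq hH fun F hF => by have := hfree F hF; omega]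
    refine Nat.cast_le.2 ((araIdeal_le K hcard hfree).trans ?_)
    rw [Finset.card_compl, Fintype.card_fin]
    omega
  · obtain ⟨f, hf⟩ := exists_araIdeal (Ideal.span (sqMon K '' (B : Set (Finset (Fin n)))))
    exact idealHeight_le_araIdeal (span_sqMon_ne_top hH) f hf

end Uniform

/-! ### The case of a large free set -/

section NonUniform
open IsLocalRing RingTheory.Sequence
universe u v

lemma maxRegular_quotient_varIdeal {n : ℕ} (K : Type v) [Field K] (H : Finset (Fin n)) :
    MaxRegular (MvPolynomial (Fin n) K ⧸ varIdeal K Hᶜ) H.card := by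
  have h1 : varIdeal K Hᶜ = RingHom.ker (killVars K Hᶜ).toRingHom := by
    ext f
    exact (killVars_eq_zero_iff Hᶜ f).symm
  have h2 := maxRegular_mvPolynomial K {i // i ∉ Hᶜ}
  have h3 : Fintype.card {i // i ∉ Hᶜ} = H.card := by simp
  rw [h3] at h2
  exact h2.of_equiv ((RingHom.quotientKerEquivOfSurjective
    (f := (killVars K Hᶜ).toRingHom) (killVars_surjective K Hᶜ)).symm.trans
      (Ideal.quotEquivOfEq h1.symm))

lemma MaxRegular.le_height {A : Type u} [CommRing A] [IsNoetherianRing A] {k : ℕ}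
    (h : MaxRegular A k) (P : Ideal A) [hP : P.IsMaximal] : (k : ℕ∞) ≤ P.height := by
  obtain ⟨rs, hl, -, hr, -⟩ := h.localization P
  have : IsNoetherianRing (Localization.AtPrime P) :=
    IsLocalization.isNoetherianRing P.primeCompl _ inferInstance
  have h1 := ringKrullDim_add_length_eq_ringKrullDim_of_isRegular rs hr
  have h2 : Nontrivial (Localization.AtPrime P ⧸ Ideal.ofList rs) := by
    have := hr.2
    rw [Ideal.Quotient.nontrivial_iff]
    intro h
    exact this (by simp [h])
  have h3 : (0 : WithBot ℕ∞) ≤ ringKrullDim (Localization.AtPrime P ⧸ Ideal.ofList rs) :=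
    ringKrullDim_nonneg_of_nontrivial
  rw [IsLocalization.AtPrime.ringKrullDim_eq_height P (Localization.AtPrime P), hl] at h1
  have h4 : (k : WithBot ℕ∞) ≤ (P.height : WithBot ℕ∞) := by
    rw [← h1]
    exact le_add_of_nonneg_left h3
  exact_mod_cast h4

lemma height_comap_of_surjective_le {A A' : Type*} [CommRing A] [CommRing A'] (f : A →+* A')
    (hf : Function.Surjective f) (P : Ideal A') [hP : P.IsPrime] :
    P.height ≤ (P.comap f).height := by
  have h0 := PrimeSpectrum.height_eq_orderHeight (⟨P, hP⟩ : PrimeSpectrum A')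
  have h1 := PrimeSpectrum.height_eq_orderHeight (PrimeSpectrum.comap f ⟨P, hP⟩)
  change P.height = _ at h0
  change (P.comap f).height = _ at h1
  rw [h0, h1]
  refine Order.height_le_height_apply_of_strictMono (PrimeSpectrum.comap f) ?_ ⟨P, hP⟩
  refine (Monotone.strictMono_of_injective (fun p q h => Ideal.comap_mono h) ?_)
  exact PrimeSpectrum.comap_injective_of_surjective f hf

lemma le_ringKrullDim_localization {n : ℕ} {K : Type v} [Field K]
    {I : Ideal (MvPolynomial (Fin n) K)} {H : Finset (Fin n)} (hIH : I ≤ varIdeal K Hᶜ)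
    (P : Ideal (MvPolynomial (Fin n) K ⧸ I)) [hP : P.IsMaximal]
    (hHP : varIdeal K Hᶜ ≤ P.comap (Ideal.Quotient.mk I)) :
    (H.card : WithBot ℕ∞) ≤ ringKrullDim (Localization.AtPrime P) := by
  let m := P.comap (Ideal.Quotient.mk I)
  have hm : m.IsMaximal := Ideal.comap_isMaximal_of_surjective _ Ideal.Quotient.mk_surjective
  let P' := m.map (Ideal.Quotient.mk (varIdeal K Hᶜ))
  have hcm : P'.comap (Ideal.Quotient.mk (varIdeal K Hᶜ)) = m := by
    rw [Ideal.comap_map_of_surjective _ Ideal.Quotient.mk_surjective, ← RingHom.ker_eq_comap_bot,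
      Ideal.mk_ker, sup_eq_left]
    exact hHP
  have hP' : P'.IsMaximal := by
    refine (Ideal.map_eq_top_or_isMaximal_of_surjective _ Ideal.Quotient.mk_surjective
      hm).resolve_left fun h => hm.ne_top ?_
    rw [← hcm]
    rw [show P' = ⊤ from h, Ideal.comap_top]
  have hcf : P'.comap (Ideal.Quotient.factor hIH) = P := by
    apply Ideal.comap_injective_of_surjective _ (Ideal.Quotient.mk_surjective (I := I))
    rw [Ideal.comap_comap, Ideal.Quotient.factor_comp_mk, hcm]
  have h1 := (maxRegular_quotient_varIdeal K H).le_height P'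
  have h2 := height_comap_of_surjective_le (Ideal.Quotient.factor hIH)
    (Ideal.Quotient.factor_surjective hIH) P'
  rw [hcf] at h2
  rw [IsLocalization.AtPrime.ringKrullDim_eq_height P (Localization.AtPrime P)]
  exact_mod_cast h1.trans h2

/-- The supremum defining the depth is attained at every finite level, and a regular sequence may be
truncated to the required length. -/
lemma IsCohenMacaulayRing.exists_regular {A : Type u} [CommRing A] [IsNoetherianRing A]
    (h : IsCohenMacaulayRing A) (P : Ideal A) [hP : P.IsMaximal] {k : ℕ}
    (hk : (k : WithBot ℕ∞) ≤ ringKrullDim (Localization.AtPrime P)) :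
    ∃ rs : List (Localization.AtPrime P), rs.length = k ∧
      (∀ r ∈ rs, r ∈ maximalIdeal (Localization.AtPrime P)) ∧
        IsRegular (Localization.AtPrime P) rs := by
  have h1 := h P hP
  rw [← h1] at hk
  have hk' : (k : ℕ∞) ≤ ringDepth (Localization.AtPrime P)
      (maximalIdeal (Localization.AtPrime P)) := by exact_mod_cast hk
  have : ∃ rs : List (Localization.AtPrime P), k ≤ rs.length ∧
      (∀ r ∈ rs, r ∈ maximalIdeal (Localization.AtPrime P)) ∧
        IsRegular (Localization.AtPrime P) rs := by
    rcases Nat.eq_zero_or_pos k with rfl | hpos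
    · exact ⟨[], by simp, by simp, IsRegular.nil _ _⟩
    · have hlt : ((k - 1 : ℕ) : ℕ∞) < ringDepth (Localization.AtPrime P)
          (maximalIdeal (Localization.AtPrime P)) :=
        (Nat.cast_lt.2 (by omega)).trans_le hk'
      rw [ringDepth, lt_iSup_iff] at hlt
      obtain ⟨⟨rs, hm, hr⟩, hl⟩ := hlt
      have hl' := Nat.cast_lt.1 hl
      exact ⟨rs, by simp only at hl'; omega, hm, hr⟩
  obtain ⟨rs, hl, hm, hr⟩ := this
  refine ⟨rs.take k, by simpa using hl, fun r hr' => hm r (List.mem_of_mem_take hr'), ?_⟩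
  have : IsNoetherianRing (Localization.AtPrime P) :=
    IsLocalization.isNoetherianRing P.primeCompl _ inferInstance
  refine IsRegular.of_isWeaklyRegular_of_mem_maximalIdeal (Localization.AtPrime P)
    (fun r hr' => hm r (List.mem_of_mem_take hr')) ?_
  have h2 := hr.1
  rw [← List.take_append_drop k rs, isWeaklyRegular_append_iff] at h2
  exact h2.1

/-- The maximal ideal of the point `pt K G`. -/
noncomputable def ptIdeal {n : ℕ} (K : Type v) [Field K] (G : Finset (Fin n)) :
    Ideal (MvPolynomial (Fin n) K) := RingHom.ker (eval (pt K G))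

instance ptIdeal_isMaximal {n : ℕ} (K : Type v) [Field K] (G : Finset (Fin n)) :
    (ptIdeal K G).IsMaximal :=
  RingHom.ker_isMaximal_of_surjective _ fun a => ⟨C a, by simp⟩

lemma varIdeal_le_ptIdeal {n : ℕ} (K : Type v) [Field K] {G H : Finset (Fin n)} (h : G ⊆ H) :
    varIdeal K Hᶜ ≤ ptIdeal K G := by
  rw [varIdeal, Ideal.span_le]
  rintro _ ⟨i, hi, rfl⟩
  have : i ∉ G := fun hG => by simp [h hG] at hi
  simp [ptIdeal, RingHom.mem_ker, pt, this]

lemma lineHom_eq_zero_of_mem {n : ℕ} {K : Type v} [Field K] {B : Finset (Finset (Fin n))}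
    {G : Finset (Fin n)} {e : Fin n} (h : FreeOf B (insert e G)) {f : MvPolynomial (Fin n) K}
    (hf : f ∈ (Ideal.span (sqMon K '' (B : Set (Finset (Fin n))))).radical) :
    lineHom K G e f = 0 := by
  have hle : Ideal.span (sqMon K '' (B : Set (Finset (Fin n)))) ≤ RingHom.ker (lineHom K G e) := by
    rw [Ideal.span_le]
    rintro _ ⟨T, hT, rfl⟩
    exact lineHom_sqMon (h T hT)
  obtain ⟨k, hk⟩ := hf
  have := hle hk
  rw [RingHom.mem_ker, map_pow] at this
  exact eq_zero_of_pow_eq_zero this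

/-- If `I` is generated up to radical by `n - |H|` elements, the local ring of the polynomial ring
at `pt K G`, of depth `n`, contradicts `no_regular_sequence_at_point`. -/
lemma freeOf_card_lt_of_ara {n d : ℕ} {K : Type v} [Field K] {B : Finset (Finset (Fin n))}
    (hne : B.Nonempty) (hcard : ∀ S ∈ B, S.card = d) (hexch : ExchangeProp B)
    (hfull : FullSupport B)
    (hara : (araIdeal (Ideal.span (sqMon K '' (B : Set (Finset (Fin n))))) : ℕ∞) =
      idealHeight (Ideal.span (sqMon K '' (B : Set (Finset (Fin n))))))
    (F : Finset (Fin n)) (hF : FreeOf B F) : F.card < d := by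
  by_contra hdF
  obtain ⟨G, H, hGH, hH, hmax, hex, h2, b, hb, hbG⟩ :=
    exists_not_connected hne hcard hexch hfull hF (not_lt.1 hdF)
  rw [idealHeight_eq hH hmax, Nat.cast_inj] at hara
  obtain ⟨f, hf⟩ := exists_araIdeal (Ideal.span (sqMon K '' (B : Set (Finset (Fin n)))))
  have hrange : Ideal.ofList ((List.ofFn f).map (RingHom.id (MvPolynomial (Fin n) K))) =
      Ideal.span (Set.range f) := by
    rw [Ideal.ofList]
    congr 1
    ext x
    simp [List.mem_ofFn]
  refine no_regular_sequence_at_point (RingHom.id (MvPolynomial (Fin n) K)) Function.surjective_id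
    hGH hH hmax hex h2 hb hbG (ptIdeal K G) (fun f => Iff.rfl) (fun e _ f hf => ?_)
    (List.ofFn f) (fun e he g hg => ?_) (fun T hT => ?_) ?_
  · rw [show f = 0 from hf, map_zero]
  · refine lineHom_eq_zero_of_mem he ?_
    rw [← hf]
    exact Ideal.le_radical (Ideal.subset_span (by simpa [List.mem_ofFn] using hg))
  · rw [hrange, hf]
    exact Ideal.le_radical (Ideal.subset_span (Set.mem_image_of_mem (sqMon K) (Finset.mem_coe.2 hT)))
  · obtain ⟨rs, hl, hm, hr, -⟩ := (maxRegular_fin K n).localization (ptIdeal K G)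
    refine ⟨rs, ?_, hm, hr⟩
    rw [hl, List.length_ofFn, hara, Finset.card_add_card_compl, Fintype.card_fin]

/-- If `R/I` is Cohen–Macaulay, its local ring at `pt K G` has depth at least `|H|`, as the component
`(x_i : i ∉ H)` of dimension `|H|` passes through the point. -/
lemma freeOf_card_lt_of_isCohenMacaulayRing {n d : ℕ} {K : Type v} [Field K]
    {B : Finset (Finset (Fin n))}
    (hne : B.Nonempty) (hcard : ∀ S ∈ B, S.card = d) (hexch : ExchangeProp B)
    (hfull : FullSupport B)
    (hCM : IsCohenMacaulayRing
      (MvPolynomial (Fin n) K ⧸ Ideal.span (sqMon K '' (B : Set (Finset (Fin n))))))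
    (F : Finset (Fin n)) (hF : FreeOf B F) : F.card < d := by
  by_contra hdF
  obtain ⟨G, H, hGH, hH, hmax, hex, h2, b, hb, hbG⟩ :=
    exists_not_connected hne hcard hexch hfull hF (not_lt.1 hdF)
  set I := Ideal.span (sqMon K '' (B : Set (Finset (Fin n)))) with hI
  let P := (ptIdeal K G).map (Ideal.Quotient.mk I)
  have hIG : I ≤ ptIdeal K G := (span_sqMon_le_varIdeal hH).trans (varIdeal_le_ptIdeal K hGH)
  have hcm : P.comap (Ideal.Quotient.mk I) = ptIdeal K G := by
    rw [Ideal.comap_map_of_surjective _ Ideal.Quotient.mk_surjective, ← RingHom.ker_eq_comap_bot,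
      Ideal.mk_ker, sup_eq_left]
    exact hIG
  have hPm : P.IsMaximal := by
    refine (Ideal.map_eq_top_or_isMaximal_of_surjective _ Ideal.Quotient.mk_surjective
      (ptIdeal_isMaximal K G)).resolve_left fun h => (ptIdeal_isMaximal K G).ne_top ?_
    rw [← hcm, show P = ⊤ from h, Ideal.comap_top]
  refine no_regular_sequence_at_point (Ideal.Quotient.mk I) Ideal.Quotient.mk_surjective
    hGH hH hmax hex h2 hb hbG P (fun f => ?_) (fun e he f hf => ?_)
    [] (by simp) (fun T hT => ?_) ?_
  · rw [← Ideal.mem_comap, hcm]; rfl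
  · exact lineHom_eq_zero_of_mem he (Ideal.le_radical (Ideal.Quotient.eq_zero_iff_mem.1 hf))
  · have hTI : sqMon K T ∈ I := Ideal.subset_span ⟨T, hT, rfl⟩
    rw [Ideal.Quotient.eq_zero_iff_mem.2 hTI]
    exact zero_mem _
  · refine hCM.exists_regular P ?_
    refine (le_ringKrullDim_localization (span_sqMon_le_varIdeal hH) P ?_)
    rw [hcm]
    exact varIdeal_le_ptIdeal K hGH

end NonUniform

/-! ### Depth and the vanishing of Ext -/

section ExtDepth
open IsLocalRing RingTheory.Sequence CategoryTheory Abelian ModuleCat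
universe u v

/-- The cohomological form of `depth_p M ≥ k`: the modules `Ext^i(A/p, M)` vanish for `i < k`. -/
def ExtDepthGE {A : Type u} [CommRing A] (p : Ideal A) (M : Type u) [AddCommGroup M] [Module A M]
    (k : ℕ) : Prop :=
  ∀ i < k, Subsingleton (Ext (ModuleCat.of A (A ⧸ p)) (ModuleCat.of A M) i)

lemma ExtDepthGE.mono {A : Type u} [CommRing A] {p : Ideal A} {M : Type u} [AddCommGroup M]
    [Module A M] {k l : ℕ} (h : ExtDepthGE p M k) (hl : l ≤ k) : ExtDepthGE p M l :=
  fun i hi => h i (by omega)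

lemma ExtDepthGE.of_exact {A : Type u} [CommRing A] {p : Ideal A} {M₁ M₂ M₃ : Type u}
    [AddCommGroup M₁] [Module A M₁] [AddCommGroup M₂] [Module A M₂] [AddCommGroup M₃] [Module A M₃]
    {f : M₁ →ₗ[A] M₂} {g : M₂ →ₗ[A] M₃} (hf : Function.Injective f) (hg : Function.Surjective g)
    (hfg : Function.Exact f g) {k : ℕ} (h₁ : ExtDepthGE p M₁ (k + 1)) (h₂ : ExtDepthGE p M₂ k) :
    ExtDepthGE p M₃ k := by
  intro i hi
  let S : ShortComplex (ModuleCat.{u} A) :=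
    ShortComplex.mk (ModuleCat.ofHom f) (ModuleCat.ofHom g) (by
      ext x; exact hfg.apply_apply_eq_zero x)
  have hS : S.ShortExact :=
    { exact := (ShortComplex.ShortExact.moduleCat_exact_iff_function_exact S).2 hfg
      mono_f := (ModuleCat.mono_iff_injective _).2 hf
      epi_g := (ModuleCat.epi_iff_surjective _).2 hg }
  have e1 := h₂ i hi
  have e2 := h₁ (i + 1) (by omega)
  refine ⟨fun a b => ?_⟩
  have key : ∀ x : Ext (ModuleCat.of A (A ⧸ p)) (ModuleCat.of A M₃) i, x = 0 := by
    intro x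
    obtain ⟨y, hy⟩ := Ext.covariant_sequence_exact₃ (ModuleCat.of A (A ⧸ p)) hS x rfl
      (e2.elim _ _)
    rw [← hy, show y = 0 from e1.elim _ _, Ext.zero_comp]
  rw [key a, key b]

/-- If `J` is not contained in `p`, then `p + J = A` annihilates all the modules `Ext^i(A/p, A/J)`. -/
lemma ExtDepthGE.of_not_le {A : Type u} [CommRing A] (p : Ideal A) [hp : p.IsMaximal]
    {J : Ideal A} (hJ : ¬ J ≤ p) (k : ℕ) : ExtDepthGE p (A ⧸ J) k := by
  intro i _
  obtain ⟨r, hrJ, hrp⟩ := SetLike.not_le_iff_exists.1 hJ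
  obtain ⟨a, b, hb, hab⟩ := hp.exists_inv hrp
  have key : ∀ x : Ext (ModuleCat.of A (A ⧸ p)) (ModuleCat.of A (A ⧸ J)) i, x = 0 := by
    intro x
    have hb0 : b • 𝟙 (ModuleCat.of A (A ⧸ p)) = 0 := by
      refine ModuleCat.hom_ext (LinearMap.ext fun y => ?_)
      induction y using Submodule.Quotient.induction_on with
      | _ g =>
        change b • (Submodule.Quotient.mk g : A ⧸ p) = 0
        rw [← Submodule.Quotient.mk_smul, Submodule.Quotient.mk_eq_zero]
        exact Ideal.mul_mem_right _ _ hb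
    have hr0 : r • 𝟙 (ModuleCat.of A (A ⧸ J)) = 0 := by
      refine ModuleCat.hom_ext (LinearMap.ext fun y => ?_)
      induction y using Submodule.Quotient.induction_on with
      | _ g =>
        change r • (Submodule.Quotient.mk g : A ⧸ J) = 0
        rw [← Submodule.Quotient.mk_smul, Submodule.Quotient.mk_eq_zero]
        exact Ideal.mul_mem_right _ _ hrJ
    have h1 : b • x = 0 := by
      have : b • x = (Ext.mk₀ (b • 𝟙 (ModuleCat.of A (A ⧸ p)))).comp x (zero_add i) := by simp [Ext.mk₀_smul]
      rw [this, hb0, Ext.mk₀_zero, Ext.zero_comp]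
    have h2 : r • x = 0 := by
      have : r • x = x.comp (Ext.mk₀ (r • 𝟙 (ModuleCat.of A (A ⧸ J)))) (add_zero i) := by simp [Ext.mk₀_smul]
      rw [this, hr0, Ext.mk₀_zero, Ext.comp_zero]
    rw [← one_smul A x, ← hab, add_smul, mul_smul, h2, h1, smul_zero, add_zero]
  exact ⟨fun a b => by rw [key a, key b]⟩

lemma smul_top_quotient_lt {A : Type u} [CommRing A] {p J : Ideal A} (hp : p ≠ ⊤) (hJ : J ≤ p) :
    p • (⊤ : Submodule A (A ⧸ J)) < ⊤ := by
  rw [lt_top_iff_ne_top]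
  intro h
  have h1 : p • (⊤ : Submodule A (A ⧸ J)) ≤ Submodule.map (Submodule.mkQ J) p := by
    rw [Submodule.smul_le]
    rintro r hr x -
    induction x using Submodule.Quotient.induction_on with
    | _ g => exact ⟨r * g, Ideal.mul_mem_right _ _ hr, rfl⟩
  rw [h] at h1
  obtain ⟨a, ha, hae⟩ := h1 (Submodule.mem_top (x := Submodule.Quotient.mk (1 : A)))
  have h2 : a - 1 ∈ J := (Submodule.Quotient.eq J).1 hae
  exact hp ((Ideal.eq_top_iff_one _).2 (by simpa using p.sub_mem ha (hJ h2)))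

lemma support_quotient {A : Type u} [CommRing A] (p : Ideal A) :
    Module.support A (ModuleCat.of A (A ⧸ p)) = PrimeSpectrum.zeroLocus p := by
  change Module.support A (A ⧸ p) = _
  rw [Module.support_eq_zeroLocus, Ideal.annihilator_quotient]

lemma ExtDepthGE.of_maxRegular {A : Type u} [CommRing A] [IsNoetherianRing A] (p : Ideal A)
    [hp : p.IsMaximal] {J : Ideal A} {k : ℕ} (h : MaxRegular (A ⧸ J) k) :
    ExtDepthGE p (A ⧸ J) k := by
  by_cases hJ : J ≤ p
  swap
  · exact .of_not_le p hJ k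
  have hcm : (p.map (Ideal.Quotient.mk J)).comap (Ideal.Quotient.mk J) = p := by
    rw [Ideal.comap_map_of_surjective _ Ideal.Quotient.mk_surjective, ← RingHom.ker_eq_comap_bot,
      Ideal.mk_ker, sup_eq_left]
    exact hJ
  have hm : (p.map (Ideal.Quotient.mk J)).IsMaximal := by
    refine (Ideal.map_eq_top_or_isMaximal_of_surjective _ Ideal.Quotient.mk_surjective
      hp).resolve_left fun h => hp.ne_top ?_
    rw [← hcm, h, Ideal.comap_top]
  obtain ⟨rs', hl, hr, hof⟩ := h _ hm
  obtain ⟨rs, rfl⟩ := List.map_surjective_iff.2 (Ideal.Quotient.mk_surjective (I := J)) rs'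
  have hmem : ∀ r ∈ rs, r ∈ p := fun r hr => by
    rw [← hcm, Ideal.mem_comap, hof]
    exact Ideal.subset_span (List.mem_map_of_mem hr)
  have hlt := smul_top_quotient_lt hp.ne_top hJ
  have hreg : IsRegular (A ⧸ J) rs := by
    refine ⟨(isWeaklyRegular_map_algebraMap_iff (A ⧸ J) (A ⧸ J) rs).1 hr, fun h => hlt.ne ?_⟩
    refine top_le_iff.1 (h.le.trans (Submodule.smul_mono_left (Ideal.span_le.2 hmem)))
  have := subsingleton_ext_of_exists_isRegular p (ModuleCat.of A (A ⧸ p)) (support_quotient p).le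
    (ModuleCat.of A (A ⧸ J)) hlt rs hmem hreg
  intro i hi
  exact this i (by simpa [← hl] using hi)

/-- Depth along the exact sequence `0 → A/P → A/J → A/(J + (x)) → 0` with `P = J : x`. -/
lemma ExtDepthGE.quotient_sup {A : Type u} [CommRing A] {p J P : Ideal A} {x : A}
    (hP : ∀ r, x * r ∈ J ↔ r ∈ P) {k : ℕ} (h₁ : ExtDepthGE p (A ⧸ P) (k + 1))
    (h₂ : ExtDepthGE p (A ⧸ J) k) : ExtDepthGE p (A ⧸ (J ⊔ Ideal.span {x})) k := by
  let f : (A ⧸ P) →ₗ[A] (A ⧸ J) := Submodule.mapQ P J (LinearMap.mulLeft A x)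
    (fun r hr => (hP r).2 hr)
  let g : (A ⧸ J) →ₗ[A] (A ⧸ (J ⊔ Ideal.span {x})) := Submodule.factor le_sup_left
  refine ExtDepthGE.of_exact (f := f) (g := g) ?_ (Submodule.factor_surjective _) ?_ h₁ h₂
  · rw [injective_iff_map_eq_zero]
    intro y hy
    induction y using Submodule.Quotient.induction_on with
    | _ r =>
      have : (Submodule.Quotient.mk (x * r) : A ⧸ J) = 0 := hy
      rw [Submodule.Quotient.mk_eq_zero] at this ⊢
      exact (hP r).1 this
  · intro y
    induction y using Submodule.Quotient.induction_on with
    | _ r =>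
      have hg : g (Submodule.Quotient.mk r) = Submodule.Quotient.mk r := rfl
      rw [hg, Submodule.Quotient.mk_eq_zero]
      constructor
      · intro hr
        obtain ⟨j, hj, y, hy, rfl⟩ := Submodule.mem_sup.1 hr
        obtain ⟨a, rfl⟩ := Ideal.mem_span_singleton'.1 hy
        refine ⟨Submodule.Quotient.mk a, ?_⟩
        change Submodule.Quotient.mk (x * a) = _
        rw [Submodule.Quotient.eq]
        have : x * a - (j + a * x) = -j := by ring
        rw [this]
        exact J.neg_mem hj
      · rintro ⟨z, hz⟩
        induction z using Submodule.Quotient.induction_on with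
        | _ a =>
          have hz' : (Submodule.Quotient.mk (x * a) : A ⧸ J) = Submodule.Quotient.mk r := hz
          rw [Submodule.Quotient.eq] at hz'
          have : r = x * a - (x * a - r) := by ring
          rw [this]
          exact Ideal.sub_mem _ (Ideal.mem_sup_right (Ideal.mul_mem_right _ _
            (Ideal.mem_span_singleton_self x))) (Ideal.mem_sup_left hz')

end ExtDepth

/-! ### Square-free Veronese ideals are Cohen–Macaulay -/

section Veronese
open IsLocalRing RingTheory.Sequence CategoryTheory Abelian ModuleCat
universe u v

/-- An ideal generated by an up-closed family `T` of square-free monomials of degree at least `d + 1`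
has quotient of depth at least `d`. Removing a member `S` of smallest size leaves an up-closed
family, whose ideal `J` satisfies `J : x_S = (x_i : i ∉ S)`. -/
lemma extDepthGE_upClosed {n d : ℕ} {K : Type v} [Field K] (hdn : d ≤ n)
    (p : Ideal (MvPolynomial (Fin n) K)) [hp : p.IsMaximal] (T : Finset (Finset (Fin n)))
    (hup : ∀ S ∈ T, ∀ S', S ⊆ S' → S' ∈ T) (hcard : ∀ S ∈ T, d + 1 ≤ S.card) :
    ExtDepthGE p (MvPolynomial (Fin n) K ⧸
      Ideal.span (sqMon K '' (T : Set (Finset (Fin n))))) d := by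
  classical
  induction hN : T.card generalizing T with
  | zero =>
    rw [Finset.card_eq_zero] at hN
    subst hN
    have h0 : Ideal.span (sqMon K '' ((∅ : Finset (Finset (Fin n))) : Set (Finset (Fin n)))) =
        ⊥ := by
      rw [Finset.coe_empty, Set.image_empty, Ideal.span_empty]
    have h1 : MaxRegular (MvPolynomial (Fin n) K ⧸ Ideal.span
        (sqMon K '' ((∅ : Finset (Finset (Fin n))) : Set (Finset (Fin n))))) n := by
      rw [h0]
      exact (maxRegular_fin K n).of_equiv (RingEquiv.quotientBot _).symm
    exact (ExtDepthGE.of_maxRegular p h1).mono hdn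
  | succ N ih =>
    obtain ⟨S, hS, hmin⟩ := T.exists_min_image Finset.card
      (Finset.card_pos.1 (by omega))
    have hT : (T : Set (Finset (Fin n))) = ↑(T.erase S) ∪ {S} := by
      rw [← Finset.coe_singleton, ← Finset.coe_union, Finset.union_comm,
        ← Finset.insert_eq, Finset.insert_erase hS]
    have hfree : FreeOf (T.erase S) S := by
      intro U hU hUS
      rw [Finset.mem_erase] at hU
      exact hU.1 (Finset.eq_of_subset_of_card_le hUS (hmin U hU.2))
    rw [hT, Set.image_union, Set.image_singleton, Ideal.span_union]
    refine ExtDepthGE.quotient_sup (P := varIdeal K Sᶜ) (fun r => ⟨fun h => ?_, fun h => ?_⟩)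
      ((ExtDepthGE.of_maxRegular p (maxRegular_quotient_varIdeal K S)).mono (hcard S hS))
      (ih (T.erase S) (fun U hU U' hUU' => ?_) (fun U hU => hcard U (Finset.mem_of_mem_erase hU))
        (by rw [Finset.card_erase_of_mem hS]; omega))
    · refine ((varIdeal_isPrime K Sᶜ).mem_or_mem
        (span_sqMon_le_varIdeal hfree h)).resolve_left fun h' => ?_
      rw [sqMon, (varIdeal_isPrime K Sᶜ).prod_mem_iff] at h'
      obtain ⟨i, hi, hi'⟩ := h'
      rw [X_mem_varIdeal_iff] at hi'
      simp [hi] at hi'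
    · have hle : varIdeal K Sᶜ ≤ (Ideal.span
          (sqMon K '' ((T.erase S : Finset _) : Set (Finset (Fin n))))).colon
            (Ideal.span {sqMon K S}) := by
        rw [varIdeal, Ideal.span_le]
        rintro _ ⟨i, hi, rfl⟩
        have hiS : i ∉ S := by simpa using hi
        rw [SetLike.mem_coe, Ideal.mem_colon_span_singleton]
        refine Ideal.subset_span ⟨insert i S, ?_, ?_⟩
        · rw [Finset.mem_coe, Finset.mem_erase]
          exact ⟨fun h => hiS (h ▸ Finset.mem_insert_self i S),
            hup S hS _ (Finset.subset_insert i S)⟩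
        · rw [sqMon, sqMon, Finset.prod_insert hiS]
      have := hle h
      rw [Ideal.mem_colon_span_singleton] at this
      rwa [mul_comm]
    · rw [Finset.mem_erase] at hU ⊢
      refine ⟨fun h => ?_, hup U hU.2 U' hUU'⟩
      subst h
      exact hfree U (Finset.mem_erase.2 hU) hUU'

/-- The quotient by a minimal prime is a polynomial ring in the variables of a free set. -/
lemma ringKrullDim_quotient_span_le {n d : ℕ} {K : Type v} [Field K] {B : Finset (Finset (Fin n))}
    (hfree : ∀ F, FreeOf B F → F.card ≤ d) :
    ringKrullDim (MvPolynomial (Fin n) K ⧸ Ideal.span (sqMon K '' (B : Set (Finset (Fin n))))) ≤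
      d := by
  refine ringKrullDim_quotient_le_of_primes _ _ fun Q hQ hle => ?_
  obtain ⟨F, hF, hFQ⟩ := exists_varIdeal_le Q hle
  refine (ringKrullDim_le_of_surjective _ (Ideal.Quotient.factor_surjective hFQ)).trans ?_
  have h1 : varIdeal K Fᶜ = RingHom.ker (killVars K Fᶜ).toRingHom := by
    ext f
    exact (killVars_eq_zero_iff Fᶜ f).symm
  rw [ringKrullDim_eq_of_ringEquiv ((Ideal.quotEquivOfEq h1).trans
    (RingHom.quotientKerEquivOfSurjective (f := (killVars K Fᶜ).toRingHom)
      (killVars_surjective K Fᶜ))), MvPolynomial.ringKrullDim_of_isNoetherianRing,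
      ringKrullDim_eq_zero_of_field, zero_add]
  have h3 : Nat.card {i // i ∉ Fᶜ} = F.card := by simp
  rw [h3]
  exact_mod_cast hfree F hF

lemma ringDepth_le_ringKrullDim (A : Type u) [CommRing A] [IsNoetherianRing A] [IsLocalRing A] :
    (ringDepth A (maximalIdeal A) : WithBot ℕ∞) ≤ ringKrullDim A := by
  obtain ⟨e, he⟩ : ∃ e : ℕ∞, ringKrullDim A = e :=
    ⟨_, (WithBot.coe_unbot _ (ne_bot_of_le_ne_bot (by simp)
      (ringKrullDim_nonneg_of_nontrivial (R := A)))).symm⟩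
  rw [he, WithBot.coe_le_coe, ringDepth]
  refine iSup_le fun ⟨rs, hm, hr⟩ => ?_
  have h1 := ringKrullDim_add_length_eq_ringKrullDim_of_isRegular rs hr
  have h2 : Nontrivial (A ⧸ Ideal.ofList rs) := by
    rw [Ideal.Quotient.nontrivial_iff]
    intro h
    exact hr.2 (by simp [h])
  have h4 : ((rs.length : ℕ∞) : WithBot ℕ∞) ≤ e := by
    rw [← he, ← h1]
    exact le_add_of_nonneg_left ringKrullDim_nonneg_of_nontrivial
  exact WithBot.coe_le_coe.1 h4

lemma extDepthGE_of_free {n d : ℕ} {K : Type v} [Field K]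
    {B : Finset (Finset (Fin n))} (hne : B.Nonempty)
    (hcard : ∀ S ∈ B, S.card = d + 1) (hfree : ∀ F, FreeOf B F → F.card < d + 1)
    (p : Ideal (MvPolynomial (Fin n) K)) [hp : p.IsMaximal] :
    ExtDepthGE p (MvPolynomial (Fin n) K ⧸
      Ideal.span (sqMon K '' (B : Set (Finset (Fin n))))) d := by
  classical
  let T : Finset (Finset (Fin n)) := Finset.univ.filter fun S => d + 1 ≤ S.card
  have hIT : Ideal.span (sqMon K '' (B : Set (Finset (Fin n)))) =
      Ideal.span (sqMon K '' (T : Set (Finset (Fin n)))) := by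
    apply le_antisymm
    · refine Ideal.span_mono (Set.image_mono fun S hS => ?_)
      simpa [T] using (hcard S hS).ge
    · rw [Ideal.span_le]
      rintro _ ⟨S, hS, rfl⟩
      obtain ⟨S', hS', hc⟩ := Finset.exists_subset_card_eq (s := S) (n := d + 1)
        (by simpa [T] using hS)
      exact sqMon_mem_of_subset hS'
        (Ideal.subset_span ⟨S', mem_of_card_eq hcard hfree hc, rfl⟩)
  have hdn : d ≤ n := by
    obtain ⟨S, hS⟩ := hne
    have := Finset.card_le_univ S
    rw [hcard S hS, Fintype.card_fin] at this
    omega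
  rw [hIT]
  refine extDepthGE_upClosed hdn p T (fun S hS S' hSS' => ?_) (fun S hS => by simpa [T] using hS)
  have := Finset.card_le_card hSS'
  simp only [T, Finset.mem_filter, Finset.mem_univ, true_and] at hS ⊢
  omega

/-- The regular sequence on `A/I` produced by the vanishing of `Ext` passes to the localization. -/
lemma le_ringDepth_of_extDepthGE {A : Type u} [CommRing A] [IsNoetherianRing A] {I : Ideal A}
    {d : ℕ} (P : Ideal (A ⧸ I)) [hP : P.IsMaximal]
    (hext : ExtDepthGE (P.comap (Ideal.Quotient.mk I)) (A ⧸ I) d) :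
    (d : ℕ∞) ≤ ringDepth (Localization.AtPrime P)
      (maximalIdeal (Localization.AtPrime P)) := by
  have hp : (P.comap (Ideal.Quotient.mk I)).IsMaximal :=
    Ideal.comap_isMaximal_of_surjective _ Ideal.Quotient.mk_surjective
  have hIp : I ≤ P.comap (Ideal.Quotient.mk I) := fun x hx => by
    rw [Ideal.mem_comap, Ideal.Quotient.eq_zero_iff_mem.2 hx]
    exact zero_mem _
  have : IsNoetherianRing (Localization.AtPrime P) :=
    IsLocalization.isNoetherianRing P.primeCompl _ inferInstance
  obtain ⟨rs, hl, hm, hr⟩ := exists_isRegular_of_exists_subsingleton_ext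
    (P.comap (Ideal.Quotient.mk I)) d (ModuleCat.of A (A ⧸ I))
    (smul_top_quotient_lt hp.ne_top hIp)
    (ModuleCat.of A (A ⧸ P.comap (Ideal.Quotient.mk I))) (support_quotient _) hext
  have hr' : IsWeaklyRegular (A ⧸ I) (rs.map (Ideal.Quotient.mk I)) :=
    (isWeaklyRegular_map_algebraMap_iff (A ⧸ I) (A ⧸ I) rs).2 hr.1
  have hreg := hr'.isRegular_of_isLocalization_of_mem (Localization.AtPrime P) P (by
    rintro _ hx
    obtain ⟨r, hr, rfl⟩ := List.mem_map.1 hx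
    exact hm r hr)
  have hmem : ∀ r ∈ (rs.map (Ideal.Quotient.mk I)).map
      (algebraMap (A ⧸ I) (Localization.AtPrime P)),
      r ∈ maximalIdeal (Localization.AtPrime P) := by
    intro x hx
    obtain ⟨y, hy, rfl⟩ := List.mem_map.1 hx
    obtain ⟨r, hr, rfl⟩ := List.mem_map.1 hy
    exact (IsLocalization.AtPrime.to_map_mem_maximal_iff (Localization.AtPrime P) P _).2 (hm r hr)
  rw [ringDepth]
  refine le_trans ?_ (le_iSup _ ⟨_, hmem, hreg⟩)
  simp [hl]

lemma isCohenMacaulayRing_of_free {n d : ℕ} (hd : 1 ≤ d) {K : Type v} [Field K]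
    {B : Finset (Finset (Fin n))} (hne : B.Nonempty)
    (hcard : ∀ S ∈ B, S.card = d) (hfree : ∀ F, FreeOf B F → F.card < d) :
    IsCohenMacaulayRing
      (MvPolynomial (Fin n) K ⧸ Ideal.span (sqMon K '' (B : Set (Finset (Fin n))))) := by
  obtain ⟨d, rfl⟩ : ∃ e, d = e + 1 := ⟨d - 1, by omega⟩
  have hD := ringKrullDim_quotient_span_le (K := K)
    (fun F hF => Nat.le_of_lt_succ (hfree F hF) : ∀ F, FreeOf B F → F.card ≤ d)
  have hE := extDepthGE_of_free (K := K) hne hcard hfree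
  generalize Ideal.span (sqMon K '' (B : Set (Finset (Fin n)))) = I at hD hE ⊢
  intro P hP
  have : P.IsPrime := hP.isPrime
  have : IsNoetherianRing (Localization.AtPrime P) :=
    IsLocalization.isNoetherianRing P.primeCompl _ inferInstance
  refine le_antisymm (ringDepth_le_ringKrullDim _) ?_
  have hp : (P.comap (Ideal.Quotient.mk I)).IsMaximal :=
    Ideal.comap_isMaximal_of_surjective _ Ideal.Quotient.mk_surjective
  have hdim : ringKrullDim (Localization.AtPrime P) ≤ (d : ℕ) := by
    rw [IsLocalization.AtPrime.ringKrullDim_eq_height P (Localization.AtPrime P)]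
    exact (Ideal.height_le_ringKrullDim_of_ne_top hP.ne_top).trans hD
  refine hdim.trans ?_
  exact WithBot.coe_le_coe.2 (le_ringDepth_of_extDepthGE P (hE _))

end Veronese

/-- Let `I ⊆ K[x_1, …, x_n]` be a matroidal ideal (of degree `d ≥ 1`)
with `supp(I) = {x_1, …, x_n}`.  Then `R/I` is Cohen–Macaulay if and only if `I` is a
set-theoretic complete intersection, i.e. `ara I = ht I`. -/
theorem statement18 {K : Type*} [Field K] {n d : ℕ} (hd : 1 ≤ d)
    {I : Ideal (MvPolynomial (Fin n) K)} {B : Finset (Finset (Fin n))}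
    (hI : IsMatroidal K I B d) (hsupp : FullSupport B) :
    IsCohenMacaulayRing (MvPolynomial (Fin n) K ⧸ I) ↔
      (araIdeal I : ℕ∞) = idealHeight I := by
  obtain ⟨hne, hcard, hexch, rfl⟩ := hI
  constructor
  · intro h
    exact araIdeal_eq_idealHeight hd K hne hcard
      (freeOf_card_lt_of_isCohenMacaulayRing hne hcard hexch hsupp h)
  · intro h
    exact isCohenMacaulayRing_of_free hd hne hcard
      (freeOf_card_lt_of_ara hne hcard hexch hsupp h)
end
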